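/- arXiv:1510.00109 — 3 statements merged into one kernel-verified Lean document; each statement's English description precedes it below -/
import Mathlib

section
/- Consider the leader–follower system with parameters A > 0, k > 0, α > 1 and N follower agents, with the leader initially at (x_l(0), y_l(0)) = (1, 0). There exists r > 0 such that for every target trajectory γ = (γ₁, γ₂) with γ₁, γ₂ continuously differentiable on [0,1] and γ₁(0) = γ₂(0) = 0, and for all follower initial conditions satisfying ‖(xⁱ(0), vⁱ_x(0), yⁱ(0), vⁱ_y(0))‖ < r for each i = 1,…,N, there exist T > 0 and continuous control inputs u_x, u_y : [0,T] → ℝ such that the resulting solution of the system satisfies ‖γ(t/T) − (xⁱ(t), yⁱ(t))‖ < 1 for every follower i and every t ∈ [0,T], while ‖γ(t/T) − (x_l(t), y_l(t))‖ ≥ 1 for every t ∈ [0,T]; that is, the system is 1-confinement controllable about γ. -/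
open Real Set

/-- Taylor estimate of the repulsion force around the centre of the unit circle. -/
lemma force_taylor_scalar (α s : ℝ) (hα : 1 < α) (hs : |s| ≤ 1 / (2 * α)) :
    |((1 + s) ^ α)⁻¹ - (1 - α * s)| ≤ 2 * α ^ 2 * s ^ 2 := by
  have hα0 : 0 < α := by linarith
  have h1 := abs_le.1 hs
  have h2 : |α * s| ≤ 1 / 2 := by
    rw [abs_mul, abs_of_pos hα0]
    calc α * |s| ≤ α * (1 / (2 * α)) := by gcongr
      _ = 1 / 2 := by field_simp
  have h2' := abs_le.1 h2
  have h3 : 1 / (2 * α) < 1 / 2 := by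
    apply one_div_lt_one_div_of_lt <;> linarith
  have hpos : 0 < 1 + s := by linarith
  have hB := one_add_mul_self_le_rpow_one_add (s := s) (by linarith) hα.le
  have hup : ((1 + s) ^ α)⁻¹ ≤ (1 + α * s)⁻¹ := by
    apply inv_anti₀ _ hB
    linarith
  have hup2 : (1 + α * s)⁻¹ ≤ 1 - α * s + 2 * α ^ 2 * s ^ 2 := by
    rw [inv_le_iff_one_le_mul₀ (by linarith)]
    nlinarith [sq_nonneg (α * s), mul_nonneg (sq_nonneg (α * s)) (by linarith : (0:ℝ) ≤ 1 / 2 + α * s)]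
  have hlow : 1 - α * s ≤ ((1 + s) ^ α)⁻¹ := by
    rw [← Real.inv_rpow hpos.le]
    have e : (1 + s)⁻¹ = 1 + (-s / (1 + s)) := by field_simp; ring
    have hge : -1 ≤ -s / (1 + s) := by
      have : 0 < (1 + s)⁻¹ := by positivity
      linarith
    have hB2 := one_add_mul_self_le_rpow_one_add hge hα.le
    rw [e]
    refine le_trans ?_ hB2
    have : -s ≤ -s / (1 + s) := by
      rw [le_div_iff₀ hpos]; nlinarith [sq_nonneg s]
    nlinarith
  rw [abs_le]
  constructor
  · nlinarith [mul_nonneg (sq_nonneg α) (sq_nonneg s)]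
  · linarith

set_option maxHeartbeats 1000000 in
lemma force_taylor_aux (α c s z1 z2 : ℝ) (hα : 1 < α) (hcs : c ^ 2 + s ^ 2 = 1)
    (h1 : |z1| ≤ 1 / (10 * α)) (h2 : |z2| ≤ 1 / (10 * α)) :
    1 / 2 ≤ (z1 - c) ^ 2 + (z2 - s) ^ 2 ∧
    |(z1 - c) / ((z1 - c) ^ 2 + (z2 - s) ^ 2) ^ α
      - (-c + z1 - 2 * α * (z1 * c + z2 * s) * c)| ≤ 60 * α ^ 2 * (z1 ^ 2 + z2 ^ 2) := by
  have hα0 : 0 < α := by linarith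
  have ha : 1 / (10 * α) ≤ 1 / 10 := by
    apply one_div_le_one_div_of_le <;> linarith
  set a := 1 / (10 * α) with hadef
  have ha0 : 0 < a := by positivity
  have h5 : 5 * a = 1 / (2 * α) := by rw [hadef]; field_simp; norm_num
  have hc : |c| ≤ 1 := abs_le_one_iff_mul_self_le_one.2 (by nlinarith)
  have hs : |s| ≤ 1 := abs_le_one_iff_mul_self_le_one.2 (by nlinarith)
  set P := z1 * c + z2 * s with hP
  set Q := z1 ^ 2 + z2 ^ 2 with hQ
  have hQ0 : 0 ≤ Q := by positivity
  have hz1a := abs_le.1 h1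
  have hz2a := abs_le.1 h2
  have hQa : Q ≤ a := by nlinarith
  have hPa : |P| ≤ 2 * a := by
    calc |P| ≤ |z1 * c| + |z2 * s| := abs_add_le _ _
      _ = |z1| * |c| + |z2| * |s| := by rw [abs_mul, abs_mul]
      _ ≤ a * 1 + a * 1 := by gcongr
      _ = 2 * a := by ring
  have hP2 : P ^ 2 ≤ Q := by
    have : Q = P ^ 2 + (z1 * s - z2 * c) ^ 2 := by
      rw [hP, hQ]; linear_combination (-(z1 ^ 2 + z2 ^ 2)) * hcs
    nlinarith [sq_nonneg (z1 * s - z2 * c)]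
  have hPa' := abs_le.1 hPa
  have hS : |Q - 2 * P| ≤ 1 / (2 * α) := by
    rw [← h5, abs_le]; constructor <;> linarith
  have hD : (z1 - c) ^ 2 + (z2 - s) ^ 2 = 1 + (Q - 2 * P) := by
    rw [hP, hQ]; linear_combination hcs
  have hT := force_taylor_scalar α _ hα hS
  rw [hD]
  refine ⟨by nlinarith [(abs_le.1 hS).1], ?_⟩
  set g := ((1 + (Q - 2 * P)) ^ α)⁻¹ with hg
  set ρ := g - (1 - α * (Q - 2 * P)) with hρ
  have hρb : |ρ| ≤ 20 * α ^ 2 * Q := by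
    refine hT.trans ?_
    have : (Q - 2 * P) ^ 2 ≤ 10 * Q := by nlinarith [sq_nonneg (Q + 2 * P)]
    nlinarith [sq_nonneg α]
  have e : (z1 - c) / (1 + (Q - 2 * P)) ^ α - (-c + z1 - 2 * α * P * c)
      = (z1 - c) * (ρ - α * Q) + 2 * α * P * z1 := by
    rw [div_eq_mul_inv, ← hg, hρ]; ring
  rw [e]
  have hzc : |z1 - c| ≤ 2 := by
    have := abs_le.1 hc
    rw [abs_le]; constructor <;> linarith
  have hPz : |P * z1| ≤ Q := by
    have hz1Q : z1 ^ 2 ≤ Q := by rw [hQ]; linarith [sq_nonneg z2]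
    have u1 := sq_nonneg (P - z1)
    have u2 := sq_nonneg (P + z1)
    rw [sub_sq] at u1
    rw [add_sq] at u2
    rw [abs_le]
    constructor <;> linarith
  calc |(z1 - c) * (ρ - α * Q) + 2 * α * P * z1|
      ≤ |(z1 - c) * (ρ - α * Q)| + |2 * α * P * z1| := abs_add_le _ _
    _ = |z1 - c| * |ρ - α * Q| + 2 * α * |P * z1| := by
        rw [abs_mul, mul_assoc (2 * α), abs_mul (2 * α), abs_of_pos (by positivity : 0 < 2 * α)]
    _ ≤ 2 * (20 * α ^ 2 * Q + α * Q) + 2 * α * Q := by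
        gcongr
        refine (abs_sub _ _).trans ?_
        rw [abs_of_nonneg (by positivity : 0 ≤ α * Q)]
        linarith
    _ ≤ 60 * α ^ 2 * Q := by
        nlinarith [mul_nonneg hQ0 (by nlinarith : 0 ≤ α ^ 2 - α), mul_nonneg hQ0 (sq_nonneg α)]

/-- The Lyapunov function of the averaged system. -/
noncomputable def lyap (k b z1 z2 w1 w2 : ℝ) : ℝ :=
  (w1 ^ 2 + w2 ^ 2) / 2 + b * (z1 ^ 2 + z2 ^ 2) + ((w1 + k * z1) ^ 2 + (w2 + k * z2) ^ 2) / 2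

lemma lyap_props (k b : ℝ) (hk : 0 < k) (hb : 0 < b) :
    ∃ m > (0 : ℝ), ∃ M > (0 : ℝ), ∃ μ > (0 : ℝ), ∀ σ > (0 : ℝ), ∀ z1 z2 w1 w2 : ℝ,
      (lyap k b z1 z2 w1 w2 ≤ σ ^ 2 → |z1| ≤ M * σ ∧ |z2| ≤ M * σ ∧ |w1| ≤ M * σ ∧ |w2| ≤ M * σ) ∧
      (|z1| ≤ μ * σ → |z2| ≤ μ * σ → |w1| ≤ 2 * (μ * σ) → |w2| ≤ 2 * (μ * σ) →
        lyap k b z1 z2 w1 w2 ≤ σ ^ 2) ∧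
      (lyap k b z1 z2 w1 w2 = σ ^ 2 → ∀ p1 p2 q1 q2 β : ℝ, |p1| ≤ β → |p2| ≤ β → |q1| ≤ β →
        |q2| ≤ β → β < m * σ →
        w1 * (-b * z1 - k * w1 + q1) + w2 * (-b * z2 - k * w2 + q2)
          + 2 * b * (z1 * (w1 + p1) + z2 * (w2 + p2))
          + (w1 + k * z1) * ((-b * z1 - k * w1 + q1) + k * (w1 + p1))
          + (w2 + k * z2) * ((-b * z2 - k * w2 + q2) + k * (w2 + p2)) < 0) := by
  set L := 2 + k ^ 2 / b with hL
  have hL0 : 0 < L := by positivity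
  set M := 2 + 1 / b with hM
  have hM0 : 0 < M := by positivity
  have hM2 : 2 ≤ M := by rw [hM]; have : 0 < 1 / b := by positivity
                         linarith
  have hMb : 1 ≤ b * M := by
    rw [hM]; field_simp; nlinarith
  -- error coefficient
  set E := 2 * M + 4 * b * M + 2 * (1 + k) * M * (1 + k) with hE
  have hE0 : 0 < E := by positivity
  set W := 4 + 2 * b + (2 + k) ^ 2 with hW
  have hW0 : 4 ≤ W := by rw [hW]; nlinarith [sq_nonneg (2 + k)]
  refine ⟨k / (L * E), by positivity, M, hM0, 1 / W, by positivity, ?_⟩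
  intro σ hσ z1 z2 w1 w2
  have bound : lyap k b z1 z2 w1 w2 ≤ σ ^ 2 →
      |z1| ≤ M * σ ∧ |z2| ≤ M * σ ∧ |w1| ≤ M * σ ∧ |w2| ≤ M * σ := by
    intro h
    unfold lyap at h
    have key : ∀ z, b * z ^ 2 ≤ σ ^ 2 → |z| ≤ M * σ := by
      intro z hz
      apply abs_le_of_sq_le_sq _ (by positivity)
      have h1 : z ^ 2 ≤ (b * M) * z ^ 2 := le_mul_of_one_le_left (sq_nonneg z) hMb
      calc z ^ 2 ≤ (b * M) * z ^ 2 := h1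
        _ = M * (b * z ^ 2) := by ring
        _ ≤ M * σ ^ 2 := by gcongr
        _ ≤ (M * σ) ^ 2 := by nlinarith [mul_nonneg (sq_nonneg σ) (by nlinarith : 0 ≤ M ^ 2 - M)]
    have key2 : ∀ w, w ^ 2 / 2 ≤ σ ^ 2 → |w| ≤ M * σ := by
      intro w hw
      apply abs_le_of_sq_le_sq _ (by positivity)
      nlinarith [mul_nonneg (sq_nonneg σ) (by nlinarith : 0 ≤ M ^ 2 - 4)]
    have g1 := mul_nonneg hb.le (sq_nonneg z1)
    have g2 := mul_nonneg hb.le (sq_nonneg z2)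
    have g3 := sq_nonneg w1
    have g4 := sq_nonneg w2
    have g5 := sq_nonneg (w1 + k * z1)
    have g6 := sq_nonneg (w2 + k * z2)
    exact ⟨key z1 (by linarith), key z2 (by linarith), key2 w1 (by linarith), key2 w2 (by linarith)⟩
  refine ⟨bound, ?_, ?_⟩
  · intro h1 h2 h3 h4
    set ν := 1 / W * σ with hν
    have hν0 : 0 < ν := by positivity
    have sq1 : ∀ x y : ℝ, |x| ≤ y → x ^ 2 ≤ y ^ 2 := fun x y h => by
      have := abs_nonneg x
      rw [← sq_abs]; gcongr
    have e1 := sq1 _ _ h1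
    have e2 := sq1 _ _ h2
    have e3 := sq1 _ _ h3
    have e4 := sq1 _ _ h4
    have s1 : ∀ w z : ℝ, |w| ≤ 2 * ν → |z| ≤ ν → |w + k * z| ≤ (2 + k) * ν := by
      intro w z hw hz
      calc |w + k * z| ≤ |w| + |k * z| := abs_add_le _ _
        _ = |w| + k * |z| := by rw [abs_mul, abs_of_pos hk]
        _ ≤ 2 * ν + k * ν := by gcongr
        _ = (2 + k) * ν := by ring
    have e5 := sq1 _ _ (s1 _ _ h3 h1)
    have e6 := sq1 _ _ (s1 _ _ h4 h2)
    have : lyap k b z1 z2 w1 w2 ≤ W * ν ^ 2 := by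
      unfold lyap
      have f1 := mul_le_mul_of_nonneg_left e1 hb.le
      have f2 := mul_le_mul_of_nonneg_left e2 hb.le
      rw [hW]; linarith
    refine this.trans ?_
    have : W * ν = σ := by rw [hν]; field_simp
    have h7 : ν ≤ σ := by nlinarith
    calc W * ν ^ 2 = (W * ν) * ν := by ring
      _ = σ * ν := by rw [this]
      _ ≤ σ * σ := by gcongr
      _ = σ ^ 2 := by ring
  · intro hV p1 p2 q1 q2 β hp1 hp2 hq1 hq2 hβ
    obtain ⟨b1, b2, b3, b4⟩ := bound hV.le
    have hβ0 : 0 ≤ β := (abs_nonneg _).trans hp1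
    have hlow : k / L * σ ^ 2 ≤ k * (w1 ^ 2 + w2 ^ 2) + k * b * (z1 ^ 2 + z2 ^ 2) := by
      have : σ ^ 2 ≤ L * (w1 ^ 2 + w2 ^ 2 + b * (z1 ^ 2 + z2 ^ 2)) := by
        rw [← hV, hL]; unfold lyap
        have e : (2 + k ^ 2 / b) * (w1 ^ 2 + w2 ^ 2 + b * (z1 ^ 2 + z2 ^ 2))
          = 2 * (w1 ^ 2 + w2 ^ 2) + k ^ 2 / b * (w1 ^ 2 + w2 ^ 2) + 2 * b * (z1 ^ 2 + z2 ^ 2)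
            + k ^ 2 * (z1 ^ 2 + z2 ^ 2) := by field_simp; ring
        rw [e]
        have : 0 ≤ k ^ 2 / b * (w1 ^ 2 + w2 ^ 2) := by positivity
        have : 0 ≤ b * (z1 ^ 2 + z2 ^ 2) := by positivity
        nlinarith [sq_nonneg (w1 - k * z1), sq_nonneg (w2 - k * z2), sq_nonneg w1, sq_nonneg w2]
      calc k / L * σ ^ 2 ≤ k / L * (L * (w1 ^ 2 + w2 ^ 2 + b * (z1 ^ 2 + z2 ^ 2))) := by gcongr
        _ = _ := by field_simp
    have t1 : ∀ w q : ℝ, |w| ≤ M * σ → |q| ≤ β → w * q ≤ M * σ * β := by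
      intro w q hw hq
      calc w * q ≤ |w * q| := le_abs_self _
        _ = |w| * |q| := abs_mul _ _
        _ ≤ _ := by gcongr
    have t2 : ∀ w z q p : ℝ, |w| ≤ M * σ → |z| ≤ M * σ → |q| ≤ β → |p| ≤ β →
        (w + k * z) * (q + k * p) ≤ (1 + k) * (M * σ) * ((1 + k) * β) := by
      intro w z q p hw hz hq hp
      have i1 : |w + k * z| ≤ (1 + k) * (M * σ) := by
        calc |w + k * z| ≤ |w| + |k * z| := abs_add_le _ _
          _ = |w| + k * |z| := by rw [abs_mul, abs_of_pos hk]
          _ ≤ M * σ + k * (M * σ) := by gcongr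
          _ = _ := by ring
      have i2 : |q + k * p| ≤ (1 + k) * β := by
        calc |q + k * p| ≤ |q| + |k * p| := abs_add_le _ _
          _ = |q| + k * |p| := by rw [abs_mul, abs_of_pos hk]
          _ ≤ β + k * β := by gcongr
          _ = _ := by ring
      calc _ ≤ |(w + k * z) * (q + k * p)| := le_abs_self _
        _ = |w + k * z| * |q + k * p| := abs_mul _ _
        _ ≤ _ := by gcongr
    have j1 := t1 w1 q1 b3 hq1
    have j2 := t1 w2 q2 b4 hq2
    have j3 := mul_le_mul_of_nonneg_left (t1 z1 p1 b1 hp1) hb.le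
    have j4 := mul_le_mul_of_nonneg_left (t1 z2 p2 b2 hp2) hb.le
    have j5 := t2 w1 z1 q1 p1 b3 b1 hq1 hp1
    have j6 := t2 w2 z2 q2 p2 b4 b2 hq2 hp2
    have herr : E * σ * β < k / L * σ ^ 2 := by
      calc E * σ * β < E * σ * (k / (L * E) * σ) := by gcongr
        _ = k / L * σ ^ 2 := by field_simp
    have hEe : E * σ * β = 2 * (M * σ * β) + 4 * (b * (M * σ * β))
        + 2 * ((1 + k) * (M * σ) * ((1 + k) * β)) := by rw [hE]; ring
    rw [hEe] at herr
    linarith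

lemma clamped_ode {E : Type*} [NormedAddCommGroup E] [NormedSpace ℝ E] [CompleteSpace E]
    (S : Set E) (hS : IsCompact S) (hSc : Convex ℝ S) (cl : E → E) (hcl : LipschitzWith 1 cl)
    (hclS : ∀ x, cl x ∈ S) (Φ : E × ℝ → E) (T : ℝ) (hT : 0 < T)
    (hΦ : ContDiffOn ℝ 1 Φ (S ×ˢ Icc (-1) (T + 1))) (e : ℝ → E) (he : Continuous e) (x0 : E) :
    ∃ x : ℝ → E, x 0 = x0 ∧ ∀ t ∈ Icc 0 T, HasDerivAt x (Φ (cl (x t), t) + e t) t := by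
  have hcomp : IsCompact (S ×ˢ Icc (-1) (T + 1)) := hS.prod isCompact_Icc
  obtain ⟨K, hK⟩ := hΦ.exists_lipschitzOnWith one_ne_zero (hSc.prod (convex_Icc _ _)) hcomp
  obtain ⟨C1, hC1⟩ := hcomp.exists_bound_of_continuousOn hΦ.continuousOn
  obtain ⟨C2, hC2⟩ := (isCompact_Icc (a := (-1 : ℝ)) (b := T + 1)).exists_bound_of_continuousOn
    he.continuousOn
  set L : NNReal := ⟨|C1| + |C2|, by positivity⟩ with hL
  set a : NNReal := L * ⟨T + 1, by linarith⟩ with ha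
  have h0 : (0 : ℝ) ∈ Icc (-1) (T + 1) := ⟨by linarith, by linarith⟩
  have hPL : IsPicardLindelof (fun t x => Φ (cl x, t) + e t) (tmin := -1) (tmax := T + 1)
      ⟨0, h0⟩ x0 a 0 L K := by
    refine ⟨?_, ?_, ?_, ?_⟩
    · intro t ht x _ y _
      rw [edist_add_right]
      refine (hK ⟨hclS x, ht⟩ ⟨hclS y, ht⟩).trans ?_
      gcongr
      rw [Prod.edist_eq]
      simp only [edist_self, max_le_iff, zero_le, and_true]
      simpa using hcl x y
    · intro x _
      refine ContinuousOn.add ?_ he.continuousOn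
      refine hΦ.continuousOn.comp (by fun_prop) ?_
      intro t ht
      exact ⟨hclS x, ht⟩
    · intro t ht x _
      refine (norm_add_le _ _).trans ?_
      have := hC1 (cl x, t) ⟨hclS x, ht⟩
      have := hC2 t ht
      change _ ≤ |C1| + |C2|
      linarith [le_abs_self C1, le_abs_self C2]
    · have : max (T + 1 - 0) (0 - (-1)) = T + 1 := by
        rw [max_eq_left] <;> linarith
      change (L : ℝ) * max (T + 1 - 0) (0 - (-1)) ≤ (a : ℝ) - (0 : NNReal)
      rw [this, ha]
      simp only [NNReal.coe_mul, NNReal.coe_zero, sub_zero]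
      exact le_of_eq rfl
  obtain ⟨x, hx0, hx⟩ := hPL.exists_eq_forall_mem_Icc_hasDerivWithinAt₀
  refine ⟨x, hx0, fun t ht => ?_⟩
  exact (hx t ⟨by linarith [ht.1], by linarith [ht.2]⟩).hasDerivAt
    (Icc_mem_nhds (by linarith [ht.1]) (by linarith [ht.2]))

/-- truncation to `[-a, a]` -/
noncomputable def clampR (a s : ℝ) : ℝ := max (-a) (min s a)

lemma clampR_lip (a : ℝ) : LipschitzWith 1 (clampR a) :=
  (LipschitzWith.id.min_const a).const_max (-a)

lemma clampR_mem (a s : ℝ) (ha : 0 ≤ a) : clampR a s ∈ Icc (-a) a :=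
  ⟨le_max_left _ _, max_le (by linarith) (min_le_right _ _)⟩

lemma clampR_eq (a s : ℝ) (h : |s| ≤ a) : clampR a s = s := by
  have := abs_le.1 h
  unfold clampR
  rw [min_eq_left this.2, max_eq_right this.1]

lemma clamped_system (A k α ω a T : ℝ) (ha : 0 < a) (hT : 0 < T)
    (hD : ∀ z1 z2 θ : ℝ, |z1| ≤ a → |z2| ≤ a → 0 < (z1 - cos θ) ^ 2 + (z2 - sin θ) ^ 2)
    (d1 d2 : ℝ → ℝ) (hd1 : Continuous d1) (hd2 : Continuous d2) (z10 z20 v10 v20 : ℝ) :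
    ∃ z1 z2 v1 v2 : ℝ → ℝ, z1 0 = z10 ∧ z2 0 = z20 ∧ v1 0 = v10 ∧ v2 0 = v20 ∧
      ∀ t ∈ Icc 0 T,
        HasDerivAt z1 (clampR a (v1 t) - d1 t) t ∧
        HasDerivAt z2 (clampR a (v2 t) - d2 t) t ∧
        HasDerivAt v1 (A * (clampR a (z1 t) - cos (ω * t)) /
          ((clampR a (z1 t) - cos (ω * t)) ^ 2 + (clampR a (z2 t) - sin (ω * t)) ^ 2) ^ α
            - k * clampR a (v1 t)) t ∧
        HasDerivAt v2 (A * (clampR a (z2 t) - sin (ω * t)) /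
          ((clampR a (z1 t) - cos (ω * t)) ^ 2 + (clampR a (z2 t) - sin (ω * t)) ^ 2) ^ α
            - k * clampR a (v2 t)) t := by
  let I : Set ℝ := Icc (-a) a
  let c := clampR a
  let cl : ℝ × ℝ × ℝ × ℝ → ℝ × ℝ × ℝ × ℝ := fun x => (c x.1, c x.2.1, c x.2.2.1, c x.2.2.2)
  let Φ : (ℝ × ℝ × ℝ × ℝ) × ℝ → ℝ × ℝ × ℝ × ℝ := fun p =>
    (p.1.2.2.1, p.1.2.2.2,
      A * (p.1.1 - cos (ω * p.2)) /
        ((p.1.1 - cos (ω * p.2)) ^ 2 + (p.1.2.1 - sin (ω * p.2)) ^ 2) ^ α - k * p.1.2.2.1,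
      A * (p.1.2.1 - sin (ω * p.2)) /
        ((p.1.1 - cos (ω * p.2)) ^ 2 + (p.1.2.1 - sin (ω * p.2)) ^ 2) ^ α - k * p.1.2.2.2)
  have hΦ : ContDiffOn ℝ 1 Φ ((I ×ˢ I ×ˢ I ×ˢ I) ×ˢ Icc (-1) (T + 1)) := by
    rintro p ⟨⟨h1, h2, -, -⟩, -⟩
    have hpos := hD p.1.1 p.1.2.1 (ω * p.2) (abs_le.2 h1) (abs_le.2 h2)
    apply ContDiffAt.contDiffWithinAt
    have hden : ContDiffAt ℝ 1 (fun p : (ℝ × ℝ × ℝ × ℝ) × ℝ =>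
        ((p.1.1 - cos (ω * p.2)) ^ 2 + (p.1.2.1 - sin (ω * p.2)) ^ 2) ^ α) p := by
      apply ContDiffAt.rpow_const_of_ne
      · fun_prop
      · exact hpos.ne'
    have hden0 := (Real.rpow_pos_of_pos hpos α).ne'
    refine ContDiffAt.prodMk (by fun_prop) (ContDiffAt.prodMk (by fun_prop)
      (ContDiffAt.prodMk ?_ ?_))
    · exact ((by fun_prop : ContDiffAt ℝ 1 (fun p : (ℝ × ℝ × ℝ × ℝ) × ℝ =>
        A * (p.1.1 - cos (ω * p.2))) p).div hden hden0).sub (by fun_prop)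
    · exact ((by fun_prop : ContDiffAt ℝ 1 (fun p : (ℝ × ℝ × ℝ × ℝ) × ℝ =>
        A * (p.1.2.1 - sin (ω * p.2))) p).div hden hden0).sub (by fun_prop)
  have hcl : LipschitzWith 1 cl := by
    have l : LipschitzWith 1 c := clampR_lip a
    intro x y
    simp only [cl, Prod.edist_eq, ENNReal.coe_one, one_mul]
    have l' : ∀ s t, edist (c s) (c t) ≤ edist s t := fun s t => by simpa using l s t
    gcongr <;> apply l'
  have hclS : ∀ x, cl x ∈ I ×ˢ I ×ˢ I ×ˢ I := fun x =>
    ⟨clampR_mem a _ ha.le, clampR_mem a _ ha.le, clampR_mem a _ ha.le, clampR_mem a _ ha.le⟩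
  obtain ⟨x, hx0, hx⟩ := clamped_ode (I ×ˢ I ×ˢ I ×ˢ I)
    (isCompact_Icc.prod (isCompact_Icc.prod (isCompact_Icc.prod isCompact_Icc)))
    ((convex_Icc _ _).prod ((convex_Icc _ _).prod ((convex_Icc _ _).prod (convex_Icc _ _))))
    cl hcl hclS Φ T hT hΦ (fun t => (-d1 t, -d2 t, 0, 0)) (by fun_prop) (z10, z20, v10, v20)
  refine ⟨fun t => (x t).1, fun t => (x t).2.1, fun t => (x t).2.2.1, fun t => (x t).2.2.2,
    by simp [hx0], by simp [hx0], by simp [hx0], by simp [hx0], fun t ht => ?_⟩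
  have h := hx t ht
  have h1' : HasDerivAt (fun t => (x t).1) _ t := HasFDerivAt.hasDerivAt (HasFDerivAt.fst h)
  have h2 : HasDerivAt (fun t => (x t).2) _ t := HasFDerivAt.hasDerivAt (HasFDerivAt.snd h)
  have h2' : HasDerivAt (fun t => (x t).2.1) _ t := HasFDerivAt.hasDerivAt (HasFDerivAt.fst h2)
  have h3 : HasDerivAt (fun t => (x t).2.2) _ t := HasFDerivAt.hasDerivAt (HasFDerivAt.snd h2)
  have h3' : HasDerivAt (fun t => (x t).2.2.1) _ t := HasFDerivAt.hasDerivAt (HasFDerivAt.fst h3)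
  have h4' : HasDerivAt (fun t => (x t).2.2.2) _ t := HasFDerivAt.hasDerivAt (HasFDerivAt.snd h3)
  refine ⟨?_, ?_, ?_, ?_⟩
  · exact h1'.congr_deriv (by simp [Φ, cl, c, sub_eq_add_neg])
  · exact h2'.congr_deriv (by simp [Φ, cl, c, sub_eq_add_neg])
  · exact h3'.congr_deriv (by simp [Φ, cl, c])
  · exact h4'.congr_deriv (by simp [Φ, cl, c])

lemma extend_C1 (γ : ℝ → ℝ) (h : ContDiffOn ℝ 1 γ (Icc 0 1)) :
    ∃ g g' : ℝ → ℝ, ∃ B > (0 : ℝ), Continuous g' ∧ (∀ t, HasDerivAt g (g' t) t) ∧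
      (∀ t, |g' t| ≤ B) ∧ ∀ t ∈ Icc (0 : ℝ) 1, g t = γ t := by
  have hc : ContinuousOn (derivWithin γ (Icc 0 1)) (Icc 0 1) :=
    h.continuousOn_derivWithin (uniqueDiffOn_Icc zero_lt_one) le_rfl
  let g' : ℝ → ℝ := IccExtend (zero_le_one (α := ℝ)) ((Icc 0 1).domRestrict (derivWithin γ (Icc 0 1)))
  have hg'c : Continuous g' := (continuousOn_iff_continuous_domRestrict.1 hc).Icc_extend'
  have hg'e : ∀ t ∈ Icc (0 : ℝ) 1, g' t = derivWithin γ (Icc 0 1) t := fun t ht => by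
    simp only [g']; rw [IccExtend_of_mem _ _ ht]; rfl
  obtain ⟨B, hB⟩ := (isCompact_Icc (a := (0 : ℝ)) (b := 1)).exists_bound_of_continuousOn hc
  refine ⟨fun t => γ 0 + ∫ s in (0 : ℝ)..t, g' s, g', |B| + 1, by positivity, hg'c, ?_, ?_, ?_⟩
  · intro t
    exact (intervalIntegral.integral_hasDerivAt_right (hg'c.intervalIntegrable _ _)
      hg'c.stronglyMeasurable.stronglyMeasurableAtFilter hg'c.continuousAt).const_add _
  · intro t
    have := hB _ (projIcc 0 1 zero_le_one t).2
    simp only [g', IccExtend, Function.comp, domRestrict_apply]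
    rw [Real.norm_eq_abs] at this
    linarith [le_abs_self B]
  · intro t ht
    have : ∫ s in (0 : ℝ)..t, g' s = γ t - γ 0 := by
      apply intervalIntegral.integral_eq_sub_of_hasDerivAt_of_le ht.1
      · exact h.continuousOn.mono (Icc_subset_Icc_right ht.2)
      · intro x hx
        have hx1 : x ∈ Icc (0 : ℝ) 1 := ⟨hx.1.le, hx.2.le.trans ht.2⟩
        rw [hg'e x hx1]
        exact ((h.differentiableOn one_ne_zero) x hx1).hasDerivWithinAt.hasDerivAt
          (Icc_mem_nhds hx.1 (hx.2.trans_le ht.2))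
      · exact hg'c.intervalIntegrable _ _
    simp only [this]; ring

lemma trig_comb_bound (x y p q : ℝ) (hx : |x| ≤ 1) (hy : |y| ≤ 1) :
    |x * p - y * q| ≤ |p| + |q| ∧ |x * p + y * q| ≤ |p| + |q| := by
  have h1 : |x * p| ≤ |p| := by
    rw [abs_mul]; exact mul_le_of_le_one_left (abs_nonneg _) hx
  have h2 : |y * q| ≤ |q| := by
    rw [abs_mul]; exact mul_le_of_le_one_left (abs_nonneg _) hy
  exact ⟨(abs_sub _ _).trans (by linarith), (abs_add_le _ _).trans (by linarith)⟩

lemma h_bound (A α τ x y u p q : ℝ) (hA : 0 < A) (hα : 1 < α) (hτ : 0 < τ)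
    (hx : |x| ≤ 1) (hy : |y| ≤ 1) (hu : |u| ≤ 1) (hp : |p| ≤ 1) (hq : |q| ≤ 1) :
    |τ * A * u + A * α * τ / 2 * (x * p - y * q)| ≤ τ * (A + A * α) ∧
    |-(τ * A * u) - A * α * τ / 2 * (x * p + y * q)| ≤ τ * (A + A * α) := by
  have hα0 : 0 < α := by linarith
  obtain ⟨h1, h2⟩ := trig_comb_bound x y p q hx hy
  have g1 : |τ * A * u| ≤ τ * A := by
    rw [abs_mul, abs_of_pos (by positivity : 0 < τ * A)]
    exact mul_le_of_le_one_right (by positivity) hu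
  have g : ∀ s, |s| ≤ |p| + |q| → |A * α * τ / 2 * s| ≤ A * α * τ := by
    intro s hs
    rw [abs_mul, abs_of_pos (by positivity : 0 < A * α * τ / 2)]
    calc A * α * τ / 2 * |s| ≤ A * α * τ / 2 * 2 := by gcongr; linarith
      _ = _ := by ring
  constructor
  · refine (abs_add_le _ _).trans ?_
    have := g _ h1
    linarith
  · refine (abs_sub _ _).trans ?_
    rw [abs_neg]
    have := g _ h2
    linarith

set_option maxHeartbeats 1000000 in
lemma relative_system (A k α : ℝ) (hA : 0 < A) (hk : 0 < k) (hα : 1 < α) :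
    ∃ r > (0 : ℝ), ∃ ω > (0 : ℝ), ∃ δ > (0 : ℝ), ∀ d1 d2 : ℝ → ℝ, Continuous d1 → Continuous d2 →
      (∀ t, |d1 t| ≤ δ) → (∀ t, |d2 t| ≤ δ) → ∀ T > (0 : ℝ), ∀ z10 z20 v10 v20 : ℝ,
      |z10| ≤ r → |z20| ≤ r → |v10| ≤ r → |v20| ≤ r →
    ∃ z1 z2 v1 v2 : ℝ → ℝ, z1 0 = z10 ∧ z2 0 = z20 ∧ v1 0 = v10 ∧ v2 0 = v20 ∧
      ∀ t ∈ Icc 0 T,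
        HasDerivAt z1 (v1 t - d1 t) t ∧
        HasDerivAt z2 (v2 t - d2 t) t ∧
        HasDerivAt v1 (A * (z1 t - cos (ω * t)) /
          ((z1 t - cos (ω * t)) ^ 2 + (z2 t - sin (ω * t)) ^ 2) ^ α - k * v1 t) t ∧
        HasDerivAt v2 (A * (z2 t - sin (ω * t)) /
          ((z1 t - cos (ω * t)) ^ 2 + (z2 t - sin (ω * t)) ^ 2) ^ α - k * v2 t) t ∧
        z1 t ^ 2 + z2 t ^ 2 < 1 := by
  have hα0 : 0 < α := by linarith
  set b := A * (α - 1) with hbdef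
  have hb : 0 < b := mul_pos hA (by linarith)
  obtain ⟨m, hm, M, hM, μ, hμ, hly⟩ := lyap_props k b hk hb
  set a := 1 / (10 * α) with hadef
  have ha0 : 0 < a := by positivity
  have ha1 : a ≤ 1 / 10 := by
    apply one_div_le_one_div_of_le <;> linarith
  set G := 120 * A * α ^ 2 * M ^ 2 with hG
  have hG0 : 0 < G := by positivity
  obtain ⟨σ, hσ, hσa, hσG⟩ : ∃ σ > 0, (M + μ) * σ ≤ a ∧ G * σ ≤ m / 4 := by
    refine ⟨min (a / (M + μ)) (m / (4 * G)), by positivity, ?_, ?_⟩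
    · calc _ ≤ (M + μ) * (a / (M + μ)) := by gcongr; exact min_le_left _ _
        _ = a := by field_simp
    · calc _ ≤ G * (m / (4 * G)) := by gcongr; exact min_le_right _ _
        _ = m / 4 := by field_simp
  set κ := min μ (m / 4) * σ with hκ
  have hκ0 : 0 < κ := by positivity
  have hκμ : κ ≤ μ * σ := by rw [hκ]; gcongr; exact min_le_left _ _
  have hκm : κ ≤ m / 4 * σ := by rw [hκ]; gcongr; exact min_le_right _ _
  obtain ⟨τ, hτ, hτκ⟩ : ∃ τ > 0, (k + 1) * (τ * (A + A * α)) + 2 * A * α * τ = κ := by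
    refine ⟨κ / ((k + 1) * (A + A * α) + 2 * A * α), by positivity, ?_⟩
    field_simp
  set H := τ * (A + A * α) with hH
  have hH0 : 0 < H := by positivity
  have hAτ : 0 < A * α * τ := by positivity
  have hkH : 0 < k * H := by positivity
  have hHκ : H ≤ κ := by nlinarith
  set ω := 1 / τ with hω
  have hω0 : 0 < ω := by positivity
  have hωτ : τ * ω = 1 := by rw [hω]; field_simp
  refine ⟨μ * σ, by positivity, ω, hω0, min 1 κ, by positivity, ?_⟩
  intro d1 d2 hd1 hd2 hd1b hd2b T hT z10 z20 v10 v20 hz10 hz20 hv10 hv20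
  have hDpos : ∀ z1 z2 θ : ℝ, |z1| ≤ a → |z2| ≤ a →
      0 < (z1 - cos θ) ^ 2 + (z2 - sin θ) ^ 2 := by
    intro z1 z2 θ h1 h2
    have := (force_taylor_aux α (cos θ) (sin θ) z1 z2 hα (cos_sq_add_sin_sq θ) h1 h2).1
    linarith
  obtain ⟨z1, z2, v1, v2, i1, i2, i3, i4, hsol⟩ :=
    clamped_system A k α ω a T ha0 hT hDpos d1 d2 hd1 hd2 z10 z20 v10 v20
  -- averaging corrections
  let h1 : ℝ → ℝ := fun t => τ * A * sin (ω * t)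
    + A * α * τ / 2 * (sin (2 * (ω * t)) * z1 t - cos (2 * (ω * t)) * z2 t)
  let h2 : ℝ → ℝ := fun t => -(τ * A * cos (ω * t))
    - A * α * τ / 2 * (cos (2 * (ω * t)) * z1 t + sin (2 * (ω * t)) * z2 t)
  let w1 : ℝ → ℝ := fun t => v1 t + h1 t
  let w2 : ℝ → ℝ := fun t => v2 t + h2 t
  have hh1 : ∀ t, |z1 t| ≤ 1 → |z2 t| ≤ 1 → |h1 t| ≤ H := fun t g1 g2 =>
    (h_bound A α τ _ _ _ _ _ hA hα hτ (abs_sin_le_one _) (abs_cos_le_one _)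
      (abs_sin_le_one _) g1 g2).1
  have hh2 : ∀ t, |z1 t| ≤ 1 → |z2 t| ≤ 1 → |h2 t| ≤ H := fun t g1 g2 =>
    (h_bound A α τ _ _ _ _ _ hA hα hτ (abs_cos_le_one _) (abs_sin_le_one _)
      (abs_cos_le_one _) g1 g2).2
  let V : ℝ → ℝ := fun t => lyap k b (z1 t) (z2 t) (w1 t) (w2 t)
  -- consequences of the energy bound
  have region : ∀ t, V t ≤ σ ^ 2 → |z1 t| ≤ M * σ ∧ |z2 t| ≤ M * σ ∧
      |z1 t| ≤ a ∧ |z2 t| ≤ a ∧ |v1 t| ≤ a ∧ |v2 t| ≤ a := by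
    intro t ht
    obtain ⟨b1, b2, b3, b4⟩ := (hly σ hσ _ _ _ _).1 ht
    have hμσ : 0 < μ * σ := by positivity
    have c1 : |z1 t| ≤ a := by linarith
    have c2 : |z2 t| ≤ a := by linarith
    have e1 := hh1 t (by linarith) (by linarith)
    have e2 := hh2 t (by linarith) (by linarith)
    refine ⟨b1, b2, c1, c2, ?_, ?_⟩
    · have : v1 t = w1 t - h1 t := by simp only [w1]; ring
      rw [this]
      refine (abs_sub _ _).trans ?_
      linarith
    · have : v2 t = w2 t - h2 t := by simp only [w2]; ring
      rw [this]
      refine (abs_sub _ _).trans ?_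
      linarith
  -- derivatives
  let dz1 : ℝ → ℝ := fun t => clampR a (v1 t) - d1 t
  let dz2 : ℝ → ℝ := fun t => clampR a (v2 t) - d2 t
  let dv1 : ℝ → ℝ := fun t => A * (clampR a (z1 t) - cos (ω * t)) /
          ((clampR a (z1 t) - cos (ω * t)) ^ 2 + (clampR a (z2 t) - sin (ω * t)) ^ 2) ^ α
            - k * clampR a (v1 t)
  let dv2 : ℝ → ℝ := fun t => A * (clampR a (z2 t) - sin (ω * t)) /
          ((clampR a (z1 t) - cos (ω * t)) ^ 2 + (clampR a (z2 t) - sin (ω * t)) ^ 2) ^ α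
            - k * clampR a (v2 t)
  let dw1 : ℝ → ℝ := fun t => dv1 t + A * cos (ω * t)
    + A * α * (cos (2 * (ω * t)) * z1 t + sin (2 * (ω * t)) * z2 t)
    + A * α * τ / 2 * (sin (2 * (ω * t)) * dz1 t - cos (2 * (ω * t)) * dz2 t)
  let dw2 : ℝ → ℝ := fun t => dv2 t + A * sin (ω * t)
    + A * α * (sin (2 * (ω * t)) * z1 t - cos (2 * (ω * t)) * z2 t)
    - A * α * τ / 2 * (cos (2 * (ω * t)) * dz1 t + sin (2 * (ω * t)) * dz2 t)
  let dV : ℝ → ℝ := fun t =>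
    w1 t * dw1 t + w2 t * dw2 t + 2 * b * (z1 t * dz1 t + z2 t * dz2 t)
      + (w1 t + k * z1 t) * (dw1 t + k * dz1 t) + (w2 t + k * z2 t) * (dw2 t + k * dz2 t)
  have hV : ∀ t ∈ Icc 0 T, HasDerivAt V (dV t) t := by
    intro t ht
    obtain ⟨s1, s2, s3, s4⟩ := hsol t ht
    have hlin : HasDerivAt (fun t => ω * t) ω t := by
      simpa using (hasDerivAt_id t).const_mul ω
    have hlin2 : HasDerivAt (fun t => 2 * (ω * t)) (2 * ω) t := hlin.const_mul 2
    have hw1 : HasDerivAt w1 (dw1 t) t := by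
      refine (s3.add ((hlin.sin.const_mul (τ * A)).add
        (((hlin2.sin.mul s1).sub (hlin2.cos.mul s2)).const_mul (A * α * τ / 2)))).congr_deriv ?_
      simp only [dw1, dv1, dz1, dz2]
      linear_combination (A * cos (ω * t)
        + A * α * (cos (2 * (ω * t)) * z1 t + sin (2 * (ω * t)) * z2 t)) * hωτ
    have hw2 : HasDerivAt w2 (dw2 t) t := by
      refine (s4.add (((hlin.cos.const_mul (τ * A)).neg).sub
        (((hlin2.cos.mul s1).add (hlin2.sin.mul s2)).const_mul (A * α * τ / 2)))).congr_deriv ?_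
      simp only [dw2, dv2, dz1, dz2]
      linear_combination (A * sin (ω * t)
        + A * α * (sin (2 * (ω * t)) * z1 t - cos (2 * (ω * t)) * z2 t)) * hωτ
    have hz1 : HasDerivAt z1 (dz1 t) t := s1
    have hz2 : HasDerivAt z2 (dz2 t) t := s2
    refine (((((hw1.pow 2).add (hw2.pow 2)).div_const 2).add
      (((hz1.pow 2).add (hz2.pow 2)).const_mul b)).add
      ((((hw1.add (hz1.const_mul k)).pow 2).add ((hw2.add (hz2.const_mul k)).pow 2)).div_const 2)
      ).congr_deriv ?_
    simp only [dV, Pi.add_apply]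
    push_cast
    ring
  have hV0 : V 0 ≤ σ ^ 2 := by
    have hμσ : μ * σ ≤ a := by nlinarith
    have e1 := hh1 0 (by rw [i1]; linarith) (by rw [i2]; linarith)
    have e2 := hh2 0 (by rw [i1]; linarith) (by rw [i2]; linarith)
    apply (hly σ hσ _ _ _ _).2.1
    · rw [i1]; exact hz10
    · rw [i2]; exact hz20
    · refine (abs_add_le _ _).trans ?_
      rw [i3]; linarith
    · refine (abs_add_le _ _).trans ?_
      rw [i4]; linarith
  have hbar : ∀ t ∈ Ico 0 T, V t = σ ^ 2 → dV t < 0 := by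
    intro t ht hVt
    obtain ⟨b1, b2, c1, c2, c3, c4⟩ := region t hVt.le
    have e1 := hh1 t (by linarith) (by linarith)
    have e2 := hh2 t (by linarith) (by linarith)
    have hd1t := le_min_iff.1 (hd1b t)
    have hd2t := le_min_iff.1 (hd2b t)
    have dz1e : dz1 t = v1 t - d1 t := by simp only [dz1]; rw [clampR_eq a _ c3]
    have dz2e : dz2 t = v2 t - d2 t := by simp only [dz2]; rw [clampR_eq a _ c4]
    have hdz1 : |dz1 t| ≤ 2 := by
      rw [dz1e]; refine (abs_sub _ _).trans ?_; linarith
    have hdz2 : |dz2 t| ≤ 2 := by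
      rw [dz2e]; refine (abs_sub _ _).trans ?_; linarith
    have t1 := (force_taylor_aux α (cos (ω * t)) (sin (ω * t)) (z1 t) (z2 t) hα
      (cos_sq_add_sin_sq _) c1 c2).2
    have t2 := (force_taylor_aux α (sin (ω * t)) (cos (ω * t)) (z2 t) (z1 t) hα
      (sin_sq_add_cos_sq _) c2 c1).2
    rw [add_comm ((z2 t - sin (ω * t)) ^ 2), add_comm (z2 t ^ 2)] at t2
    set D := ((z1 t - cos (ω * t)) ^ 2 + (z2 t - sin (ω * t)) ^ 2) ^ α with hD
    have hQ : A * (60 * α ^ 2 * (z1 t ^ 2 + z2 t ^ 2)) ≤ G * σ ^ 2 := by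
      have f1 : z1 t ^ 2 ≤ (M * σ) ^ 2 := by
        have := abs_nonneg (z1 t)
        rw [← sq_abs]; gcongr
      have f2 : z2 t ^ 2 ≤ (M * σ) ^ 2 := by
        have := abs_nonneg (z2 t)
        rw [← sq_abs]; gcongr
      calc _ ≤ A * (60 * α ^ 2 * ((M * σ) ^ 2 + (M * σ) ^ 2)) := by gcongr
        _ = G * σ ^ 2 := by rw [hG]; ring
    set R1 := (z1 t - cos (ω * t)) / D
      - (-cos (ω * t) + z1 t - 2 * α * (z1 t * cos (ω * t) + z2 t * sin (ω * t)) * cos (ω * t))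
      with hR1
    set R2 := (z2 t - sin (ω * t)) / D
      - (-sin (ω * t) + z2 t - 2 * α * (z2 t * sin (ω * t) + z1 t * cos (ω * t)) * sin (ω * t))
      with hR2
    have hR1b : |A * R1| ≤ G * σ ^ 2 := by
      rw [abs_mul, abs_of_pos hA]
      exact (mul_le_mul_of_nonneg_left t1 hA.le).trans hQ
    have hR2b : |A * R2| ≤ G * σ ^ 2 := by
      rw [abs_mul, abs_of_pos hA]
      exact (mul_le_mul_of_nonneg_left t2 hA.le).trans hQ
    have hc2 : cos (2 * (ω * t)) = 2 * cos (ω * t) ^ 2 - 1 := cos_two_mul _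
    have hs2 : sin (2 * (ω * t)) = 2 * sin (ω * t) * cos (ω * t) := sin_two_mul _
    have hcs := cos_sq_add_sin_sq (ω * t)
    set J1 := A * α * τ / 2 * (sin (2 * (ω * t)) * dz1 t - cos (2 * (ω * t)) * dz2 t) with hJ1
    set J2 := A * α * τ / 2 * (cos (2 * (ω * t)) * dz1 t + sin (2 * (ω * t)) * dz2 t) with hJ2
    have g : ∀ s, |s| ≤ |dz1 t| + |dz2 t| → |A * α * τ / 2 * s| ≤ 2 * A * α * τ := by
      intro s hs
      rw [abs_mul, abs_of_pos (by positivity : 0 < A * α * τ / 2)]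
      calc A * α * τ / 2 * |s| ≤ A * α * τ / 2 * 4 := by gcongr; linarith
        _ = _ := by ring
    have hJ1b : |J1| ≤ 2 * A * α * τ :=
      g _ (trig_comb_bound _ _ _ _ (abs_sin_le_one _) (abs_cos_le_one _)).1
    have hJ2b : |J2| ≤ 2 * A * α * τ :=
      g _ (trig_comb_bound _ _ _ _ (abs_cos_le_one _) (abs_sin_le_one _)).2
    have q1 : dw1 t = -b * z1 t - k * w1 t + (A * R1 + k * h1 t + J1) := by
      simp only [dw1, dv1, w1]
      rw [clampR_eq a _ c1, clampR_eq a _ c2, clampR_eq a _ c3, ← hD, ← hJ1, hR1, hbdef, hc2, hs2]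
      ring
    have q2 : dw2 t = -b * z2 t - k * w2 t + (A * R2 + k * h2 t - J2) := by
      simp only [dw2, dv2, w2]
      rw [clampR_eq a _ c1, clampR_eq a _ c2, clampR_eq a _ c4, ← hD, ← hJ2, hR2, hbdef, hc2, hs2]
      linear_combination (-2 * A * α * z2 t) * hcs
    have p1 : dz1 t = w1 t + (-h1 t - d1 t) := by rw [dz1e]; simp only [w1]; ring
    have p2 : dz2 t = w2 t + (-h2 t - d2 t) := by rw [dz2e]; simp only [w2]; ring
    have habs : ∀ h, |h| ≤ H → |k * h| ≤ k * H := fun h hh => by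
      rw [abs_mul, abs_of_pos hk]; gcongr
    have hfin := (hly σ hσ _ _ _ _).2.2 hVt (-h1 t - d1 t) (-h2 t - d2 t)
      (A * R1 + k * h1 t + J1) (A * R2 + k * h2 t - J2) (G * σ ^ 2 + 2 * κ)
      (by refine (abs_sub _ _).trans ?_
          rw [abs_neg]
          have : 0 ≤ G * σ ^ 2 := by positivity
          linarith [hd1t.2])
      (by refine (abs_sub _ _).trans ?_
          rw [abs_neg]
          have : 0 ≤ G * σ ^ 2 := by positivity
          linarith [hd2t.2])
      (by refine (abs_add_le _ _).trans ?_
          have := abs_add_le (A * R1) (k * h1 t)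
          have := habs _ e1
          linarith)
      (by refine (abs_sub _ _).trans ?_
          have := abs_add_le (A * R2) (k * h2 t)
          have := habs _ e2
          linarith)
      (by have : G * σ ^ 2 ≤ m / 4 * σ := by
            calc G * σ ^ 2 = G * σ * σ := by ring
              _ ≤ _ := by gcongr
          have : 0 < m * σ := by positivity
          linarith)
    rw [← q1, ← q2, ← p1, ← p2] at hfin
    exact hfin
  have hall := image_le_of_deriv_right_lt_deriv_boundary' (f := V) (f' := dV) (a := 0) (b := T)
    (B := fun _ => σ ^ 2) (B' := fun _ => 0)
    (fun t ht => (hV t ht).continuousAt.continuousWithinAt)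
    (fun t ht => (hV t ⟨ht.1, ht.2.le⟩).hasDerivWithinAt) hV0 continuousOn_const
    (fun t _ => (hasDerivAt_const t (σ ^ 2)).hasDerivWithinAt) hbar
  refine ⟨z1, z2, v1, v2, i1, i2, i3, i4, fun t ht => ?_⟩
  obtain ⟨-, -, c1, c2, c3, c4⟩ := region t (hall ht)
  have hs := hsol t ht
  rw [clampR_eq a _ c1, clampR_eq a _ c2, clampR_eq a _ c3, clampR_eq a _ c4] at hs
  refine ⟨hs.1, hs.2.1, hs.2.2.1, hs.2.2.2, ?_⟩
  have := abs_le.1 c1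
  have := abs_le.1 c2
  nlinarith


/-- The leader–follower system with parameters `A > 0`, `k > 0`, `α > 1`,
`N` followers, leader initially at `(1, 0)`, is 1-confinement controllable about every
`C¹` trajectory `γ = (γ₁, γ₂)` on `[0,1]` with `γ(0) = 0`, provided the followers'
initial states lie in a ball of radius `r` (for some uniform `r > 0`). -/
theorem leader_follower_one_confinement_controllable
    (A k α : ℝ) (hA : 0 < A) (hk : 0 < k) (hα : 1 < α) (N : ℕ) :
    ∃ r > (0 : ℝ),
      ∀ γ₁ γ₂ : ℝ → ℝ,
        ContDiffOn ℝ 1 γ₁ (Icc 0 1) → ContDiffOn ℝ 1 γ₂ (Icc 0 1) →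
        γ₁ 0 = 0 → γ₂ 0 = 0 →
        ∀ x0 y0 vx0 vy0 : Fin N → ℝ,
          (∀ i, Real.sqrt ((x0 i) ^ 2 + (vx0 i) ^ 2 + (y0 i) ^ 2 + (vy0 i) ^ 2) < r) →
          ∃ T > (0 : ℝ), ∃ ux uy : ℝ → ℝ,
            ContinuousOn ux (Icc 0 T) ∧ ContinuousOn uy (Icc 0 T) ∧
            ∃ xl yl : ℝ → ℝ, ∃ x y vx vy : Fin N → ℝ → ℝ,
              xl 0 = 1 ∧ yl 0 = 0 ∧
              (∀ i, x i 0 = x0 i ∧ y i 0 = y0 i ∧ vx i 0 = vx0 i ∧ vy i 0 = vy0 i) ∧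
              (∀ t ∈ Icc (0 : ℝ) T,
                HasDerivAt xl (ux t) t ∧ HasDerivAt yl (uy t) t ∧
                ∀ i,
                  HasDerivAt (x i) (vx i t) t ∧
                  HasDerivAt (vx i)
                    (A * (x i t - xl t) /
                      ((x i t - xl t) ^ 2 + (y i t - yl t) ^ 2) ^ α - k * vx i t) t ∧
                  HasDerivAt (y i) (vy i t) t ∧
                  HasDerivAt (vy i)
                    (A * (y i t - yl t) /
                      ((x i t - xl t) ^ 2 + (y i t - yl t) ^ 2) ^ α - k * vy i t) t) ∧
              (∀ t ∈ Icc (0 : ℝ) T,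
                (∀ i, Real.sqrt ((γ₁ (t / T) - x i t) ^ 2 + (γ₂ (t / T) - y i t) ^ 2) < 1) ∧
                1 ≤ Real.sqrt ((γ₁ (t / T) - xl t) ^ 2 + (γ₂ (t / T) - yl t) ^ 2)) := by
  obtain ⟨r, hr, ω, hω, δ, hδ, hrel⟩ := relative_system A k α hA hk hα
  refine ⟨r, hr, ?_⟩
  intro γ₁ γ₂ hγ₁ hγ₂ hγ₁0 hγ₂0 x0 y0 vx0 vy0 hinit
  obtain ⟨g1, g1', B1, hB1, hg1c, hg1d, hg1b, hg1e⟩ := extend_C1 γ₁ hγ₁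
  obtain ⟨g2, g2', B2, hB2, hg2c, hg2d, hg2b, hg2e⟩ := extend_C1 γ₂ hγ₂
  obtain ⟨T, hT, hTd⟩ : ∃ T > (0 : ℝ), (B1 + B2) / T = δ :=
    ⟨(B1 + B2) / δ, by positivity, by field_simp⟩
  have hdb : ∀ x, |x| ≤ B1 + B2 → |x / T| ≤ δ := fun x hx => by
    rw [abs_div, abs_of_pos hT, ← hTd]; gcongr
  have key : ∀ i, ∃ z1 z2 v1 v2 : ℝ → ℝ, z1 0 = x0 i ∧ z2 0 = y0 i ∧ v1 0 = vx0 i ∧ v2 0 = vy0 i ∧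
      ∀ t ∈ Icc 0 T,
        HasDerivAt z1 (v1 t - g1' (t / T) / T) t ∧
        HasDerivAt z2 (v2 t - g2' (t / T) / T) t ∧
        HasDerivAt v1 (A * (z1 t - cos (ω * t)) /
          ((z1 t - cos (ω * t)) ^ 2 + (z2 t - sin (ω * t)) ^ 2) ^ α - k * v1 t) t ∧
        HasDerivAt v2 (A * (z2 t - sin (ω * t)) /
          ((z1 t - cos (ω * t)) ^ 2 + (z2 t - sin (ω * t)) ^ 2) ^ α - k * v2 t) t ∧
        z1 t ^ 2 + z2 t ^ 2 < 1 := by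
    intro i
    have hsq := (Real.sqrt_lt' hr).1 (hinit i)
    have q1 := sq_nonneg (x0 i)
    have q2 := sq_nonneg (y0 i)
    have q3 := sq_nonneg (vx0 i)
    have q4 := sq_nonneg (vy0 i)
    exact hrel (fun t => g1' (t / T) / T) (fun t => g2' (t / T) / T) (by fun_prop) (by fun_prop)
      (fun t => hdb _ (by linarith [hg1b (t / T)])) (fun t => hdb _ (by linarith [hg2b (t / T)]))
      T hT _ _ _ _
      (abs_le_of_sq_le_sq (by linarith) hr.le) (abs_le_of_sq_le_sq (by linarith) hr.le)
      (abs_le_of_sq_le_sq (by linarith) hr.le) (abs_le_of_sq_le_sq (by linarith) hr.le)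
  choose z1 z2 v1 v2 i1 i2 i3 i4 hsol using key
  have h0 : (0 : ℝ) ∈ Icc (0 : ℝ) 1 := ⟨le_rfl, zero_le_one⟩
  have hdiv : ∀ t : ℝ, HasDerivAt (fun t => t / T) (1 / T) t := fun t =>
    (hasDerivAt_id t).div_const T
  have hG1 : ∀ t, HasDerivAt (fun t => g1 (t / T)) (g1' (t / T) / T) t := fun t =>
    ((hg1d (t / T)).comp t (hdiv t)).congr_deriv (by ring)
  have hG2 : ∀ t, HasDerivAt (fun t => g2 (t / T)) (g2' (t / T) / T) t := fun t =>
    ((hg2d (t / T)).comp t (hdiv t)).congr_deriv (by ring)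
  have hlin : ∀ t, HasDerivAt (fun t => ω * t) ω t := fun t => by
    simpa using (hasDerivAt_id t).const_mul ω
  refine ⟨T, hT, fun t => g1' (t / T) / T + -sin (ω * t) * ω,
    fun t => g2' (t / T) / T + cos (ω * t) * ω,
    Continuous.continuousOn (by fun_prop), Continuous.continuousOn (by fun_prop),
    fun t => g1 (t / T) + cos (ω * t), fun t => g2 (t / T) + sin (ω * t),
    fun i t => z1 i t + g1 (t / T), fun i t => z2 i t + g2 (t / T), v1, v2, ?_, ?_, ?_, ?_, ?_⟩
  · simp [hg1e 0 h0, hγ₁0]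
  · simp [hg2e 0 h0, hγ₂0]
  · intro i
    refine ⟨?_, ?_, i3 i, i4 i⟩
    · simp [hg1e 0 h0, hγ₁0, i1]
    · simp [hg2e 0 h0, hγ₂0, i2]
  · intro t ht
    refine ⟨(hG1 t).add (hlin t).cos, (hG2 t).add (hlin t).sin, fun i => ?_⟩
    obtain ⟨s1, s2, s3, s4, -⟩ := hsol i t ht
    have e1 : z1 i t + g1 (t / T) - (g1 (t / T) + cos (ω * t)) = z1 i t - cos (ω * t) := by ring
    have e2 : z2 i t + g2 (t / T) - (g2 (t / T) + sin (ω * t)) = z2 i t - sin (ω * t) := by ring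
    simp only [e1, e2]
    exact ⟨(s1.add (hG1 t)).congr_deriv (by ring), s3, (s2.add (hG2 t)).congr_deriv (by ring), s4⟩
  · intro t ht
    have htT : t / T ∈ Icc (0 : ℝ) 1 := ⟨by have := ht.1; positivity, (div_le_one hT).2 ht.2⟩
    rw [← hg1e _ htT, ← hg2e _ htT]
    refine ⟨fun i => ?_, ?_⟩
    · rw [Real.sqrt_lt' one_pos]
      have := (hsol i t ht).2.2.2.2
      ring_nf at this ⊢
      exact this
    · apply Real.le_sqrt_of_sq_le
      have := cos_sq_add_sin_sq (ω * t)
      ring_nf at this ⊢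
      exact this.ge
end

section
/- Let A > 0, k > 0, α > 1. Let γ₁, γ₂ be continuously differentiable on [0,1] with γ₁(0) = γ₂(0) = 0, and for δ > 0 define γᵢ^δ(t) = γᵢ(δt) for t ∈ [0, 1/δ]. There exist positive constants r₁, ω₁, δ₁, depending on A, k, and α, such that for all ω > ω₁ and all δ ∈ (0, δ₁): every solution X = (x, v_x, y, v_y) of Ẋ = F(t, X, ω, γ^δ) with ‖X(0)‖ ≤ r₁ is defined on the whole interval [0, 1/δ] and satisfies ‖(x(t), y(t)) − (γ₁^δ(t), γ₂^δ(t))‖ < 1 for all t ∈ [0, 1/δ]. -/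
open Real Set

/-- Lyapunov form. -/
theorem lyap_s1 (b k : ℝ) (hb : 0 < b) (hk : 0 < k) :
    ∃ ε > (0:ℝ), ∃ μ > (0:ℝ), ∃ c > (0:ℝ), ∃ C > (0:ℝ),
      (∀ q w : ℝ, c * (q ^ 2 + w ^ 2) ≤ b * q ^ 2 + w ^ 2 + ε * (q * w)) ∧
      (∀ q w : ℝ, b * q ^ 2 + w ^ 2 + ε * (q * w) ≤ C * (q ^ 2 + w ^ 2)) ∧
      (∀ q w N E : ℝ,
        b * (2 * q * (w + N)) + 2 * w * (-b * q - k * w + E)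
          + ε * ((w + N) * w + q * (-b * q - k * w + E))
        ≤ -μ * (b * q ^ 2 + w ^ 2 + ε * (q * w)) + μ⁻¹ * (N ^ 2 + E ^ 2)) := by
  obtain ⟨ε, hε, h1, h2, h3⟩ : ∃ ε > (0:ℝ), ε ^ 2 ≤ b ∧ ε * (1 + k ^ 2 / (2 * b)) ≤ k ∧ ε ≤ 1 := by
    refine ⟨min 1 (min b (k / (1 + k ^ 2 / (2 * b)))), by positivity, ?_, ?_, min_le_left _ _⟩
    · set e := min 1 (min b (k / (1 + k ^ 2 / (2 * b)))) with he
      have h0 : 0 < e := by positivity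
      have h1 : e ≤ 1 := min_le_left _ _
      have h2 : e ≤ b := (min_le_right _ _).trans (min_le_left _ _)
      nlinarith
    · have h2 : min 1 (min b (k / (1 + k ^ 2 / (2 * b)))) ≤ k / (1 + k ^ 2 / (2 * b)) :=
        (min_le_right _ _).trans (min_le_right _ _)
      rwa [le_div_iff₀ (by positivity)] at h2
  have hqw : ∀ q w : ℝ, |ε * (q * w)| ≤ (b * q ^ 2 + w ^ 2) / 2 := by
    intro q w
    rw [abs_le]
    constructor
    · nlinarith [sq_nonneg (ε * q + w), mul_le_mul_of_nonneg_right h1 (sq_nonneg q)]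
    · nlinarith [sq_nonneg (ε * q - w), mul_le_mul_of_nonneg_right h1 (sq_nonneg q)]
  obtain ⟨m, hm, hm1, hm2⟩ : ∃ m > (0:ℝ), m ≤ k ∧ m ≤ ε * b / 2 :=
    ⟨min k (ε * b / 2), by positivity, min_le_left _ _, min_le_right _ _⟩
  -- main dissipation
  have hdis : ∀ q w : ℝ, -2 * k * w ^ 2 + ε * w ^ 2 - ε * b * q ^ 2 - ε * k * (q * w)
      ≤ - m * (q ^ 2 + w ^ 2) := by
    intro q w
    have hy : -(ε * k * (q * w)) ≤ ε * (b * q ^ 2 / 2 + k ^ 2 / (2 * b) * w ^ 2) := by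
      have : b * q ^ 2 / 2 + k ^ 2 / (2 * b) * w ^ 2 + k * (q * w) = (b * q + k * w) ^ 2 / (2 * b) := by
        field_simp
        ring
      have h' : 0 ≤ (b * q + k * w) ^ 2 / (2 * b) := by positivity
      nlinarith
    have h2' := mul_le_mul_of_nonneg_right h2 (sq_nonneg w)
    have h4 := mul_le_mul_of_nonneg_right hm1 (sq_nonneg w)
    have h5 := mul_le_mul_of_nonneg_right hm2 (sq_nonneg q)
    nlinarith
  -- perturbation
  obtain ⟨M, hM, hMe⟩ : ∃ M > (0:ℝ), M = 2 * ((2 * b + 2 + 2 * ε) ^ 2) / m := ⟨_, by positivity, rfl⟩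
  have hY : ∀ L x y : ℝ, 0 ≤ L → L ≤ 2 * b + 2 + 2 * ε → L * (x * y) ≤ m / 8 * x ^ 2 + M * y ^ 2 := by
    intro L x y hL hL2
    have hmm : m / 8 * M = (2 * b + 2 + 2 * ε) ^ 2 / 4 := by rw [hMe]; field_simp; ring
    have hLL : L ^ 2 / 4 ≤ m / 8 * M := by rw [hmm]; gcongr
    have : 0 ≤ (m / 8 * x - L / 2 * y) ^ 2 := sq_nonneg _
    have h8 : 0 < m / 8 := by positivity
    have h9 : (m/8) * (L * (x * y)) ≤ (m/8) * (m / 8 * x ^ 2 + M * y ^ 2) := by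
      nlinarith [mul_le_mul_of_nonneg_right hLL (sq_nonneg y)]
    exact le_of_mul_le_mul_left h9 h8
  have hC : ∀ q w : ℝ, b * q ^ 2 + w ^ 2 + ε * (q * w) ≤ (2 * b + 2) * (q ^ 2 + w ^ 2) := by
    intro q w
    have := (abs_le.1 (hqw q w)).2
    nlinarith [sq_nonneg q, sq_nonneg w, mul_nonneg hb.le (sq_nonneg w), mul_nonneg hb.le (sq_nonneg q)]
  obtain ⟨μ, hμ, hμ1, hμ2⟩ : ∃ μ > (0:ℝ), μ * (2 * b + 2) ≤ m / 2 ∧ 2 * M ≤ μ⁻¹ := by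
    refine ⟨min (m / 2 / (2 * b + 2)) (2 * M)⁻¹, by positivity, ?_, ?_⟩
    · rw [← le_div_iff₀ (by positivity)]; exact min_le_left _ _
    · rw [le_inv_comm₀ (by positivity) (by positivity)]; exact min_le_right _ _
  refine ⟨ε, hε, μ, hμ, min b 1 / 2, by positivity, 2 * b + 2, by positivity, ?_, hC, ?_⟩
  · intro q w
    have := (abs_le.1 (hqw q w)).1
    have h1 : min b 1 ≤ b := min_le_left _ _
    have h2 : min b 1 ≤ 1 := min_le_right _ _
    nlinarith [mul_le_mul_of_nonneg_right h1 (sq_nonneg q), mul_le_mul_of_nonneg_right h2 (sq_nonneg w)]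
  · intro q w N E
    have a1 := hdis q w
    have a2 := hY (2 * b) q N (by positivity) (by linarith)
    have a3 := hY 2 w E (by positivity) (by linarith)
    have a4 := hY ε w N (by positivity) (by linarith)
    have a5 := hY ε q E (by positivity) (by linarith)
    have a6 := mul_le_mul_of_nonneg_left (hC q w) hμ.le
    have a7 := mul_le_mul_of_nonneg_right hμ1 (add_nonneg (sq_nonneg q) (sq_nonneg w))
    have a8 := mul_le_mul_of_nonneg_right hμ2 (add_nonneg (sq_nonneg N) (sq_nonneg E))
    nlinarith [sq_nonneg q, sq_nonneg w]

theorem rem_one (α : ℝ) (hα : 1 < α) (κ : ℝ) (hκ : 0 < κ) :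
    ∃ ρ > (0:ℝ), ρ ≤ 1 / 8 ∧ ∀ c s q1 q2 : ℝ, c ^ 2 + s ^ 2 = 1 → |q1| ≤ ρ → |q2| ≤ ρ →
      |(q1 - c) / ((q1 - c) ^ 2 + (q2 - s) ^ 2) ^ α
        - (-c + (1 - α) * q1 - α * ((c ^ 2 - s ^ 2) * q1 + 2 * s * c * q2))| ≤ κ * (|q1| + |q2|) := by
  have hd : HasDerivAt (fun u : ℝ => ((1 + u) ^ α)⁻¹) (-α) 0 := by
    have h1 : HasDerivAt (fun u : ℝ => 1 + u) 1 0 := (hasDerivAt_id 0).const_add 1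
    have h2 := (h1.rpow_const (p := α) (by simp)).inv (by simp)
    have h3 : HasDerivAt (fun u : ℝ => ((1 + u) ^ α)⁻¹) _ 0 := h2
    convert h3 using 1
    simp
  have hlo := (hasDerivAt_iff_isLittleO.1 hd).def (c := κ / 12) (by positivity)
  obtain ⟨r, hr, hr2⟩ := Metric.eventually_nhds_iff.1 hlo
  refine ⟨min (1/8) (min (r / 8) (κ / (20 * α))), by positivity, min_le_left _ _, ?_⟩
  intro c s q1 q2 hcs h1 h2
  have hρ1 : min (1/8) (min (r / 8) (κ / (20 * α))) ≤ 1 / 8 := min_le_left _ _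
  have hρ2 : min (1/8) (min (r / 8) (κ / (20 * α))) ≤ r / 8 := (min_le_right _ _).trans (min_le_left _ _)
  have hρ3 : min (1/8) (min (r / 8) (κ / (20 * α))) ≤ κ / (20 * α) :=
    (min_le_right _ _).trans (min_le_right _ _)
  generalize min (1/8) (min (r / 8) (κ / (20 * α))) = ρ at *
  have hc : |c| ≤ 1 := abs_le_one_iff_mul_self_le_one.2 (by nlinarith)
  have hs : |s| ≤ 1 := abs_le_one_iff_mul_self_le_one.2 (by nlinarith)
  set Q := |q1| + |q2| with hQ
  have hQ0 : 0 ≤ Q := by positivity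
  set d := c * q1 + s * q2 with hdd
  have hdQ : |d| ≤ Q := by
    calc |d| ≤ |c * q1| + |s * q2| := abs_add_le _ _
      _ = |c| * |q1| + |s| * |q2| := by rw [abs_mul, abs_mul]
      _ ≤ 1 * |q1| + 1 * |q2| := by gcongr
      _ = Q := by rw [hQ]; ring
  set n := q1 ^ 2 + q2 ^ 2 with hn
  have hn0 : 0 ≤ n := by positivity
  have hnQ : n ≤ Q ^ 2 := by
    rw [hn, hQ, ← sq_abs q1, ← sq_abs q2]; nlinarith [abs_nonneg q1, abs_nonneg q2]
  have hQ1 : Q ≤ 2 * ρ := by linarith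
  have hQ2 : Q ≤ 1 / 4 := by linarith
  set u := n - 2 * d with hu
  have huQ : |u| ≤ 3 * Q := by
    have := abs_le.1 hdQ
    rw [abs_le]; constructor <;> nlinarith
  have hur : |u| < r := by linarith
  have hD : (q1 - c) ^ 2 + (q2 - s) ^ 2 = 1 + u := by rw [hu, hn, hdd]; linear_combination hcs
  have h := hr2 (y := u) (by simpa [Real.dist_eq] using hur)
  simp only [sub_zero, add_zero, one_rpow, inv_one, smul_eq_mul, Real.norm_eq_abs] at h
  rw [hD, div_eq_mul_inv]
  set H := ((1 + u) ^ α)⁻¹ - 1 - u * -α with hH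
  have hHe : ((1 + u) ^ α)⁻¹ = 1 - α * u + H := by rw [hH]; ring
  rw [hHe]
  have e : (q1 - c) * (1 - α * u + H)
        - (-c + (1 - α) * q1 - α * ((c ^ 2 - s ^ 2) * q1 + 2 * s * c * q2))
      = α * (2 * (d * q1) - n * (q1 - c)) + H * (q1 - c) := by
    have : s ^ 2 = 1 - c ^ 2 := by linarith
    rw [hu, hdd, hn, this]; ring
  rw [e]
  have hq1Q : |q1| ≤ Q := by rw [hQ]; linarith [abs_nonneg q2]
  have hz : |q1 - c| ≤ 2 := by
    calc _ ≤ |q1| + |c| := abs_sub _ _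
      _ ≤ 2 := by linarith
  have b1 : |H * (q1 - c)| ≤ κ / 2 * Q := by
    rw [abs_mul]
    calc |H| * |q1 - c| ≤ (κ / 12 * (3 * Q)) * 2 := by
          gcongr
          exact h.trans (by gcongr)
      _ = κ / 2 * Q := by ring
  have b2 : |2 * (d * q1) - n * (q1 - c)| ≤ 4 * Q ^ 2 := by
    calc _ ≤ |2 * (d * q1)| + |n * (q1 - c)| := abs_sub _ _
      _ = 2 * (|d| * |q1|) + n * |q1 - c| := by simp only [abs_mul, abs_two, abs_of_nonneg hn0]
      _ ≤ 2 * (Q * Q) + Q ^ 2 * 2 := by gcongr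
      _ = _ := by ring
  have b3 : α * (4 * Q ^ 2) ≤ κ / 2 * Q := by
    have : 20 * α * ρ ≤ κ := by
      rw [le_div_iff₀ (by positivity)] at hρ3; linarith
    have h16 : 8 * α * Q ≤ κ := by
      have h17 : α * Q ≤ α * (2 * ρ) := mul_le_mul_of_nonneg_left hQ1 (by linarith)
      have h18 : 0 ≤ α * Q := mul_nonneg (by linarith) hQ0
      linarith
    have h19 := mul_le_mul_of_nonneg_right h16 hQ0
    linarith
  calc _ ≤ |α * (2 * (d * q1) - n * (q1 - c))| + |H * (q1 - c)| := abs_add_le _ _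
    _ ≤ α * (4 * Q ^ 2) + κ / 2 * Q := by
      rw [abs_mul, abs_of_pos (by linarith : 0 < α)]; gcongr
    _ ≤ κ * Q := by linarith

theorem sq_add_abs_le (a b : ℝ) : (|a| + |b|) ^ 2 ≤ 2 * (a ^ 2 + b ^ 2) := by
  rw [← sq_abs a, ← sq_abs b]; nlinarith [sq_nonneg (|a| - |b|)]

theorem sq_add_le' (a b : ℝ) : (a + b) ^ 2 ≤ 2 * a ^ 2 + 2 * b ^ 2 := by
  nlinarith [sq_nonneg (a - b)]

theorem tri_bound {S C a b m : ℝ} (hS : |S| ≤ 1) (hC : |C| ≤ 1) (ha : |a| ≤ m) (hb : |b| ≤ m) :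
    |S * a - C * b| ≤ 2 * m := by
  calc |S * a - C * b| ≤ |S * a| + |C * b| := abs_sub _ _
    _ = |S| * |a| + |C| * |b| := by rw [abs_mul, abs_mul]
    _ ≤ 1 * m + 1 * m := by gcongr
    _ = 2 * m := by ring

theorem p_bound {A α o e S C a b : ℝ} (hA : 0 < A) (hα : 1 < α) (ho : 0 < o) (he : |e| ≤ 1)
    (hS : |S| ≤ 1) (hC : |C| ≤ 1) (ha : |a| ≤ 1) (hb : |b| ≤ 1) :
    |A * o * e + A * α / 2 * o * (S * a - C * b)| ≤ A * (1 + α) * o := by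
  have h := tri_bound hS hC ha hb
  have hα0 : 0 < α := by linarith
  calc _ ≤ |A * o * e| + |A * α / 2 * o * (S * a - C * b)| := abs_add_le _ _
    _ = A * o * |e| + A * α / 2 * o * |S * a - C * b| := by
      rw [abs_mul, abs_mul (A * α / 2 * o), abs_of_pos (by positivity : 0 < A * o),
        abs_of_pos (by positivity : 0 < A * α / 2 * o)]
    _ ≤ A * o * 1 + A * α / 2 * o * (2 * 1) := by gcongr
    _ = _ := by ring

/-- Bounds on the perturbation terms of one component. -/
theorem ne_bound {A k α o δ G h p g X K : ℝ} (hA : 0 < A) (hk : 0 < k) (hα : 1 < α) (ho : 0 < o)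
    (hδ : 0 < δ) (hG : 0 ≤ G) (hg : |g| ≤ G) (hp : |p| ≤ A * (1 + α) * o)
    (hX : |X| ≤ 2 * (1 + G))
    (hK : K = A * (1 + α) + G + k * (A * (1 + α)) + A * α * (1 + G)) :
    (-p - δ * g) ^ 2 + (A * h + k * p + A * α / 2 * o * X) ^ 2
      ≤ 3 * (K * (o + δ)) ^ 2 + 2 * A ^ 2 * h ^ 2 := by
  have hα0 : 0 < α := by linarith
  have h1 : |-p - δ * g| ≤ K * (o + δ) := by
    calc |-p - δ * g| ≤ |-p| + |δ * g| := abs_sub _ _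
      _ = |p| + δ * |g| := by rw [abs_neg, abs_mul, abs_of_pos hδ]
      _ ≤ A * (1 + α) * o + δ * G := by gcongr
      _ ≤ K * (o + δ) := by
        rw [hK]
        have : 0 ≤ A * (1 + α) * δ + G * o + (k * (A * (1 + α)) + A * α * (1 + G)) * (o + δ) := by
          positivity
        nlinarith
  have h2 : |k * p + A * α / 2 * o * X| ≤ K * (o + δ) := by
    calc _ ≤ |k * p| + |A * α / 2 * o * X| := abs_add_le _ _
      _ = k * |p| + A * α / 2 * o * |X| := by
        rw [abs_mul, abs_mul (A * α / 2 * o), abs_of_pos hk,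
          abs_of_pos (by positivity : 0 < A * α / 2 * o)]
      _ ≤ k * (A * (1 + α) * o) + A * α / 2 * o * (2 * (1 + G)) := by gcongr
      _ ≤ K * (o + δ) := by
        rw [hK]
        have : 0 ≤ (A * (1 + α) + G) * (o + δ) + (k * (A * (1 + α)) + A * α * (1 + G)) * δ := by
          positivity
        nlinarith
  have h1' := sq_le_sq' (abs_le.1 h1).1 (abs_le.1 h1).2
  have h2' := sq_le_sq' (abs_le.1 h2).1 (abs_le.1 h2).2
  nlinarith [sq_nonneg (A * h - (k * p + A * α / 2 * o * X))]

set_option maxHeartbeats 2000000 in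
theorem confine
    (A k α : ℝ) (hA : 0 < A) (hk : 0 < k) (hα : 1 < α)
    (γ₁ γ₂ g₁ g₂ : ℝ → ℝ) (G : ℝ) (hG : 0 ≤ G)
    (hγ₁ : ∀ s ∈ Icc (0:ℝ) 1, HasDerivWithinAt γ₁ (g₁ s) (Icc 0 1) s)
    (hγ₂ : ∀ s ∈ Icc (0:ℝ) 1, HasDerivWithinAt γ₂ (g₂ s) (Icc 0 1) s)
    (hg₁ : ∀ s ∈ Icc (0:ℝ) 1, |g₁ s| ≤ G) (hg₂ : ∀ s ∈ Icc (0:ℝ) 1, |g₂ s| ≤ G)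
    (hγ₁0 : γ₁ 0 = 0) (hγ₂0 : γ₂ 0 = 0) :
    ∃ r₁ > (0 : ℝ), ∃ ω₁ > (0 : ℝ), ∃ δ₁ > (0 : ℝ),
      ∀ ω : ℝ, ω₁ < ω → ∀ δ : ℝ, 0 < δ → δ < δ₁ →
        ∀ x vx y vy dx ax dy ay : ℝ → ℝ,
          (∀ t ∈ Icc (0 : ℝ) (1 / δ), HasDerivAt x (dx t) t ∧ HasDerivAt vx (ax t) t ∧
            HasDerivAt y (dy t) t ∧ HasDerivAt vy (ay t) t) →
          (∀ t ∈ Icc (0 : ℝ) (1 / δ), |x t - γ₁ (δ * t)| ≤ 1 / 8 → |y t - γ₂ (δ * t)| ≤ 1 / 8 →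
            |vx t| ≤ 1 / 8 → |vy t| ≤ 1 / 8 →
            dx t = vx t ∧ dy t = vy t ∧
            ax t = A * (x t - Real.cos (ω * t) - γ₁ (δ * t)) /
                  ((x t - Real.cos (ω * t) - γ₁ (δ * t)) ^ 2 +
                    (y t - Real.sin (ω * t) - γ₂ (δ * t)) ^ 2) ^ α - k * vx t ∧
            ay t = A * (y t - Real.sin (ω * t) - γ₂ (δ * t)) /
                  ((x t - Real.cos (ω * t) - γ₁ (δ * t)) ^ 2 +
                    (y t - Real.sin (ω * t) - γ₂ (δ * t)) ^ 2) ^ α - k * vy t) →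
          Real.sqrt ((x 0) ^ 2 + (vx 0) ^ 2 + (y 0) ^ 2 + (vy 0) ^ 2) ≤ r₁ →
          ∀ t ∈ Icc (0 : ℝ) (1 / δ), |x t - γ₁ (δ * t)| ≤ 1 / 8 ∧ |y t - γ₂ (δ * t)| ≤ 1 / 8 ∧
            |vx t| ≤ 1 / 8 ∧ |vy t| ≤ 1 / 8 := by
  have hα0 : 0 < α := by linarith
  obtain ⟨b, hb, hbe⟩ : ∃ b > (0:ℝ), b = A * (α - 1) := ⟨_, mul_pos hA (by linarith), rfl⟩
  obtain ⟨ε, hε, μ, hμ, c, hc, C, hC, hVl, hVu, hVd⟩ := lyap_s1 b k hb hk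
  obtain ⟨κ, hκ, hκe⟩ : ∃ κ > (0:ℝ), 8 * A ^ 2 * κ ^ 2 ≤ c * μ ^ 2 / 4 := by
    refine ⟨μ * √c / (6 * A), by positivity, ?_⟩
    have : 8 * A ^ 2 * (μ * √c / (6 * A)) ^ 2 = 8 / 36 * μ ^ 2 * (√c) ^ 2 := by field_simp; norm_num
    rw [this, Real.sq_sqrt hc.le]
    nlinarith [mul_pos hc (pow_pos hμ 2)]
  obtain ⟨ρ, hρ, hρ8, hrem⟩ := rem_one α hα κ hκ
  obtain ⟨R, hR, hRe⟩ : ∃ R > (0:ℝ), R = c * (ρ / 2) ^ 2 := ⟨_, by positivity, rfl⟩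
  obtain ⟨K, hK, hKe⟩ : ∃ K > (0:ℝ), K = A * (1 + α) + G + k * (A * (1 + α)) + A * α * (1 + G) :=
    ⟨_, by positivity, rfl⟩
  obtain ⟨σ, hσ, hσ1, hσ2, hσ3⟩ : ∃ σ > (0:ℝ), σ ≤ ρ / 2 ∧ 6 * σ ^ 2 ≤ μ ^ 2 * R / 4 ∧
      σ ^ 2 ≤ R / (8 * C) := by
    refine ⟨min (ρ / 2) (min (√(μ ^ 2 * R / 24)) (√(R / (8 * C)))), by positivity,
      min_le_left _ _, ?_, ?_⟩
    · have h1 : min (ρ / 2) (min (√(μ ^ 2 * R / 24)) (√(R / (8 * C)))) ≤ √(μ ^ 2 * R / 24) :=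
        (min_le_right _ _).trans (min_le_left _ _)
      have h2 := pow_le_pow_left₀ (by positivity) h1 2
      rw [Real.sq_sqrt (by positivity)] at h2
      linarith
    · have h1 : min (ρ / 2) (min (√(μ ^ 2 * R / 24)) (√(R / (8 * C)))) ≤ √(R / (8 * C)) :=
        (min_le_right _ _).trans (min_le_right _ _)
      have h2 := pow_le_pow_left₀ (by positivity) h1 2
      rwa [Real.sq_sqrt (by positivity)] at h2
  refine ⟨min 1 (√(R / (4 * C))), by positivity, 2 * K / σ, by positivity, min 1 (σ / (2 * K)),
    by positivity, ?_⟩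
  intro ω hω δ hδ hδ1 x vx y vy dx ax dy ay hder hbox hinit
  have hω0 : 0 < ω := lt_trans (by positivity) hω
  obtain ⟨o, ho, hoe⟩ : ∃ o > (0:ℝ), o = 1 / ω := ⟨_, by positivity, rfl⟩
  have hoω : o * ω = 1 := by rw [hoe]; field_simp
  have hδ2 : δ ≤ 1 := (hδ1.trans_le (min_le_left _ _)).le
  have hη : K * (o + δ) ≤ σ := by
    have h1 : δ ≤ σ / (2 * K) := (hδ1.trans_le (min_le_right _ _)).le
    rw [le_div_iff₀ (by positivity)] at h1
    rw [div_lt_iff₀ hσ] at hω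
    have h2 : K * o ≤ σ / 2 := by
      have := mul_le_mul_of_nonneg_left hω.le ho.le
      have e : o * (ω * σ) = σ := by rw [← mul_assoc, hoω, one_mul]
      linarith
    linarith
  have hη0 : 0 ≤ K * (o + δ) := by positivity
  have hη2 : (K * (o + δ)) ^ 2 ≤ σ ^ 2 := pow_le_pow_left₀ hη0 hη 2
  have hK1 : A * (1 + α) * o ≤ K * (o + δ) := by
    rw [hKe]
    have : 0 ≤ A * (1 + α) * δ + (G + k * (A * (1 + α)) + A * α * (1 + G)) * (o + δ) := by positivity
    nlinarith
  -- the new variables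
  obtain ⟨q1, hq1⟩ : ∃ q1 : ℝ → ℝ, q1 = fun t => x t - γ₁ (δ * t) := ⟨_, rfl⟩
  obtain ⟨q2, hq2⟩ : ∃ q2 : ℝ → ℝ, q2 = fun t => y t - γ₂ (δ * t) := ⟨_, rfl⟩
  obtain ⟨p1, hp1⟩ : ∃ p1 : ℝ → ℝ, p1 = fun t => A * o * sin (ω * t) +
    A * α / 2 * o * (sin (2 * (ω * t)) * q1 t - cos (2 * (ω * t)) * q2 t) := ⟨_, rfl⟩
  obtain ⟨p2, hp2⟩ : ∃ p2 : ℝ → ℝ, p2 = fun t => A * o * (-cos (ω * t)) +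
    A * α / 2 * o * (-cos (2 * (ω * t)) * q1 t - sin (2 * (ω * t)) * q2 t) := ⟨_, rfl⟩
  have hpb : ∀ t, |q1 t| ≤ 1 → |q2 t| ≤ 1 →
      |p1 t| ≤ A * (1 + α) * o ∧ |p2 t| ≤ A * (1 + α) * o := by
    intro t h1 h2
    rw [hp1, hp2]
    exact ⟨p_bound hA hα ho (abs_sin_le_one _) (abs_sin_le_one _) (abs_cos_le_one _) h1 h2,
      p_bound hA hα ho (by rw [abs_neg]; exact abs_cos_le_one _)
        (by rw [abs_neg]; exact abs_cos_le_one _) (abs_sin_le_one _) h1 h2⟩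
  obtain ⟨w1, hw1⟩ : ∃ w1 : ℝ → ℝ, w1 = fun t => vx t + p1 t := ⟨_, rfl⟩
  obtain ⟨w2, hw2⟩ : ∃ w2 : ℝ → ℝ, w2 = fun t => vy t + p2 t := ⟨_, rfl⟩
  obtain ⟨V, hV⟩ : ∃ V : ℝ → ℝ, V = fun t =>
    (b * q1 t ^ 2 + w1 t ^ 2 + ε * (q1 t * w1 t)) + (b * q2 t ^ 2 + w2 t ^ 2 + ε * (q2 t * w2 t)) :=
    ⟨_, rfl⟩
  -- derivatives
  have hmem : ∀ t ∈ Icc (0:ℝ) (1 / δ), δ * t ∈ Icc (0:ℝ) 1 := by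
    intro t ht
    refine ⟨mul_nonneg hδ.le ht.1, ?_⟩
    have := mul_le_mul_of_nonneg_left ht.2 hδ.le
    rwa [mul_one_div_cancel hδ.ne'] at this
  have hdγ : ∀ γ g : ℝ → ℝ, (∀ s ∈ Icc (0:ℝ) 1, HasDerivWithinAt γ (g s) (Icc 0 1) s) →
      ∀ t ∈ Icc (0:ℝ) (1 / δ),
        HasDerivWithinAt (fun t => γ (δ * t)) (δ * g (δ * t)) (Icc 0 (1 / δ)) t := by
    intro γ g h t ht
    have h1 : HasDerivWithinAt (fun t : ℝ => δ * t) δ (Icc 0 (1 / δ)) t := by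
      simpa using ((hasDerivAt_id t).const_mul δ).hasDerivWithinAt
    have := (h (δ * t) (hmem t ht)).comp t h1 hmem
    rw [mul_comm]
    exact this
  have hdq1 : ∀ t ∈ Icc (0:ℝ) (1 / δ),
      HasDerivWithinAt q1 (dx t - δ * g₁ (δ * t)) (Icc 0 (1 / δ)) t := fun t ht => by
    rw [hq1]; exact (hder t ht).1.hasDerivWithinAt.sub (hdγ _ _ hγ₁ t ht)
  have hdq2 : ∀ t ∈ Icc (0:ℝ) (1 / δ),
      HasDerivWithinAt q2 (dy t - δ * g₂ (δ * t)) (Icc 0 (1 / δ)) t := fun t ht => by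
    rw [hq2]; exact (hder t ht).2.2.1.hasDerivWithinAt.sub (hdγ _ _ hγ₂ t ht)
  have hωt : ∀ t : ℝ, HasDerivAt (fun t : ℝ => ω * t) ω t := fun t => by
    simpa using (hasDerivAt_id t).const_mul ω
  have h2ωt : ∀ t : ℝ, HasDerivAt (fun t : ℝ => 2 * (ω * t)) (2 * ω) t := fun t => 
    (hωt t).const_mul 2
  have hdw1 : ∀ t ∈ Icc (0:ℝ) (1 / δ),
      HasDerivWithinAt w1 (ax t + (A * cos (ω * t) +
        A * α * (cos (2 * (ω * t)) * q1 t + sin (2 * (ω * t)) * q2 t) +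
        A * α / 2 * o * (sin (2 * (ω * t)) * (dx t - δ * g₁ (δ * t))
          - cos (2 * (ω * t)) * (dy t - δ * g₂ (δ * t))))) (Icc 0 (1 / δ)) t := fun t ht => by
    have hs := (hωt t).sin.hasDerivWithinAt (s := Icc 0 (1 / δ))
    have hs2 := (h2ωt t).sin.hasDerivWithinAt (s := Icc 0 (1 / δ))
    have hc2 := (h2ωt t).cos.hasDerivWithinAt (s := Icc 0 (1 / δ))
    have := (hder t ht).2.1.hasDerivWithinAt.add ((hs.const_mul (A * o)).add
      (((hs2.mul (hdq1 t ht)).sub (hc2.mul (hdq2 t ht))).const_mul (A * α / 2 * o)))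
    rw [hw1, hp1]
    refine HasDerivWithinAt.congr_deriv this ?_
    linear_combination (A * cos (ω * t) +
      A * α * (cos (2 * (ω * t)) * q1 t + sin (2 * (ω * t)) * q2 t)) * hoω
  have hdw2 : ∀ t ∈ Icc (0:ℝ) (1 / δ),
      HasDerivWithinAt w2 (ay t + (A * sin (ω * t) +
        A * α * (sin (2 * (ω * t)) * q1 t - cos (2 * (ω * t)) * q2 t) +
        A * α / 2 * o * (-cos (2 * (ω * t)) * (dx t - δ * g₁ (δ * t))
          - sin (2 * (ω * t)) * (dy t - δ * g₂ (δ * t))))) (Icc 0 (1 / δ)) t := fun t ht => by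
    have hs := (hωt t).cos.neg.hasDerivWithinAt (s := Icc 0 (1 / δ))
    have hs2 := (h2ωt t).sin.hasDerivWithinAt (s := Icc 0 (1 / δ))
    have hc2 := (h2ωt t).cos.neg.hasDerivWithinAt (s := Icc 0 (1 / δ))
    have := (hder t ht).2.2.2.hasDerivWithinAt.add ((hs.const_mul (A * o)).add
      (((hc2.mul (hdq1 t ht)).sub (hs2.mul (hdq2 t ht))).const_mul (A * α / 2 * o)))
    rw [hw2, hp2]
    refine HasDerivWithinAt.congr_deriv this ?_
    simp only [Pi.neg_apply]
    linear_combination (A * sin (ω * t) +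
      A * α * (sin (2 * (ω * t)) * q1 t - cos (2 * (ω * t)) * q2 t)) * hoω
  obtain ⟨d1, hd1⟩ : ∃ d1 : ℝ → ℝ, d1 = fun t => dx t - δ * g₁ (δ * t) := ⟨_, rfl⟩
  obtain ⟨d2, hd2⟩ : ∃ d2 : ℝ → ℝ, d2 = fun t => dy t - δ * g₂ (δ * t) := ⟨_, rfl⟩
  obtain ⟨e1, he1⟩ : ∃ e1 : ℝ → ℝ, e1 = fun t => ax t + (A * cos (ω * t) +
        A * α * (cos (2 * (ω * t)) * q1 t + sin (2 * (ω * t)) * q2 t) +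
        A * α / 2 * o * (sin (2 * (ω * t)) * (dx t - δ * g₁ (δ * t))
          - cos (2 * (ω * t)) * (dy t - δ * g₂ (δ * t)))) := ⟨_, rfl⟩
  obtain ⟨e2, he2⟩ : ∃ e2 : ℝ → ℝ, e2 = fun t => ay t + (A * sin (ω * t) +
        A * α * (sin (2 * (ω * t)) * q1 t - cos (2 * (ω * t)) * q2 t) +
        A * α / 2 * o * (-cos (2 * (ω * t)) * (dx t - δ * g₁ (δ * t))
          - sin (2 * (ω * t)) * (dy t - δ * g₂ (δ * t)))) := ⟨_, rfl⟩
  have hdV : ∀ t ∈ Icc (0:ℝ) (1 / δ), HasDerivWithinAt V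
      ((b * (2 * q1 t * d1 t) + 2 * w1 t * e1 t + ε * (d1 t * w1 t + q1 t * e1 t)) +
       (b * (2 * q2 t * d2 t) + 2 * w2 t * e2 t + ε * (d2 t * w2 t + q2 t * e2 t)))
      (Icc 0 (1 / δ)) t := by
    intro t ht
    have a1 : HasDerivWithinAt q1 (d1 t) (Icc 0 (1 / δ)) t := by rw [hd1]; exact hdq1 t ht
    have a2 : HasDerivWithinAt q2 (d2 t) (Icc 0 (1 / δ)) t := by rw [hd2]; exact hdq2 t ht
    have a3 : HasDerivWithinAt w1 (e1 t) (Icc 0 (1 / δ)) t := by rw [he1]; exact hdw1 t ht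
    have a4 : HasDerivWithinAt w2 (e2 t) (Icc 0 (1 / δ)) t := by rw [he2]; exact hdw2 t ht
    have := ((((a1.pow 2).const_mul b).add (a3.pow 2)).add ((a1.mul a3).const_mul ε)).add
      ((((a2.pow 2).const_mul b).add (a4.pow 2)).add ((a2.mul a4).const_mul ε))
    rw [hV]
    refine HasDerivWithinAt.congr_deriv this ?_
    simp
  -- consequences of V ≤ R
  have hVR : ∀ t, V t ≤ R → (q1 t ^ 2 + q2 t ^ 2 ≤ R / c) ∧ |q1 t| ≤ ρ / 2 ∧ |q2 t| ≤ ρ / 2 ∧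
      |vx t| ≤ ρ ∧ |vy t| ≤ ρ := by
    intro t ht
    have h1 := hVl (q1 t) (w1 t)
    have h2 := hVl (q2 t) (w2 t)
    have hsum : c * (q1 t ^ 2 + w1 t ^ 2 + q2 t ^ 2 + w2 t ^ 2) ≤ R := by
      rw [hV] at ht; simp only at ht; linarith
    have hsum2 : q1 t ^ 2 + w1 t ^ 2 + q2 t ^ 2 + w2 t ^ 2 ≤ (ρ / 2) ^ 2 := by
      rw [hRe] at hsum; exact le_of_mul_le_mul_left hsum hc
    have hρ2 : 0 ≤ ρ / 2 := by positivity
    have n1 := sq_nonneg (q1 t)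
    have n2 := sq_nonneg (q2 t)
    have n3 := sq_nonneg (w1 t)
    have n4 := sq_nonneg (w2 t)
    have c1 : |q1 t| ≤ ρ / 2 := abs_le_of_sq_le_sq (by linarith) hρ2
    have c2 : |q2 t| ≤ ρ / 2 := abs_le_of_sq_le_sq (by linarith) hρ2
    have c3 : |w1 t| ≤ ρ / 2 := abs_le_of_sq_le_sq (by linarith) hρ2
    have c4 : |w2 t| ≤ ρ / 2 := abs_le_of_sq_le_sq (by linarith) hρ2
    obtain ⟨b1, b2⟩ := hpb t (by linarith) (by linarith)
    refine ⟨?_, c1, c2, ?_, ?_⟩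
    · rw [le_div_iff₀ hc]
      have hcn : 0 ≤ c * (w1 t ^ 2 + w2 t ^ 2) := mul_nonneg hc.le (add_nonneg n3 n4)
      linarith only [hsum, hcn]
    · have : vx t = w1 t - p1 t := by rw [hw1]; ring
      rw [this]
      exact (abs_sub _ _).trans (by linarith)
    · have : vy t = w2 t - p2 t := by rw [hw2]; ring
      rw [this]
      exact (abs_sub _ _).trans (by linarith)
  have hδ0 : (0:ℝ) ≤ 1 / δ := by positivity
  have hmain : ∀ ⦃t⦄, t ∈ Icc (0:ℝ) (1 / δ) → V t ≤ R := by
    refine image_le_of_deriv_right_lt_deriv_boundary' (B := fun _ => R) (B' := fun _ => 0)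
      (fun t ht => (hdV t ht).continuousWithinAt) (fun t ht =>
        (hdV t ⟨ht.1, ht.2.le⟩).mono_of_mem_nhdsWithin (Icc_mem_nhdsGE_of_mem ht)) ?_
      continuousOn_const (fun t _ => hasDerivWithinAt_const _ _ _) ?_
    · -- initial
      have i1 := hinit.trans (min_le_left _ _)
      have i2 := hinit.trans (min_le_right _ _)
      have i1' : x 0 ^ 2 + vx 0 ^ 2 + y 0 ^ 2 + vy 0 ^ 2 ≤ 1 := by
        have := (Real.sqrt_le_left (by norm_num)).1 i1
        linarith
      have i2' : x 0 ^ 2 + vx 0 ^ 2 + y 0 ^ 2 + vy 0 ^ 2 ≤ R / (4 * C) :=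
        (Real.sqrt_le_sqrt_iff (by positivity)).1 i2
      have hx0 : q1 0 = x 0 := by rw [hq1]; simp [hγ₁0]
      have hy0 : q2 0 = y 0 := by rw [hq2]; simp [hγ₂0]
      have n1 := sq_nonneg (x 0)
      have n2 := sq_nonneg (y 0)
      have n3 := sq_nonneg (vx 0)
      have n4 := sq_nonneg (vy 0)
      obtain ⟨b1, b2⟩ := hpb 0 (by rw [hx0]; exact abs_le_of_sq_le_sq (by linarith) (by norm_num))
        (by rw [hy0]; exact abs_le_of_sq_le_sq (by linarith) (by norm_num))
      have b1' : p1 0 ^ 2 ≤ σ ^ 2 := sq_le_sq' (by linarith [(abs_le.1 b1).1]) (by linarith [(abs_le.1 b1).2])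
      have b2' : p2 0 ^ 2 ≤ σ ^ 2 := sq_le_sq' (by linarith [(abs_le.1 b2).1]) (by linarith [(abs_le.1 b2).2])
      have h1 := hVu (q1 0) (w1 0)
      have h2 := hVu (q2 0) (w2 0)
      have f1 : w1 0 ^ 2 ≤ 2 * vx 0 ^ 2 + 2 * p1 0 ^ 2 := by
        rw [hw1]; exact sq_add_le' _ _
      have f2 : w2 0 ^ 2 ≤ 2 * vy 0 ^ 2 + 2 * p2 0 ^ 2 := by
        rw [hw2]; exact sq_add_le' _ _
      rw [le_div_iff₀ (by positivity)] at i2' hσ3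
      have f3 : q1 0 ^ 2 + w1 0 ^ 2 + (q2 0 ^ 2 + w2 0 ^ 2) ≤
          2 * (x 0 ^ 2 + vx 0 ^ 2 + y 0 ^ 2 + vy 0 ^ 2) + 4 * σ ^ 2 := by
        rw [hx0, hy0]; linarith
      have f4 := mul_le_mul_of_nonneg_left f3 hC.le
      have : V 0 = (b * q1 0 ^ 2 + w1 0 ^ 2 + ε * (q1 0 * w1 0)) +
        (b * q2 0 ^ 2 + w2 0 ^ 2 + ε * (q2 0 * w2 0)) := by rw [hV]
      rw [this]
      linarith only [f4, h1, h2, i2', hσ3]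
    · intro t ht hVt
      have ht' : t ∈ Icc (0:ℝ) (1 / δ) := ⟨ht.1, ht.2.le⟩
      obtain ⟨hq, c1, c2, c3, c4⟩ := hVR t hVt.le
      have c1r : |q1 t| ≤ ρ := by linarith only [c1, hρ]
      have c2r : |q2 t| ≤ ρ := by linarith only [c2, hρ]
      have c18 := c1r.trans hρ8
      have c28 := c2r.trans hρ8
      have h81 : (1 / 8 : ℝ) ≤ 1 := by norm_num
      have hqx : x t - γ₁ (δ * t) = q1 t := by rw [hq1]
      have hqy : y t - γ₂ (δ * t) = q2 t := by rw [hq2]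
      obtain ⟨k1, k2, k3, k4⟩ := hbox t ht' (by rw [hqx]; exact c18) (by rw [hqy]; exact c28)
        (c3.trans hρ8) (c4.trans hρ8)
      have hzx : x t - cos (ω * t) - γ₁ (δ * t) = q1 t - cos (ω * t) := by rw [← hqx]; ring
      have hzy : y t - sin (ω * t) - γ₂ (δ * t) = q2 t - sin (ω * t) := by rw [← hqy]; ring
      rw [hzx, hzy] at k3 k4
      obtain ⟨b1, b2⟩ := hpb t (c18.trans h81) (c28.trans h81)
      have r1 := hrem (cos (ω * t)) (sin (ω * t)) (q1 t) (q2 t) (Real.cos_sq_add_sin_sq _)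
        c1r c2r
      have r2 := hrem (sin (ω * t)) (cos (ω * t)) (q2 t) (q1 t) (Real.sin_sq_add_cos_sq _)
        c2r c1r
      rw [add_comm ((q2 t - _) ^ 2), add_comm |q2 t|] at r2
      have hg1 := hg₁ _ (hmem t ht')
      have hg2 := hg₂ _ (hmem t ht')
      have hs2 := Real.sin_two_mul (ω * t)
      have hc2 := Real.cos_two_mul' (ω * t)
      have hmb : ∀ v g : ℝ, |v| ≤ ρ → |g| ≤ G → |v - δ * g| ≤ 1 + G := by
        intro v g hv hg
        calc |v - δ * g| ≤ |v| + |δ * g| := abs_sub _ _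
          _ = |v| + δ * |g| := by rw [abs_mul, abs_of_pos hδ]
          _ ≤ 1 + 1 * G := by gcongr; exact hv.trans (hρ8.trans h81)
          _ = 1 + G := by ring
      have X1 := tri_bound (abs_sin_le_one (2 * (ω * t))) (abs_cos_le_one (2 * (ω * t)))
        (hmb _ _ c3 hg1) (hmb _ _ c4 hg2)
      have X2 := tri_bound (S := -cos (2 * (ω * t))) (by rw [abs_neg]; exact abs_cos_le_one _)
        (abs_sin_le_one (2 * (ω * t))) (hmb _ _ c3 hg1) (hmb _ _ c4 hg2)
      set H1 := (q1 t - cos (ω * t)) / ((q1 t - cos (ω * t)) ^ 2 + (q2 t - sin (ω * t)) ^ 2) ^ α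
        - (-cos (ω * t) + (1 - α) * q1 t - α * ((cos (ω * t) ^ 2 - sin (ω * t) ^ 2) * q1 t
          + 2 * sin (ω * t) * cos (ω * t) * q2 t)) with hH1
      set H2 := (q2 t - sin (ω * t)) / ((q1 t - cos (ω * t)) ^ 2 + (q2 t - sin (ω * t)) ^ 2) ^ α
        - (-sin (ω * t) + (1 - α) * q2 t - α * ((sin (ω * t) ^ 2 - cos (ω * t) ^ 2) * q2 t
          + 2 * cos (ω * t) * sin (ω * t) * q1 t)) with hH2
      have B1 := ne_bound (h := H1) hA hk hα ho hδ hG hg1 b1 X1 hKe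
      have B2 := ne_bound (h := H2) hA hk hα ho hδ hG hg2 b2 X2 hKe
      have hHsq : ∀ H : ℝ, |H| ≤ κ * (|q1 t| + |q2 t|) → H ^ 2 ≤ 2 * κ ^ 2 * (R / c) := by
        intro H h
        have h1 : H ^ 2 ≤ (κ * (|q1 t| + |q2 t|)) ^ 2 := sq_le_sq' (abs_le.1 h).1 (abs_le.1 h).2
        have h2 : (|q1 t| + |q2 t|) ^ 2 ≤ 2 * (q1 t ^ 2 + q2 t ^ 2) := by
          exact sq_add_abs_le _ _
        calc H ^ 2 ≤ κ ^ 2 * (|q1 t| + |q2 t|) ^ 2 := by rw [← mul_pow]; exact h1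
          _ ≤ κ ^ 2 * (2 * (R / c)) := by gcongr; exact h2.trans (mul_le_mul_of_nonneg_left hq (by norm_num))
          _ = _ := by ring
      have s1 := hHsq H1 r1
      have s2 := hHsq H2 r2
      have hbig : 2 * A ^ 2 * H1 ^ 2 + 2 * A ^ 2 * H2 ^ 2 ≤ μ ^ 2 * R / 4 := by
        calc _ ≤ 2 * A ^ 2 * (2 * κ ^ 2 * (R / c)) + 2 * A ^ 2 * (2 * κ ^ 2 * (R / c)) := by gcongr
          _ = (8 * A ^ 2 * κ ^ 2) * (R / c) := by ring
          _ ≤ (c * μ ^ 2 / 4) * (R / c) := by gcongr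
          _ = _ := by field_simp
      have D1 : d1 t = w1 t + (-p1 t - δ * g₁ (δ * t)) := by
        rw [hd1, hw1]; simp only [k1]; ring
      have D2 : d2 t = w2 t + (-p2 t - δ * g₂ (δ * t)) := by
        rw [hd2, hw2]; simp only [k2]; ring
      have E1 : e1 t = -b * q1 t - k * w1 t + (A * H1 + k * p1 t + A * α / 2 * o *
          (sin (2 * (ω * t)) * (vx t - δ * g₁ (δ * t)) - cos (2 * (ω * t)) * (vy t - δ * g₂ (δ * t)))) := by
        rw [he1, hw1]; simp only [k1, k2, k3]; rw [hH1, hbe, mul_div_assoc, hs2, hc2]; ring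
      have E2 : e2 t = -b * q2 t - k * w2 t + (A * H2 + k * p2 t + A * α / 2 * o *
          (-cos (2 * (ω * t)) * (vx t - δ * g₁ (δ * t)) - sin (2 * (ω * t)) * (vy t - δ * g₂ (δ * t)))) := by
        rw [he2, hw2]; simp only [k1, k2, k4]; rw [hH2, hbe, mul_div_assoc, hs2, hc2]; ring
      have F1 := hVd (q1 t) (w1 t) (-p1 t - δ * g₁ (δ * t)) (A * H1 + k * p1 t + A * α / 2 * o *
          (sin (2 * (ω * t)) * (vx t - δ * g₁ (δ * t)) - cos (2 * (ω * t)) * (vy t - δ * g₂ (δ * t))))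
      have F2 := hVd (q2 t) (w2 t) (-p2 t - δ * g₂ (δ * t)) (A * H2 + k * p2 t + A * α / 2 * o *
          (-cos (2 * (ω * t)) * (vx t - δ * g₁ (δ * t)) - sin (2 * (ω * t)) * (vy t - δ * g₂ (δ * t))))
      rw [← D1, ← E1] at F1
      rw [← D2, ← E2] at F2
      have hVt' : (b * q1 t ^ 2 + w1 t ^ 2 + ε * (q1 t * w1 t)) +
        (b * q2 t ^ 2 + w2 t ^ 2 + ε * (q2 t * w2 t)) = R := by rw [← hVt, hV]
      have hfin := mul_le_mul_of_nonneg_left (add_le_add B1 B2) (inv_pos.2 hμ).le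
      have hfin2 : μ⁻¹ * (3 * (K * (o + δ)) ^ 2 + 2 * A ^ 2 * H1 ^ 2 + (3 * (K * (o + δ)) ^ 2 + 2 * A ^ 2 * H2 ^ 2))
          ≤ μ * R / 2 := by
        calc _ ≤ μ⁻¹ * (μ ^ 2 * R / 2) := by
              gcongr
              linarith only [hbig, hη2, hσ2]
          _ = _ := by field_simp
      have hpos : 0 < μ * R := by positivity
      have hVm : μ * ((b * q1 t ^ 2 + w1 t ^ 2 + ε * (q1 t * w1 t)) +
        (b * q2 t ^ 2 + w2 t ^ 2 + ε * (q2 t * w2 t))) = μ * R := by rw [hVt']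
      linarith only [F1, F2, hfin, hfin2, hpos, hVm]
  intro t ht
  obtain ⟨-, c1, c2, c3, c4⟩ := hVR t (hmain ht)
  have hqx : x t - γ₁ (δ * t) = q1 t := by rw [hq1]
  have hqy : y t - γ₂ (δ * t) = q2 t := by rw [hq2]
  rw [hqx, hqy]
  exact ⟨by linarith, by linarith, by linarith, by linarith⟩

/-- Truncation to `[-1/8, 1/8]`. -/
noncomputable def clip (u : ℝ) : ℝ := max (-(1 / 8)) (min (1 / 8) u)

theorem clip_abs (u : ℝ) : |clip u| ≤ 1 / 8 := by
  unfold clip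
  rw [abs_le]
  exact ⟨le_max_left _ _, max_le (by norm_num) (min_le_left _ _)⟩

theorem clip_of_abs {u : ℝ} (h : |u| ≤ 1 / 8) : clip u = u := by
  unfold clip
  rw [abs_le] at h
  rw [min_eq_right h.2, max_eq_right h.1]

theorem clip_lip (u v : ℝ) : |clip u - clip v| ≤ |u - v| := by
  unfold clip
  refine (abs_max_sub_max_le_max _ _ _ _).trans (max_le (by simp) ?_)
  exact (abs_min_sub_min_le_max _ _ _ _).trans (max_le (by simp) le_rfl)

theorem clip_cont : Continuous clip := by unfold clip; fun_prop

theorem D_mem {c s a b : ℝ} (hcs : c ^ 2 + s ^ 2 = 1) (ha : |a| ≤ 1 / 8) (hb : |b| ≤ 1 / 8) :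
    (a - c) ^ 2 + (b - s) ^ 2 ∈ Icc (1 / 4 : ℝ) 4 := by
  rw [abs_le] at ha hb
  constructor
  · nlinarith [sq_nonneg (4 * a - c), sq_nonneg (4 * b - s), sq_nonneg (4 * a + c), sq_nonneg (4 * b + s)]
  · nlinarith [sq_nonneg (a + c), sq_nonneg (b + s)]

theorem frc_lip (A α : ℝ) (hA : 0 < A) : ∃ L ≥ (0:ℝ), ∀ c s a b a' b' : ℝ, c ^ 2 + s ^ 2 = 1 →
    |a| ≤ 1 / 8 → |b| ≤ 1 / 8 → |a'| ≤ 1 / 8 → |b'| ≤ 1 / 8 →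
    |A * (a - c) / ((a - c) ^ 2 + (b - s) ^ 2) ^ α| ≤ L ∧
    |A * (a - c) / ((a - c) ^ 2 + (b - s) ^ 2) ^ α - A * (a' - c) / ((a' - c) ^ 2 + (b' - s) ^ 2) ^ α|
      ≤ L * (|a - a'| + |b - b'|) := by
  have hcd : ContDiffOn ℝ 1 (fun u : ℝ => (u ^ α)⁻¹) (Icc (1 / 4) 4) := by
    intro u hu
    have hu0 : 0 < u := lt_of_lt_of_le (by norm_num) hu.1
    exact ((Real.contDiffAt_rpow_const_of_ne hu0.ne').inv
      (Real.rpow_pos_of_pos hu0 _).ne').contDiffWithinAt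
  obtain ⟨K, hK⟩ := hcd.exists_lipschitzOnWith (by norm_num) (convex_Icc _ _) isCompact_Icc
  obtain ⟨B, hB⟩ := isCompact_Icc.exists_bound_of_continuousOn hcd.continuousOn
  have hB0 : 0 ≤ B := (norm_nonneg _).trans (hB 1 (by norm_num))
  refine ⟨2 * A * (B + 8 * K), by positivity, ?_⟩
  intro c s a b a' b' hcs ha hb ha' hb'
  have hc : |c| ≤ 1 := abs_le_one_iff_mul_self_le_one.2 (by nlinarith)
  have hs : |s| ≤ 1 := abs_le_one_iff_mul_self_le_one.2 (by nlinarith)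
  have hD := D_mem hcs ha hb
  have hD' := D_mem hcs ha' hb'
  have hk := hK.dist_le_mul _ hD _ hD'
  have hb1 := hB _ hD
  rw [Real.dist_eq, Real.dist_eq] at hk
  rw [Real.norm_eq_abs] at hb1
  have hz : ∀ u e : ℝ, |u| ≤ 1 / 8 → |e| ≤ 1 → |u - e| ≤ 2 := fun u e hu he =>
    (abs_sub _ _).trans (by linarith)
  have hDD : |(a - c) ^ 2 + (b - s) ^ 2 - ((a' - c) ^ 2 + (b' - s) ^ 2)|
      ≤ 4 * (|a - a'| + |b - b'|) := by
    have e : (a - c) ^ 2 + (b - s) ^ 2 - ((a' - c) ^ 2 + (b' - s) ^ 2)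
      = (a - a') * ((a - c) + (a' - c)) + (b - b') * ((b - s) + (b' - s)) := by ring
    rw [e]
    have f1 : |(a - c) + (a' - c)| ≤ 4 := (abs_add_le _ _).trans (by linarith [hz a c ha hc, hz a' c ha' hc])
    have f2 : |(b - s) + (b' - s)| ≤ 4 := (abs_add_le _ _).trans (by linarith [hz b s hb hs, hz b' s hb' hs])
    calc _ ≤ |a - a'| * |(a - c) + (a' - c)| + |b - b'| * |(b - s) + (b' - s)| := by
          rw [← abs_mul, ← abs_mul]; exact abs_add_le _ _
      _ ≤ |a - a'| * 4 + |b - b'| * 4 := by gcongr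
      _ = _ := by ring
  simp only [div_eq_mul_inv]
  generalize (((a - c) ^ 2 + (b - s) ^ 2) ^ α)⁻¹ = P at *
  generalize (((a' - c) ^ 2 + (b' - s) ^ 2) ^ α)⁻¹ = P' at *
  have hz1 := hz a c ha hc
  have hz2 := hz a' c ha' hc
  constructor
  · rw [abs_mul, abs_mul, abs_of_pos hA]
    calc A * |a - c| * |P| ≤ A * 2 * B := by gcongr
      _ ≤ _ := by
        have : 0 ≤ A * K := by positivity
        linarith
  · have e : A * (a - c) * P - A * (a' - c) * P' = A * ((a - a') * P + (a' - c) * (P - P')) := by ring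
    rw [e, abs_mul, abs_of_pos hA]
    have f : |(a - a') * P + (a' - c) * (P - P')| ≤ |a - a'| * B + 2 * (K * (4 * (|a - a'| + |b - b'|))) := by
      calc _ ≤ |a - a'| * |P| + |a' - c| * |P - P'| := by
            rw [← abs_mul, ← abs_mul]; exact abs_add_le _ _
        _ ≤ _ := by
          gcongr
          exact hk.trans (by gcongr)
    calc _ ≤ A * (|a - a'| * B + 2 * (K * (4 * (|a - a'| + |b - b'|)))) := by gcongr
      _ ≤ _ := by
        have h1 : 0 ≤ A * B * |a - a'| := by positivity
        have h2 : 0 ≤ A * B * |b - b'| := by positivity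
        have h3 : 0 ≤ A * K * |a - a'| := by positivity
        have h4 : 0 ≤ A * K * |b - b'| := by positivity
        linarith

theorem exist_mod (A k α ω T : ℝ) (hA : 0 < A) (hk : 0 < k) (hT : 0 < T) (Γ₁ Γ₂ : ℝ → ℝ)
    (hΓ₁ : Continuous Γ₁) (hΓ₂ : Continuous Γ₂) (x0 vx0 y0 vy0 : ℝ) :
    ∃ x vx y vy : ℝ → ℝ, x 0 = x0 ∧ vx 0 = vx0 ∧ y 0 = y0 ∧ vy 0 = vy0 ∧
      ∀ t ∈ Icc (0 : ℝ) T,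
        HasDerivAt x (clip (vx t)) t ∧
        HasDerivAt vx (A * (clip (x t - Γ₁ t) - cos (ω * t)) /
          ((clip (x t - Γ₁ t) - cos (ω * t)) ^ 2 + (clip (y t - Γ₂ t) - sin (ω * t)) ^ 2) ^ α
          - k * clip (vx t)) t ∧
        HasDerivAt y (clip (vy t)) t ∧
        HasDerivAt vy (A * (clip (y t - Γ₂ t) - sin (ω * t)) /
          ((clip (x t - Γ₁ t) - cos (ω * t)) ^ 2 + (clip (y t - Γ₂ t) - sin (ω * t)) ^ 2) ^ α
          - k * clip (vy t)) t := by
  obtain ⟨L, hL, hfr⟩ := frc_lip A α hA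
  obtain ⟨f, hf⟩ : ∃ f : ℝ → (ℝ × ℝ × ℝ × ℝ) → (ℝ × ℝ × ℝ × ℝ), f = fun t X =>
      (clip X.2.1,
       A * (clip (X.1 - Γ₁ t) - cos (ω * t)) /
          ((clip (X.1 - Γ₁ t) - cos (ω * t)) ^ 2 + (clip (X.2.2.1 - Γ₂ t) - sin (ω * t)) ^ 2) ^ α
          - k * clip X.2.1,
       clip X.2.2.2,
       A * (clip (X.2.2.1 - Γ₂ t) - sin (ω * t)) /
          ((clip (X.1 - Γ₁ t) - cos (ω * t)) ^ 2 + (clip (X.2.2.1 - Γ₂ t) - sin (ω * t)) ^ 2) ^ α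
          - k * clip X.2.2.2) := ⟨_, rfl⟩
  have hDpos : ∀ (t a b : ℝ), 0 < (clip a - cos (ω * t)) ^ 2 + (clip b - sin (ω * t)) ^ 2 :=
    fun t a b => lt_of_lt_of_le (by norm_num) (D_mem (cos_sq_add_sin_sq _) (clip_abs a) (clip_abs b)).1
  have hLip : ∀ t, LipschitzWith (⟨2 * L + k + 1, by positivity⟩) (f t) := by
    intro t
    refine LipschitzWith.of_dist_le_mul fun X Y => ?_
    obtain ⟨x, v, y, w⟩ := X
    obtain ⟨x', v', y', w'⟩ := Y
    set d := dist (x, v, y, w) (x', v', y', w') with hd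
    have hdd : d = max |x - x'| (max |v - v'| (max |y - y'| |w - w'|)) := by
      rw [hd]; simp [Prod.dist_eq, Real.dist_eq]
    have d1 : |x - x'| ≤ d := by rw [hdd]; exact le_max_left _ _
    have d2 : |v - v'| ≤ d := by rw [hdd]; exact (le_max_left _ _).trans (le_max_right _ _)
    have d3 : |y - y'| ≤ d := by
      rw [hdd]; exact (le_max_left _ _).trans ((le_max_right _ _).trans (le_max_right _ _))
    have d4 : |w - w'| ≤ d := by
      rw [hdd]; exact (le_max_right _ _).trans ((le_max_right _ _).trans (le_max_right _ _))
    have d0 : 0 ≤ d := dist_nonneg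
    have hLd : 0 ≤ L * d := mul_nonneg hL d0
    have hkd : 0 ≤ k * d := mul_nonneg hk.le d0
    have q1 : |clip (x - Γ₁ t) - clip (x' - Γ₁ t)| ≤ d := (clip_lip _ _).trans (by simpa using d1)
    have q2 : |clip (y - Γ₂ t) - clip (y' - Γ₂ t)| ≤ d := (clip_lip _ _).trans (by simpa using d3)
    have v1 : |clip v - clip v'| ≤ d := (clip_lip _ _).trans d2
    have v2 : |clip w - clip w'| ≤ d := (clip_lip _ _).trans d4
    have F1 := (hfr (cos (ω * t)) (sin (ω * t)) (clip (x - Γ₁ t)) (clip (y - Γ₂ t))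
      (clip (x' - Γ₁ t)) (clip (y' - Γ₂ t)) (cos_sq_add_sin_sq _) (clip_abs _) (clip_abs _)
      (clip_abs _) (clip_abs _)).2
    have F2 := (hfr (sin (ω * t)) (cos (ω * t)) (clip (y - Γ₂ t)) (clip (x - Γ₁ t))
      (clip (y' - Γ₂ t)) (clip (x' - Γ₁ t)) (sin_sq_add_cos_sq _) (clip_abs _) (clip_abs _)
      (clip_abs _) (clip_abs _)).2
    rw [add_comm ((clip (y - Γ₂ t) - _) ^ 2), add_comm ((clip (y' - Γ₂ t) - _) ^ 2)] at F2
    have G : ∀ P P' u u' p q : ℝ, |P - P'| ≤ L * (p + q) → p ≤ d → q ≤ d → |u - u'| ≤ d →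
        |(P - k * u) - (P' - k * u')| ≤ (2 * L + k + 1) * d := by
      intro P P' u u' p q hP hp hq hu
      have e : (P - k * u) - (P' - k * u') = (P - P') - k * (u - u') := by ring
      rw [e]
      calc _ ≤ |P - P'| + |k * (u - u')| := abs_sub _ _
        _ = |P - P'| + k * |u - u'| := by rw [abs_mul, abs_of_pos hk]
        _ ≤ L * (d + d) + k * d := by
          gcongr
          exact hP.trans (by gcongr)
        _ ≤ _ := by linarith
    have hbig : d ≤ (2 * L + k + 1) * d := by linarith
    rw [hf]
    simp only [Prod.dist_eq, Real.dist_eq]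
    refine max_le (v1.trans hbig) (max_le ?_ (max_le (v2.trans hbig) ?_))
    · exact G _ _ _ _ _ _ F1 q1 q2 v1
    · exact G _ _ _ _ _ _ F2 q2 q1 v2
  have hbd : ∀ t X, ‖f t X‖ ≤ L + k + 1 := by
    intro t X
    obtain ⟨x, v, y, w⟩ := X
    have F1 := (hfr (cos (ω * t)) (sin (ω * t)) (clip (x - Γ₁ t)) (clip (y - Γ₂ t))
      0 0 (cos_sq_add_sin_sq _) (clip_abs _) (clip_abs _)
      (by norm_num) (by norm_num)).1
    have F2 := (hfr (sin (ω * t)) (cos (ω * t)) (clip (y - Γ₂ t)) (clip (x - Γ₁ t))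
      0 0 (sin_sq_add_cos_sq _) (clip_abs _) (clip_abs _)
      (by norm_num) (by norm_num)).1
    rw [add_comm ((clip (y - Γ₂ t) - _) ^ 2)] at F2
    have G : ∀ P u : ℝ, |P| ≤ L → |u| ≤ 1 / 8 → |P - k * u| ≤ L + k + 1 := by
      intro P u hP hu
      calc _ ≤ |P| + |k * u| := abs_sub _ _
        _ = |P| + k * |u| := by rw [abs_mul, abs_of_pos hk]
        _ ≤ L + k * (1 / 8) := by gcongr
        _ ≤ _ := by linarith
    rw [hf]
    simp only [Prod.norm_def, Real.norm_eq_abs]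
    refine max_le ?_ (max_le (G _ _ F1 (clip_abs _)) (max_le ?_ (G _ _ F2 (clip_abs _))))
    · exact (clip_abs _).trans (by linarith)
    · exact (clip_abs _).trans (by linarith)
  have hcont : ∀ X, Continuous (f · X) := by
    intro X
    have c1 : Continuous fun t => clip (X.1 - Γ₁ t) := clip_cont.comp (by fun_prop)
    have c2 : Continuous fun t => clip (X.2.2.1 - Γ₂ t) := clip_cont.comp (by fun_prop)
    have cD : Continuous fun t => ((clip (X.1 - Γ₁ t) - cos (ω * t)) ^ 2 +
        (clip (X.2.2.1 - Γ₂ t) - sin (ω * t)) ^ 2) ^ α :=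
      Continuous.rpow_const (by fun_prop) (fun t => Or.inl (hDpos t _ _).ne')
    have cn : ∀ t, ((clip (X.1 - Γ₁ t) - cos (ω * t)) ^ 2 +
        (clip (X.2.2.1 - Γ₂ t) - sin (ω * t)) ^ 2) ^ α ≠ 0 :=
      fun t => (Real.rpow_pos_of_pos (hDpos t _ _) _).ne'
    rw [hf]
    refine continuous_const.prodMk (Continuous.prodMk ?_ (continuous_const.prodMk ?_))
    · exact (Continuous.div (by fun_prop) cD cn).sub continuous_const
    · exact (Continuous.div (by fun_prop) cD cn).sub continuous_const
  have hPL : IsPicardLindelof f (tmin := -1) (tmax := T + 1) ⟨0, by constructor <;> linarith⟩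
      (x0, vx0, y0, vy0) (⟨(L + k + 1) * (T + 1), by positivity⟩) 0
      (⟨L + k + 1, by positivity⟩) (⟨2 * L + k + 1, by positivity⟩) :=
    { lipschitzOnWith := fun t _ => (hLip t).lipschitzOnWith
      continuousOn := fun X _ => (hcont X).continuousOn
      norm_le := fun t _ X _ => hbd t X
      mul_max_le := by
        have : max (T + 1 - 0) (0 - -1) = T + 1 := by
          rw [max_eq_left] <;> linarith
        simp only [NNReal.coe_zero, sub_zero]
        simp only [sub_zero] at this
        rw [this]
        exact le_refl ((L + k + 1) * (T + 1)) }
  obtain ⟨X, hX0, hX⟩ := hPL.exists_eq_forall_mem_Icc_hasDerivWithinAt₀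
  have hX0' : X 0 = (x0, vx0, y0, vy0) := hX0
  refine ⟨fun t => (X t).1, fun t => (X t).2.1, fun t => (X t).2.2.1, fun t => (X t).2.2.2,
    by simp [hX0'], by simp [hX0'], by simp [hX0'], by simp [hX0'], ?_⟩
  intro t ht
  have h : HasDerivAt X (f t (X t)) t :=
    (hX t ⟨by linarith [ht.1], by linarith [ht.2]⟩).hasDerivAt
      (Icc_mem_nhds (by linarith [ht.1]) (by linarith [ht.2]))
  have h2 : HasDerivAt (fun t => (X t).2) (f t (X t)).2 t :=
    (ContinuousLinearMap.snd ℝ ℝ (ℝ × ℝ × ℝ)).hasFDerivAt.comp_hasDerivAt t h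
  have h3 : HasDerivAt (fun t => (X t).2.2) (f t (X t)).2.2 t :=
    (ContinuousLinearMap.snd ℝ ℝ (ℝ × ℝ)).hasFDerivAt.comp_hasDerivAt t h2
  have g1 : HasDerivAt (fun t => (X t).1) (f t (X t)).1 t :=
    (ContinuousLinearMap.fst ℝ ℝ (ℝ × ℝ × ℝ)).hasFDerivAt.comp_hasDerivAt t h
  have g2 : HasDerivAt (fun t => (X t).2.1) (f t (X t)).2.1 t :=
    (ContinuousLinearMap.fst ℝ ℝ (ℝ × ℝ)).hasFDerivAt.comp_hasDerivAt t h2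
  have g3 : HasDerivAt (fun t => (X t).2.2.1) (f t (X t)).2.2.1 t :=
    (ContinuousLinearMap.fst ℝ ℝ ℝ).hasFDerivAt.comp_hasDerivAt t h3
  have g4 : HasDerivAt (fun t => (X t).2.2.2) (f t (X t)).2.2.2 t :=
    (ContinuousLinearMap.snd ℝ ℝ ℝ).hasFDerivAt.comp_hasDerivAt t h3
  rw [hf] at g1 g2 g3 g4
  exact ⟨g1, g2, g3, g4⟩

/-- For `A > 0`, `k > 0`, `α > 1` and a `C¹` trajectory `γ` with `γ(0) = 0`,
there are positive constants `r₁, ω₁, δ₁` such that for all `ω > ω₁` and `δ ∈ (0, δ₁)`,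
every solution of `Ẋ = F(t, X, ω, γ^δ)` with `‖X(0)‖ ≤ r₁` is defined on `[0, 1/δ]`
and its position stays within distance `1` of `(γ₁(δt), γ₂(δt))` there. -/
theorem confinement_about_slow_trajectory
    (A k α : ℝ) (hA : 0 < A) (hk : 0 < k) (hα : 1 < α)
    (γ₁ γ₂ : ℝ → ℝ)
    (hγ₁ : ContDiffOn ℝ 1 γ₁ (Icc 0 1)) (hγ₂ : ContDiffOn ℝ 1 γ₂ (Icc 0 1))
    (hγ₁0 : γ₁ 0 = 0) (hγ₂0 : γ₂ 0 = 0) :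
    ∃ r₁ > (0 : ℝ), ∃ ω₁ > (0 : ℝ), ∃ δ₁ > (0 : ℝ),
      ∀ ω : ℝ, ω₁ < ω → ∀ δ : ℝ, 0 < δ → δ < δ₁ →
        -- solutions exist (are defined) on all of [0, 1/δ]
        ((∀ x0 vx0 y0 vy0 : ℝ,
            Real.sqrt (x0 ^ 2 + vx0 ^ 2 + y0 ^ 2 + vy0 ^ 2) ≤ r₁ →
            ∃ x vx y vy : ℝ → ℝ,
              x 0 = x0 ∧ vx 0 = vx0 ∧ y 0 = y0 ∧ vy 0 = vy0 ∧
              ∀ t ∈ Icc (0 : ℝ) (1 / δ),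
                HasDerivAt x (vx t) t ∧
                HasDerivAt vx
                  (A * (x t - Real.cos (ω * t) - γ₁ (δ * t)) /
                    ((x t - Real.cos (ω * t) - γ₁ (δ * t)) ^ 2 +
                      (y t - Real.sin (ω * t) - γ₂ (δ * t)) ^ 2) ^ α - k * vx t) t ∧
                HasDerivAt y (vy t) t ∧
                HasDerivAt vy
                  (A * (y t - Real.sin (ω * t) - γ₂ (δ * t)) /
                    ((x t - Real.cos (ω * t) - γ₁ (δ * t)) ^ 2 +
                      (y t - Real.sin (ω * t) - γ₂ (δ * t)) ^ 2) ^ α - k * vy t) t) ∧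
        -- every solution on [0, 1/δ] tracks the trajectory within distance 1
        (∀ x vx y vy : ℝ → ℝ,
            (∀ t ∈ Icc (0 : ℝ) (1 / δ),
              HasDerivAt x (vx t) t ∧
              HasDerivAt vx
                (A * (x t - Real.cos (ω * t) - γ₁ (δ * t)) /
                  ((x t - Real.cos (ω * t) - γ₁ (δ * t)) ^ 2 +
                    (y t - Real.sin (ω * t) - γ₂ (δ * t)) ^ 2) ^ α - k * vx t) t ∧
              HasDerivAt y (vy t) t ∧
              HasDerivAt vy
                (A * (y t - Real.sin (ω * t) - γ₂ (δ * t)) /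
                  ((x t - Real.cos (ω * t) - γ₁ (δ * t)) ^ 2 +
                    (y t - Real.sin (ω * t) - γ₂ (δ * t)) ^ 2) ^ α - k * vy t) t) →
            Real.sqrt ((x 0) ^ 2 + (vx 0) ^ 2 + (y 0) ^ 2 + (vy 0) ^ 2) ≤ r₁ →
            ∀ t ∈ Icc (0 : ℝ) (1 / δ),
              Real.sqrt ((x t - γ₁ (δ * t)) ^ 2 + (y t - γ₂ (δ * t)) ^ 2) < 1)) := by
  have hu : UniqueDiffOn ℝ (Icc (0:ℝ) 1) := uniqueDiffOn_Icc one_pos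
  have key : ∀ γ : ℝ → ℝ, ContDiffOn ℝ 1 γ (Icc 0 1) → ∃ g : ℝ → ℝ, ∃ G : ℝ, 0 ≤ G ∧
      (∀ s ∈ Icc (0:ℝ) 1, HasDerivWithinAt γ (g s) (Icc 0 1) s) ∧
      (∀ s ∈ Icc (0:ℝ) 1, |g s| ≤ G) := by
    intro γ h
    obtain ⟨G, hG⟩ := isCompact_Icc.exists_bound_of_continuousOn
      (h.continuousOn_derivWithin hu le_rfl)
    exact ⟨derivWithin γ (Icc 0 1), G, (norm_nonneg _).trans (hG 0 (by norm_num)),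
      fun s hs => ((h.differentiableOn one_ne_zero) s hs).hasDerivWithinAt, hG⟩
  obtain ⟨g₁, G₁, hG₁, hd₁, hb₁⟩ := key γ₁ hγ₁
  obtain ⟨g₂, G₂, hG₂, hd₂, hb₂⟩ := key γ₂ hγ₂
  obtain ⟨r₁, hr₁, ω₁, hω₁, δ₁, hδ₁, H⟩ := confine A k α hA hk hα γ₁ γ₂ g₁ g₂ (max G₁ G₂)
    (hG₁.trans (le_max_left _ _)) hd₁ hd₂ (fun s hs => (hb₁ s hs).trans (le_max_left _ _))
    (fun s hs => (hb₂ s hs).trans (le_max_right _ _)) hγ₁0 hγ₂0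
  refine ⟨r₁, hr₁, ω₁, hω₁, δ₁, hδ₁, fun ω hω δ hδ hδ' => ⟨?_, ?_⟩⟩
  · intro x0 vx0 y0 vy0 hinit
    have hpc : Continuous fun t : ℝ => max 0 (min 1 (δ * t)) := by fun_prop
    have hext : ∀ γ : ℝ → ℝ, ContDiffOn ℝ 1 γ (Icc 0 1) →
        Continuous fun t : ℝ => γ (max 0 (min 1 (δ * t))) := fun γ h =>
      h.continuousOn.comp_continuous hpc
        (fun t => ⟨le_max_left _ _, max_le zero_le_one (min_le_left _ _)⟩)
    obtain ⟨x, vx, y, vy, hx0, hvx0, hy0, hvy0, hsol⟩ := exist_mod A k α ω (1 / δ) hA hk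
      (by positivity) _ _ (hext γ₁ hγ₁) (hext γ₂ hγ₂) x0 vx0 y0 vy0
    have hcl : ∀ t ∈ Icc (0:ℝ) (1 / δ), max 0 (min 1 (δ * t)) = δ * t := by
      intro t ht
      have h1 : 0 ≤ δ * t := mul_nonneg hδ.le ht.1
      have h2 : δ * t ≤ 1 := by
        have := mul_le_mul_of_nonneg_left ht.2 hδ.le
        rwa [mul_one_div_cancel hδ.ne'] at this
      rw [min_eq_right h2, max_eq_right h1]
    have hbox : ∀ t ∈ Icc (0 : ℝ) (1 / δ), |x t - γ₁ (δ * t)| ≤ 1 / 8 →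
        |y t - γ₂ (δ * t)| ≤ 1 / 8 → |vx t| ≤ 1 / 8 → |vy t| ≤ 1 / 8 →
        clip (vx t) = vx t ∧ clip (vy t) = vy t ∧
        A * (clip (x t - γ₁ (max 0 (min 1 (δ * t)))) - cos (ω * t)) /
          ((clip (x t - γ₁ (max 0 (min 1 (δ * t)))) - cos (ω * t)) ^ 2 +
            (clip (y t - γ₂ (max 0 (min 1 (δ * t)))) - sin (ω * t)) ^ 2) ^ α - k * clip (vx t)
          = A * (x t - Real.cos (ω * t) - γ₁ (δ * t)) /
              ((x t - Real.cos (ω * t) - γ₁ (δ * t)) ^ 2 +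
                (y t - Real.sin (ω * t) - γ₂ (δ * t)) ^ 2) ^ α - k * vx t ∧
        A * (clip (y t - γ₂ (max 0 (min 1 (δ * t)))) - sin (ω * t)) /
          ((clip (x t - γ₁ (max 0 (min 1 (δ * t)))) - cos (ω * t)) ^ 2 +
            (clip (y t - γ₂ (max 0 (min 1 (δ * t)))) - sin (ω * t)) ^ 2) ^ α - k * clip (vy t)
          = A * (y t - Real.sin (ω * t) - γ₂ (δ * t)) /
              ((x t - Real.cos (ω * t) - γ₁ (δ * t)) ^ 2 +
                (y t - Real.sin (ω * t) - γ₂ (δ * t)) ^ 2) ^ α - k * vy t := by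
      intro t ht h1 h2 h3 h4
      rw [hcl t ht, clip_of_abs h1, clip_of_abs h2, clip_of_abs h3, clip_of_abs h4,
        sub_right_comm (x t), sub_right_comm (y t)]
      exact ⟨rfl, rfl, rfl, rfl⟩
    have hin := H ω hω δ hδ hδ' x vx y vy _ _ _ _ hsol hbox (by rw [hx0, hvx0, hy0, hvy0]; exact hinit)
    refine ⟨x, vx, y, vy, hx0, hvx0, hy0, hvy0, fun t ht => ?_⟩
    obtain ⟨i1, i2, i3, i4⟩ := hin t ht
    obtain ⟨b1, b2, b3, b4⟩ := hbox t ht i1 i2 i3 i4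
    obtain ⟨s1, s2, s3, s4⟩ := hsol t ht
    rw [b1] at s1
    rw [b2] at s3
    rw [b3] at s2
    rw [b4] at s4
    exact ⟨s1, s2, s3, s4⟩
  · intro x vx y vy hsol hinit t ht
    obtain ⟨i1, i2, -, -⟩ := H ω hω δ hδ hδ' x vx y vy _ _ _ _ hsol
      (fun t _ _ _ _ _ => ⟨rfl, rfl, rfl, rfl⟩) hinit t ht
    rw [Real.sqrt_lt' one_pos]
    have j1 := sq_le_sq' (abs_le.1 i1).1 (abs_le.1 i1).2
    have j2 := sq_le_sq' (abs_le.1 i2).1 (abs_le.1 i2).2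
    norm_num at j1 j2 ⊢
    linarith
end

section
/- Let A > 0, k > 0, α > 1. Let γ₁, γ₂ be continuously differentiable on [0,1] with γ₁(0) = γ₂(0) = 0, and for δ > 0 define γᵢ^δ(t) = γᵢ(δt) for t ∈ [0, 1/δ]. For every ν > 0 there exist ω₂ > 0 and δ₂ > 0 such that for all ω > ω₂ and all δ ∈ (0, δ₂): the solution X = (x, v_x, y, v_y) of Ẋ = F(t, X, ω, γ^δ) with initial condition X(0) = 0 is defined on [0, 1/δ] and satisfies ‖(x(t), y(t)) − (γ₁^δ(t), γ₂^δ(t))‖ < ν for all t ∈ [0, 1/δ]. -/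
open Real Set

lemma force_exp (A α ε : ℝ) (hA : 0 < A) (hα : 1 < α) (hε : 0 < ε) :
    ∃ r0 > (0:ℝ), ∀ p1 p2 c s : ℝ, c^2 + s^2 = 1 → |p1| ≤ r0 → |p2| ≤ r0 →
      |A * (p1 - c) / ((p1 - c)^2 + (p2 - s)^2)^α + A * c
        + α * A * ((c^2 - s^2) * p1 + 2 * c * s * p2) + A * (α - 1) * p1| ≤ ε * (|p1| + |p2|) := by
  have hd : HasDerivAt (fun u : ℝ => u ^ (-α)) (-α) 1 := by
    have := Real.hasDerivAt_rpow_const (x := 1) (p := -α) (Or.inl one_ne_zero)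
    simpa using this
  obtain ⟨ε1, he1, he1', he1''⟩ : ∃ ε1 : ℝ, 0 < ε1 ∧ ε1 ≤ 1 ∧ A * (3 * ε1) ≤ ε / 2 := by
    refine ⟨min 1 (ε / (6 * A)), by positivity, min_le_left _ _, ?_⟩
    have : min 1 (ε / (6 * A)) ≤ ε / (6 * A) := min_le_right _ _
    calc A * (3 * min 1 (ε / (6 * A))) ≤ A * (3 * (ε / (6 * A))) := by gcongr
      _ = ε / 2 := by field_simp; norm_num
  have ho := hd.isLittleO.def he1
  obtain ⟨d, hd0, hball⟩ := Metric.eventually_nhds_iff.1 ho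
  obtain ⟨r0, hr0, h1, h2, h3⟩ : ∃ r0 : ℝ, 0 < r0 ∧ 2 * r0 ≤ 1 ∧ 3 * (2 * r0) < d ∧
      A * ((4 * α + 3) * (2 * r0)) ≤ ε / 2 := by
    refine ⟨min (1/2) (min (d / 12) (ε / (4 * A * (4 * α + 3)))), by positivity, ?_, ?_, ?_⟩
    · have := min_le_left (1/2) (min (d / 12) (ε / (4 * A * (4 * α + 3)))); linarith
    · have := (min_le_right (1/2) (min (d / 12) (ε / (4 * A * (4 * α + 3))))).trans (min_le_left _ _)
      linarith
    · have := (min_le_right (1/2) (min (d / 12) (ε / (4 * A * (4 * α + 3))))).trans (min_le_right _ _)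
      calc _ ≤ A * ((4 * α + 3) * (2 * (ε / (4 * A * (4 * α + 3))))) := by gcongr
        _ = ε / 2 := by
          have : 4 * α + 3 ≠ 0 := by positivity
          field_simp; norm_num
  refine ⟨r0, hr0, fun p1 p2 c s hcs hp1 hp2 => ?_⟩
  set n := |p1| + |p2| with hn
  have hn0 : 0 ≤ n := by positivity
  have hn1 : n ≤ 2 * r0 := by linarith
  have hc : |c| ≤ 1 := abs_le.2 ⟨by nlinarith [sq_nonneg s], by nlinarith [sq_nonneg s]⟩
  have hs : |s| ≤ 1 := abs_le.2 ⟨by nlinarith [sq_nonneg c], by nlinarith [sq_nonneg c]⟩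
  set q := p1^2 + p2^2 with hq
  have hq0 : 0 ≤ q := by positivity
  have hqn : q ≤ n^2 := by
    rw [hq, hn, ← sq_abs p1, ← sq_abs p2]; nlinarith [abs_nonneg p1, abs_nonneg p2]
  set σ := q - 2 * (p1 * c + p2 * s) with hσ
  have hpe : |p1 * c + p2 * s| ≤ n := by
    calc _ ≤ |p1 * c| + |p2 * s| := abs_add_le _ _
      _ = |p1| * |c| + |p2| * |s| := by rw [abs_mul, abs_mul]
      _ ≤ |p1| * 1 + |p2| * 1 := by gcongr
      _ = n := by ring
  have hσn : |σ| ≤ 3 * n := by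
    have := abs_le.1 hpe
    apply abs_le.2; constructor <;> nlinarith
  have hD : (p1 - c)^2 + (p2 - s)^2 = 1 + σ := by rw [hσ, hq]; linear_combination hcs
  have hDpos : 0 ≤ 1 + σ := by rw [← hD]; positivity
  have hb := @hball (1 + σ) (by rw [Real.dist_eq]; simp only [add_sub_cancel_left]; linarith)
  simp only [Real.one_rpow, add_sub_cancel_left, smul_eq_mul, Real.norm_eq_abs] at hb
  set r := (1 + σ) ^ (-α) - 1 - σ * -α with hr
  have hrn : |r| ≤ 3 * ε1 * n := by nlinarith
  have hrn' : |r| ≤ 3 * n := by nlinarith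
  have hf : (1 + σ) ^ (-α) = 1 - α * σ + r := by rw [hr]; ring
  have e : A * (p1 - c) / ((p1 - c)^2 + (p2 - s)^2)^α + A * c
        + α * A * ((c^2 - s^2) * p1 + 2 * c * s * p2) + A * (α - 1) * p1
        = A * (p1 * (- α * σ + r) + α * (c * q) - c * r) := by
    rw [hD, div_eq_mul_inv, ← Real.rpow_neg hDpos, hf, hσ]
    linear_combination (-A * α * p1) * hcs
  rw [e, abs_mul, abs_of_pos hA]
  have b1 : |p1 * (- α * σ + r)| ≤ n * (3 * (α + 1) * n) := by
    rw [abs_mul]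
    have : |- α * σ + r| ≤ 3 * (α + 1) * n := by
      calc _ ≤ |-α * σ| + |r| := abs_add_le _ _
        _ = α * |σ| + |r| := by rw [abs_mul, abs_neg, abs_of_pos (by linarith : 0 < α)]
        _ ≤ α * (3 * n) + 3 * n := by gcongr
        _ = _ := by ring
    have : |p1| ≤ n := by rw [hn]; linarith [abs_nonneg p2]
    gcongr
  have b2 : |α * (c * q)| ≤ α * n^2 := by
    rw [abs_mul, abs_mul, abs_of_pos (by linarith : 0 < α), abs_of_nonneg hq0]
    have : |c| * q ≤ 1 * n^2 := by gcongr
    rw [one_mul] at this; gcongr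
  have b3 : |c * r| ≤ 3 * ε1 * n := by
    rw [abs_mul]
    calc |c| * |r| ≤ 1 * (3 * ε1 * n) := by gcongr
      _ = _ := one_mul _
  have b4 : |p1 * (- α * σ + r) + α * (c * q) - c * r| ≤ (4 * α + 3) * n * n + 3 * ε1 * n := by
    calc _ ≤ |p1 * (- α * σ + r) + α * (c * q)| + |c * r| := abs_sub _ _
      _ ≤ |p1 * (- α * σ + r)| + |α * (c * q)| + |c * r| := by gcongr; exact abs_add_le _ _
      _ ≤ n * (3 * (α + 1) * n) + α * n^2 + 3 * ε1 * n := by gcongr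
      _ = _ := by ring
  calc _ ≤ A * ((4 * α + 3) * n * n + 3 * ε1 * n) := by gcongr
    _ ≤ A * ((4 * α + 3) * (2 * r0) * n + 3 * ε1 * n) := by gcongr
    _ = (A * ((4 * α + 3) * (2 * r0)) + A * (3 * ε1)) * n := by ring
    _ ≤ (ε / 2 + ε / 2) * n := by gcongr
    _ = ε * n := by ring

set_option maxHeartbeats 4000000 in
lemma lyap_ineq (a k L m ε ζ ρ p1 p2 w1 w2 e1 e2 f1 f2 : ℝ) (ha : 0 < a) (hk : 0 < k)
    (hL : L = 2 * a + k^2 + k + 2) (hm : 0 < m) (hma : m ≤ a) (hm1 : m ≤ 1)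
    (hε : ε = k * m / (16 * L)) (hζ : ζ = k * m * ρ / (16 * L^2)) (hρ : 0 < ρ)
    (hV : (a + k^2/2) * (p1^2 + p2^2) + (w1^2 + w2^2) + k * (p1 * w1 + p2 * w2) = ρ)
    (hp1 : |p1| ≤ 1) (hp2 : |p2| ≤ 1) (hw1 : |w1| ≤ 1) (hw2 : |w2| ≤ 1)
    (he1 : |e1| ≤ ζ) (he2 : |e2| ≤ ζ) (hf1 : |f1| ≤ ε * (|p1| + |p2|) + ζ)
    (hf2 : |f2| ≤ ε * (|p2| + |p1|) + ζ) :
    (2 * a + k^2) * (p1 * (w1 + e1) + p2 * (w2 + e2))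
      + 2 * (w1 * (-a * p1 - k * w1 + f1) + w2 * (-a * p2 - k * w2 + f2))
      + k * ((w1 + e1) * w1 + p1 * (-a * p1 - k * w1 + f1)
        + ((w2 + e2) * w2 + p2 * (-a * p2 - k * w2 + f2))) < 0 := by
  have hL0 : 0 < L := by rw [hL]; positivity
  set S := p1^2 + p2^2 + w1^2 + w2^2 with hS
  set N := |p1| + |p2| + |w1| + |w2| with hN
  have hε0 : 0 < ε := by rw [hε]; positivity
  have hζ0 : 0 < ζ := by rw [hζ]; positivity
  have hN0 : 0 ≤ N := by positivity
  have hN4 : N ≤ 4 := by linarith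
  have hNS : N^2 ≤ 4 * S := by
    rw [hN, hS, ← sq_abs p1, ← sq_abs p2, ← sq_abs w1, ← sq_abs w2]
    nlinarith [sq_nonneg (|p1| - |p2|), sq_nonneg (|p1| - |w1|), sq_nonneg (|p1| - |w2|),
      sq_nonneg (|p2| - |w1|), sq_nonneg (|p2| - |w2|), sq_nonneg (|w1| - |w2|)]
  have hVS : ρ ≤ L * S := by
    have e : L * S - ρ = (a + k^2/2 + 2) * (p1^2 + p2^2) + (2 * a + k^2 + 1) * (w1^2 + w2^2)
        + k / 2 * ((p1 - w1)^2 + (p2 - w2)^2 + S) := by rw [← hV, hL, hS]; ring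
    have : 0 ≤ L * S - ρ := by rw [e]; positivity
    linarith
  have key : ∀ p w e B : ℝ, |e| ≤ B → e * ((2 * a + k^2) * p + k * w) ≤ B * (L * (|p| + |w|)) := by
    intro p w e B h
    have h2 : |(2 * a + k^2) * p + k * w| ≤ L * (|p| + |w|) := by
      calc _ ≤ |(2 * a + k^2) * p| + |k * w| := abs_add_le _ _
        _ = (2 * a + k^2) * |p| + k * |w| := by
          rw [abs_mul, abs_mul, abs_of_pos hk, abs_of_pos (by positivity : 0 < 2 * a + k^2)]
        _ ≤ L * |p| + L * |w| := by gcongr <;> (rw [hL]; linarith [sq_nonneg k])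
        _ = _ := by ring
    calc _ ≤ |e * ((2 * a + k^2) * p + k * w)| := le_abs_self _
      _ = |e| * |(2 * a + k^2) * p + k * w| := abs_mul _ _
      _ ≤ _ := by gcongr; exact (abs_nonneg _).trans h
  have key2 : ∀ p w e B : ℝ, |e| ≤ B → e * (2 * w + k * p) ≤ B * (L * (|p| + |w|)) := by
    intro p w e B h
    have h2 : |2 * w + k * p| ≤ L * (|p| + |w|) := by
      calc _ ≤ |2 * w| + |k * p| := abs_add_le _ _
        _ = 2 * |w| + k * |p| := by
          rw [abs_mul, abs_mul, abs_of_pos hk, abs_of_pos (by positivity : (0:ℝ) < 2)]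
        _ ≤ L * |w| + L * |p| := by gcongr <;> (rw [hL]; linarith [sq_nonneg k])
        _ = _ := by ring
    calc _ ≤ |e * (2 * w + k * p)| := le_abs_self _
      _ = |e| * |2 * w + k * p| := abs_mul _ _
      _ ≤ _ := by gcongr; exact (abs_nonneg _).trans h
  have hf1' : |f1| ≤ ε * N + ζ := hf1.trans (by
    have : |p1| + |p2| ≤ N := by rw [hN]; linarith [abs_nonneg w1, abs_nonneg w2]
    gcongr)
  have hf2' : |f2| ≤ ε * N + ζ := hf2.trans (by
    have : |p2| + |p1| ≤ N := by rw [hN]; linarith [abs_nonneg w1, abs_nonneg w2]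
    gcongr)
  have t1 := key p1 w1 e1 _ he1
  have t2 := key p2 w2 e2 _ he2
  have t3 := key2 p1 w1 f1 _ hf1'
  have t4 := key2 p2 w2 f2 _ hf2'
  have main : (2 * a + k^2) * (p1 * (w1 + e1) + p2 * (w2 + e2))
      + 2 * (w1 * (-a * p1 - k * w1 + f1) + w2 * (-a * p2 - k * w2 + f2))
      + k * ((w1 + e1) * w1 + p1 * (-a * p1 - k * w1 + f1)
        + ((w2 + e2) * w2 + p2 * (-a * p2 - k * w2 + f2)))
      ≤ -k * (a * (p1^2 + p2^2) + (w1^2+w2^2)) + L * (ε * N^2 + 2 * ζ * N) := by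
    have : L * (ε * N^2 + 2 * ζ * N) = ζ * (L * (|p1| + |w1|)) + ζ * (L * (|p2| + |w2|))
       + (ε * N + ζ) * (L * (|p1| + |w1|)) + (ε * N + ζ) * (L * (|p2| + |w2|)) := by
      rw [hN]; ring
    rw [this]; linarith
  have d1 : m * S ≤ a * (p1^2 + p2^2) + (w1^2+w2^2) := by
    rw [hS]; nlinarith [mul_nonneg (sub_nonneg.2 hma) (sq_nonneg p1),
      mul_nonneg (sub_nonneg.2 hma) (sq_nonneg p2), mul_nonneg (sub_nonneg.2 hm1) (sq_nonneg w1),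
      mul_nonneg (sub_nonneg.2 hm1) (sq_nonneg w2)]
  have d2 : k * (m * S) ≤ k * (a * (p1^2 + p2^2) + (w1^2+w2^2)) := by gcongr
  have d3 : L * (ε * N^2) ≤ k * m * S / 4 := by
    calc _ ≤ L * (ε * (4 * S)) := by gcongr
      _ = _ := by rw [hε]; field_simp; norm_num
  have d4 : L * (2 * ζ * N) ≤ k * m * ρ / (2 * L) := by
    calc _ ≤ L * (2 * ζ * 4) := by gcongr
      _ = _ := by rw [hζ]; field_simp; norm_num
  have d5 : k * m * (ρ / L) ≤ k * m * S := by
    gcongr; rw [div_le_iff₀ hL0]; linarith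
  have d6 : k * m * ρ / (2 * L) = k * m * (ρ / L) / 2 := by field_simp
  have d7 : 0 < k * m * (ρ / L) := by positivity
  linarith

lemma gamma_bound (γ : ℝ → ℝ) (h : ContDiffOn ℝ 1 γ (Icc 0 1)) :
    ∃ (G : ℝ → ℝ) (Γ : ℝ), (∀ s ∈ Icc (0:ℝ) 1, HasDerivWithinAt γ (G s) (Icc 0 1) s) ∧
      ∀ s ∈ Icc (0:ℝ) 1, |G s| ≤ Γ := by
  have hc : ContinuousOn (derivWithin γ (Icc 0 1)) (Icc 0 1) :=
    h.continuousOn_derivWithin (uniqueDiffOn_Icc one_pos) le_rfl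
  obtain ⟨Γ, hΓ⟩ := isCompact_Icc.exists_bound_of_continuousOn hc
  exact ⟨_, Γ, fun s hs => ((h.differentiableOn one_ne_zero) s hs).hasDerivWithinAt, hΓ⟩

lemma reg_aux (a k r ρ p q P Q V : ℝ) (ha : 0 < a) (hr : 0 < r) (hρr : ρ ≤ a * r^2)
    (hρ8 : ρ ≤ 1/8)
    (e : V = a * (p^2 + q^2) + 1/2 * (P^2 + Q^2) + 1/2 * ((P + k * p)^2 + (Q + k * q)^2))
    (ht : V ≤ ρ) : p^2 + q^2 ≤ r^2 ∧ |p| ≤ r ∧ |q| ≤ r ∧ |P| ≤ 1/2 ∧ |Q| ≤ 1/2 := by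
  have n1 : 0 ≤ P^2 + Q^2 := by positivity
  have n2 : 0 ≤ (P + k * p)^2 + (Q + k * q)^2 := by positivity
  have n3 : 0 ≤ a * (p^2 + q^2) := by positivity
  have h1 : a * (p^2 + q^2) ≤ a * r^2 := by linarith
  have h1' := le_of_mul_le_mul_left h1 ha
  have h2 : P^2 + Q^2 ≤ 1/4 := by linarith
  refine ⟨h1', abs_le_of_sq_le_sq (by linarith [sq_nonneg q]) hr.le,
    abs_le_of_sq_le_sq (by linarith [sq_nonneg p]) hr.le,
    abs_le_of_sq_le_sq (by linarith [sq_nonneg Q]) (by norm_num),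
    abs_le_of_sq_le_sq (by linarith [sq_nonneg P]) (by norm_num)⟩

set_option maxHeartbeats 8000000 in
lemma apriori
    (A k α : ℝ) (hA : 0 < A) (hk : 0 < k) (hα : 1 < α)
    (γ₁ γ₂ : ℝ → ℝ)
    (hγ₁ : ContDiffOn ℝ 1 γ₁ (Icc 0 1)) (hγ₂ : ContDiffOn ℝ 1 γ₂ (Icc 0 1))
    (hγ₁0 : γ₁ 0 = 0) (hγ₂0 : γ₂ 0 = 0) (ν : ℝ) (hν : 0 < ν) :
      ∃ ω₂ > (0 : ℝ), ∃ δ₂ > (0 : ℝ),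
        ∀ ω : ℝ, ω₂ < ω → ∀ δ : ℝ, 0 < δ → δ < δ₂ →
          ∀ x vx y vy ux gx uy gy : ℝ → ℝ,
              x 0 = 0 → vx 0 = 0 → y 0 = 0 → vy 0 = 0 →
              (∀ t ∈ Icc (0 : ℝ) (1 / δ),
                HasDerivAt x (ux t) t ∧ HasDerivAt vx (gx t) t ∧
                HasDerivAt y (uy t) t ∧ HasDerivAt vy (gy t) t ∧
                (|x t - γ₁ (δ * t)| < 1 / 5 → |y t - γ₂ (δ * t)| < 1 / 5 →
                  |vx t| < 1 → |vy t| < 1 →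
                  ux t = vx t ∧ uy t = vy t ∧
                  gx t = A * (x t - Real.cos (ω * t) - γ₁ (δ * t)) /
                    ((x t - Real.cos (ω * t) - γ₁ (δ * t)) ^ 2 +
                      (y t - Real.sin (ω * t) - γ₂ (δ * t)) ^ 2) ^ α - k * vx t ∧
                  gy t = A * (y t - Real.sin (ω * t) - γ₂ (δ * t)) /
                    ((x t - Real.cos (ω * t) - γ₁ (δ * t)) ^ 2 +
                      (y t - Real.sin (ω * t) - γ₂ (δ * t)) ^ 2) ^ α - k * vy t)) →
              ∀ t ∈ Icc (0 : ℝ) (1 / δ),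
                Real.sqrt ((x t - γ₁ (δ * t)) ^ 2 + (y t - γ₂ (δ * t)) ^ 2) < ν ∧
                |x t - γ₁ (δ * t)| < 1 / 5 ∧ |y t - γ₂ (δ * t)| < 1 / 5 ∧
                  |vx t| < 1 ∧ |vy t| < 1 := by
  obtain ⟨G₁, Γ₁, hG₁, hΓ₁⟩ := gamma_bound γ₁ hγ₁
  obtain ⟨G₂, Γ₂, hG₂, hΓ₂⟩ := gamma_bound γ₂ hγ₂
  set Γ := max Γ₁ Γ₂ with hΓ
  have hΓ0 : 0 ≤ Γ := ((abs_nonneg _).trans (hΓ₁ 0 (by simp))).trans (le_max_left _ _)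
  -- constants
  obtain ⟨a, ha_def⟩ : ∃ a, a = A * (α - 1) := ⟨_, rfl⟩
  have ha : 0 < a := by rw [ha_def]; exact mul_pos hA (by linarith)
  obtain ⟨L, hL⟩ : ∃ L, L = 2 * a + k^2 + k + 2 := ⟨_, rfl⟩
  have hL0 : 0 < L := by rw [hL]; positivity
  obtain ⟨m, hm, hma, hm1⟩ : ∃ m : ℝ, 0 < m ∧ m ≤ a ∧ m ≤ 1 :=
    ⟨min a 1, by positivity, min_le_left _ _, min_le_right _ _⟩
  obtain ⟨ε, hε⟩ : ∃ ε, ε = k * m / (16 * L) := ⟨_, rfl⟩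
  have hε0 : 0 < ε := by rw [hε]; positivity
  obtain ⟨r0, hr0, hforce⟩ := force_exp A α ε hA hα hε0
  obtain ⟨r, hr, hrν, hr5, hrr0⟩ : ∃ r : ℝ, 0 < r ∧ r < ν ∧ r < 1/5 ∧ r ≤ r0 := by
    refine ⟨min (ν/2) (min (1/10) r0), by positivity, ?_, ?_, ?_⟩
    · have := min_le_left (ν/2) (min (1/10) r0); linarith
    · have := (min_le_right (ν/2) (min (1/10) r0)).trans (min_le_left _ _); linarith
    · exact (min_le_right (ν/2) (min (1/10) r0)).trans (min_le_right _ _)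
  obtain ⟨ρ, hρ, hρr, hρ8⟩ : ∃ ρ : ℝ, 0 < ρ ∧ ρ ≤ a * r^2 ∧ ρ ≤ 1/8 :=
    ⟨min (a * r^2) (1/8), by positivity, min_le_left _ _, min_le_right _ _⟩
  obtain ⟨ζ, hζ⟩ : ∃ ζ, ζ = k * m * ρ / (16 * L^2) := ⟨_, rfl⟩
  have hζ0 : 0 < ζ := by rw [hζ]; positivity
  obtain ⟨C, hC⟩ : ∃ C, C = (1 + k) * (A * (1 + α)) + α * A * 2 + 1 := ⟨_, rfl⟩
  have hα0 : 0 < α := by linarith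
  have hC0 : 0 < C := by rw [hC]; positivity
  obtain ⟨η₀, hη₀, hη1, hη2, hη3⟩ : ∃ η₀ : ℝ, 0 < η₀ ∧ C * η₀ ≤ ζ / 2 ∧ C * η₀ ≤ 1/4 ∧
      C * η₀ ≤ ρ := by
    refine ⟨min (ζ/2) (min (1/4) ρ) / C, by positivity, ?_⟩
    rw [mul_div_cancel₀ _ hC0.ne']
    exact ⟨min_le_left _ _, (min_le_right _ _).trans (min_le_left _ _),
      (min_le_right _ _).trans (min_le_right _ _)⟩
  obtain ⟨δ₂, hδ₂, hδ1, hδ2⟩ : ∃ δ₂ : ℝ, 0 < δ₂ ∧ δ₂ * Γ ≤ ζ / 2 ∧ δ₂ * Γ ≤ 1 := by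
    refine ⟨min (ζ/2) 1 / (Γ + 1), by positivity, ?_⟩
    have : min (ζ/2) 1 / (Γ + 1) * Γ ≤ min (ζ/2) 1 := by
      rw [div_mul_eq_mul_div, div_le_iff₀ (by positivity)]
      have : 0 < min (ζ/2) 1 := by positivity
      nlinarith
    exact ⟨this.trans (min_le_left _ _), this.trans (min_le_right _ _)⟩
  refine ⟨1 / η₀, by positivity, δ₂, hδ₂, ?_⟩
  intro ω hω δ hδ hδδ x vx y vy ux gx uy gy hx0 hvx0 hy0 hvy0 hsol
  have hω0 : 0 < ω := lt_trans (by positivity) hω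
  obtain ⟨η, hη_def⟩ : ∃ η, η = 1 / ω := ⟨_, rfl⟩
  have hη : 0 < η := by rw [hη_def]; positivity
  have hηω : η * ω = 1 := by rw [hη_def]; field_simp
  have hηη : η ≤ η₀ := by
    rw [hη_def, div_le_iff₀ hω0]; rw [div_lt_iff₀ hη₀] at hω; linarith
  have hCη : C * η ≤ C * η₀ := by gcongr
  have hδΓ : δ * Γ ≤ δ₂ * Γ := by gcongr
  clear hη_def hω
  -- shorthand
  set p : ℝ → ℝ := fun t => x t - γ₁ (δ * t) with hp
  set q : ℝ → ℝ := fun t => y t - γ₂ (δ * t) with hq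
  set P : ℝ → ℝ := fun t => vx t + A * η * sin (ω * t)
    + α * A * η / 2 * (sin (2 * (ω * t)) * p t - cos (2 * (ω * t)) * q t) with hP
  set Q : ℝ → ℝ := fun t => vy t - A * η * cos (ω * t)
    + α * A * η / 2 * (- cos (2 * (ω * t)) * p t - sin (2 * (ω * t)) * q t) with hQ
  set V : ℝ → ℝ := fun t => (a + k^2/2) * (p t^2 + q t^2) + (P t^2 + Q t^2)
    + k * (p t * P t + q t * Q t) with hV
  set p' : ℝ → ℝ := fun t => ux t - δ * G₁ (δ * t) with hp'
  set q' : ℝ → ℝ := fun t => uy t - δ * G₂ (δ * t) with hq'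
  set P' : ℝ → ℝ := fun t => gx t + A * cos (ω * t)
    + α * A * (cos (2 * (ω * t)) * p t + sin (2 * (ω * t)) * q t)
    + α * A * η / 2 * (sin (2 * (ω * t)) * p' t - cos (2 * (ω * t)) * q' t) with hP'
  set Q' : ℝ → ℝ := fun t => gy t + A * sin (ω * t)
    + α * A * (sin (2 * (ω * t)) * p t - cos (2 * (ω * t)) * q t)
    + α * A * η / 2 * (- cos (2 * (ω * t)) * p' t - sin (2 * (ω * t)) * q' t) with hQ'
  set V' : ℝ → ℝ := fun t => (2 * a + k^2) * (p t * p' t + q t * q' t)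
    + 2 * (P t * P' t + Q t * Q' t)
    + k * (p' t * P t + p t * P' t + (q' t * Q t + q t * Q' t)) with hV'
  have hT : 0 < 1 / δ := by positivity
  have hmem : ∀ t ∈ Icc (0:ℝ) (1/δ), δ * t ∈ Icc (0:ℝ) 1 := by
    intro t ht
    refine ⟨mul_nonneg hδ.le ht.1, ?_⟩
    have := ht.2; rw [le_div_iff₀ hδ] at this; linarith
  have hgd : ∀ γ G : ℝ → ℝ, (∀ s ∈ Icc (0:ℝ) 1, HasDerivWithinAt γ (G s) (Icc 0 1) s) →
      ∀ t ∈ Icc (0:ℝ) (1/δ),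
        HasDerivWithinAt (fun t => γ (δ * t)) (δ * G (δ * t)) (Icc 0 (1/δ)) t := by
    intro γ G h t ht
    have h1 : HasDerivWithinAt (fun t : ℝ => δ * t) δ (Icc 0 (1/δ)) t := by
      simpa using (hasDerivAt_id t).const_mul δ |>.hasDerivWithinAt (s := Icc 0 (1/δ))
    have := (h (δ * t) (hmem t ht)).comp t h1 hmem
    rw [mul_comm]; exact this
  have dp : ∀ t ∈ Icc (0:ℝ) (1/δ), HasDerivWithinAt p (p' t) (Icc 0 (1/δ)) t := fun t ht =>
    (hsol t ht).1.hasDerivWithinAt.sub (hgd γ₁ G₁ hG₁ t ht)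
  have dq : ∀ t ∈ Icc (0:ℝ) (1/δ), HasDerivWithinAt q (q' t) (Icc 0 (1/δ)) t := fun t ht =>
    (hsol t ht).2.2.1.hasDerivWithinAt.sub (hgd γ₂ G₂ hG₂ t ht)
  have dl : ∀ t, HasDerivAt (fun t : ℝ => ω * t) ω t := fun t => by
    simpa using (hasDerivAt_id t).const_mul ω
  have dl2 : ∀ t, HasDerivAt (fun t : ℝ => 2 * (ω * t)) (2 * ω) t := fun t => (dl t).const_mul 2
  have dP : ∀ t ∈ Icc (0:ℝ) (1/δ), HasDerivWithinAt P (P' t) (Icc 0 (1/δ)) t := by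
    intro t ht
    have h := ((hsol t ht).2.1.hasDerivWithinAt (s := Icc 0 (1/δ))).add
      ((dl t).sin.hasDerivWithinAt.const_mul (A * η)) |>.add
      ((((dl2 t).sin.hasDerivWithinAt.mul (dp t ht)).sub
        ((dl2 t).cos.hasDerivWithinAt.mul (dq t ht))).const_mul (α * A * η / 2))
    refine h.congr_deriv ?_
    simp only [hP']
    linear_combination (A * cos (ω * t) + α * A * (cos (2 * (ω * t)) * p t
      + sin (2 * (ω * t)) * q t)) * hηω
  have dQ : ∀ t ∈ Icc (0:ℝ) (1/δ), HasDerivWithinAt Q (Q' t) (Icc 0 (1/δ)) t := by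
    intro t ht
    have h := ((hsol t ht).2.2.2.1.hasDerivWithinAt (s := Icc 0 (1/δ))).sub
      ((dl t).cos.hasDerivWithinAt.const_mul (A * η)) |>.add
      ((((dl2 t).cos.neg.hasDerivWithinAt.mul (dp t ht)).sub
        ((dl2 t).sin.hasDerivWithinAt.mul (dq t ht))).const_mul (α * A * η / 2))
    refine h.congr_deriv ?_
    simp only [hQ', Pi.neg_apply]
    linear_combination (A * sin (ω * t) + α * A * (sin (2 * (ω * t)) * p t
      - cos (2 * (ω * t)) * q t)) * hηω
  have dV : ∀ t ∈ Icc (0:ℝ) (1/δ), HasDerivWithinAt V (V' t) (Icc 0 (1/δ)) t := by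
    intro t ht
    have h := ((((dp t ht).pow 2).add ((dq t ht).pow 2)).const_mul (a + k^2/2)).add
      (((dP t ht).pow 2).add ((dQ t ht).pow 2)) |>.add
      ((((dp t ht).mul (dP t ht)).add ((dq t ht).mul (dQ t ht))).const_mul k)
    refine h.congr_deriv ?_
    simp only [hV']
    push_cast
    ring
  -- consequences of V ≤ ρ
  have reg : ∀ t, V t ≤ ρ → p t^2 + q t^2 ≤ r^2 ∧ |p t| ≤ r ∧ |q t| ≤ r ∧
      |P t| ≤ 1/2 ∧ |Q t| ≤ 1/2 := by
    intro t ht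
    have e : V t = a * (p t^2 + q t^2) + 1/2 * (P t^2 + Q t^2)
      + 1/2 * ((P t + k * p t)^2 + (Q t + k * q t)^2) := by simp only [hV]; ring
    exact reg_aux a k r ρ _ _ _ _ _ ha hr hρr hρ8 e ht
  have trig : ∀ (s c u w B : ℝ), |s| ≤ 1 → |c| ≤ 1 → |u| ≤ B → |w| ≤ B →
      |s * u + c * w| ≤ 2 * B := by
    intro s c u w B hs hc hu hw
    calc _ ≤ |s * u| + |c * w| := abs_add_le _ _
      _ = |s| * |u| + |c| * |w| := by rw [abs_mul, abs_mul]
      _ ≤ 1 * B + 1 * B := by gcongr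
      _ = _ := by ring
  have hPv : ∀ t, |p t| ≤ 1 → |q t| ≤ 1 → |P t - vx t| ≤ η * (A * (1 + α)) := by
    intro t h1 h2
    have e : P t - vx t = η * A * sin (ω * t) + η * (α * A / 2) *
      (sin (2 * (ω * t)) * p t + (- cos (2 * (ω * t))) * q t) := by simp only [hP]; ring
    rw [e]
    have b := trig _ (- cos (2 * (ω * t))) _ _ 1 (abs_sin_le_one (2 * (ω * t)))
      (by rw [abs_neg]; exact abs_cos_le_one _) h1 h2
    calc _ ≤ |η * A * sin (ω * t)| + _ := abs_add_le _ _
      _ = η * A * |sin (ω * t)| + η * (α * A / 2) * _ := by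
        rw [abs_mul, abs_mul (η * (α * A / 2)), abs_of_pos (by positivity : 0 < η * A),
          abs_of_pos (by positivity : 0 < η * (α * A / 2))]
      _ ≤ η * A * 1 + η * (α * A / 2) * (2 * 1) := by gcongr; exact abs_sin_le_one _
      _ = _ := by ring
  have hQv : ∀ t, |p t| ≤ 1 → |q t| ≤ 1 → |Q t - vy t| ≤ η * (A * (1 + α)) := by
    intro t h1 h2
    have e : Q t - vy t = η * A * (-cos (ω * t)) + η * (α * A / 2) *
      ((- cos (2 * (ω * t))) * p t + (- sin (2 * (ω * t))) * q t) := by simp only [hQ]; ring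
    rw [e]
    have b := trig (- cos (2 * (ω * t))) (- sin (2 * (ω * t))) _ _ 1
      (by rw [abs_neg]; exact abs_cos_le_one _) (by rw [abs_neg]; exact abs_sin_le_one _) h1 h2
    calc _ ≤ |η * A * (-cos (ω * t))| + _ := abs_add_le _ _
      _ = η * A * |cos (ω * t)| + η * (α * A / 2) * _ := by
        rw [abs_mul, abs_mul (η * (α * A / 2)), abs_of_pos (by positivity : 0 < η * A),
          abs_of_pos (by positivity : 0 < η * (α * A / 2)), abs_neg]
      _ ≤ η * A * 1 + η * (α * A / 2) * (2 * 1) := by gcongr; exact abs_cos_le_one _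
      _ = _ := by ring
  have hC1 : η * (A * (1 + α)) + k * (η * (A * (1 + α))) + α * A * η / 2 * (2 * 2) + η = C * η := by
    rw [hC]; ring
  have hpos1 : 0 < η * (A * (1 + α)) := by positivity
  have hpos2 : 0 < α * A * η / 2 * (2 * 2) := by positivity
  have reg2 : ∀ t, V t ≤ ρ → |p t| < 1/5 ∧ |q t| < 1/5 ∧ |vx t| < 1 ∧ |vy t| < 1 := by
    intro t ht
    obtain ⟨-, h1, h2, h3, h4⟩ := reg t ht
    have h5 := hPv t (by linarith) (by linarith)
    have h6 := hQv t (by linarith) (by linarith)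
    have hkp : 0 < k * (η * (A * (1 + α))) := by positivity
    refine ⟨by linarith, by linarith, ?_, ?_⟩
    · have : |vx t| ≤ |P t| + |P t - vx t| := by
        have := abs_sub (P t) (P t - vx t); rwa [sub_sub_cancel] at this
      linarith
    · have : |vy t| ≤ |Q t| + |Q t - vy t| := by
        have := abs_sub (Q t) (Q t - vy t); rwa [sub_sub_cancel] at this
      linarith
  have hV0 : V 0 ≤ ρ := by
    have : V 0 = (A * η)^2 := by
      simp only [hV, hP, hQ, hp, hq, hx0, hy0, hvx0, hvy0, mul_zero, hγ₁0, hγ₂0, sin_zero, cos_zero]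
      ring
    rw [this]
    have hAη : A * η ≤ C * η := by
      gcongr; rw [hC]
      have h1 := mul_pos hA hα0
      have h2 := mul_pos hk (mul_pos hA hα0)
      have h3 := mul_pos hk hA
      linarith
    have h0 : 0 < A * η := by positivity
    have h1 : A * η ≤ 1 := by linarith
    calc (A * η)^2 = (A * η) * (A * η) := sq _
      _ ≤ 1 * (A * η) := by gcongr
      _ ≤ ρ := by linarith
  have hneg : ∀ t ∈ Ico (0:ℝ) (1/δ), V t = ρ → V' t < 0 := by
    intro t ht hVt
    have ht' : t ∈ Icc (0:ℝ) (1/δ) := ⟨ht.1, ht.2.le⟩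
    obtain ⟨-, h1, h2, h3, h4⟩ := reg t hVt.le
    obtain ⟨i1, i2, i3, i4⟩ := reg2 t hVt.le
    obtain ⟨s1, s2, s3, s4⟩ := (hsol t ht').2.2.2.2 i1 i2 i3 i4
    have h5 := hPv t (by linarith) (by linarith)
    have h6 := hQv t (by linarith) (by linarith)
    have hkp : 0 < k * (η * (A * (1 + α))) := by positivity
    have g1 : |δ * G₁ (δ * t)| ≤ δ * Γ := by
      rw [abs_mul, abs_of_pos hδ]; gcongr
      exact (hΓ₁ _ (hmem t ht')).trans (le_max_left _ _)
    have g2 : |δ * G₂ (δ * t)| ≤ δ * Γ := by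
      rw [abs_mul, abs_of_pos hδ]; gcongr
      exact (hΓ₂ _ (hmem t ht')).trans (le_max_right _ _)
    have hp1 : p' t = P t + (p' t - P t) := by ring
    have e1 : |p' t - P t| ≤ ζ := by
      have : p' t - P t = -(P t - vx t) - δ * G₁ (δ * t) := by simp only [hp', s1]; ring
      rw [this]
      have := abs_sub (-(P t - vx t)) (δ * G₁ (δ * t))
      rw [abs_neg] at this
      linarith
    have e2 : |q' t - Q t| ≤ ζ := by
      have : q' t - Q t = -(Q t - vy t) - δ * G₂ (δ * t) := by simp only [hq', s2]; ring
      rw [this]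
      have := abs_sub (-(Q t - vy t)) (δ * G₂ (δ * t))
      rw [abs_neg] at this
      linarith
    have bp : |p' t| ≤ 2 := by
      have := abs_sub (vx t) (δ * G₁ (δ * t))
      simp only [hp', s1]; linarith
    have bq : |q' t| ≤ 2 := by
      have := abs_sub (vy t) (δ * G₂ (δ * t))
      simp only [hq', s2]; linarith
    have j1 := trig _ (- cos (2 * (ω * t))) _ _ 2 (abs_sin_le_one (2 * (ω * t)))
      (by rw [abs_neg]; exact abs_cos_le_one _) bp bq
    have j2 := trig (- cos (2 * (ω * t))) (- sin (2 * (ω * t))) _ _ 2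
      (by rw [abs_neg]; exact abs_cos_le_one _) (by rw [abs_neg]; exact abs_sin_le_one _) bp bq
    have k1 := hforce (p t) (q t) (cos (ω * t)) (sin (ω * t)) (cos_sq_add_sin_sq _)
      (h1.trans hrr0) (h2.trans hrr0)
    have k2 := hforce (q t) (p t) (sin (ω * t)) (cos (ω * t)) (sin_sq_add_cos_sq _)
      (h2.trans hrr0) (h1.trans hrr0)
    have comb : ∀ (R D T B : ℝ), |R| ≤ B → |D| ≤ η * (A * (1 + α)) → |T| ≤ 2 * 2 →
        |R + k * D + α * A * η / 2 * T| ≤ B + ζ := by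
      intro R D T B hR hD hT
      calc _ ≤ |R + k * D| + |α * A * η / 2 * T| := abs_add_le _ _
        _ ≤ |R| + |k * D| + |α * A * η / 2 * T| := by gcongr; exact abs_add_le _ _
        _ = |R| + k * |D| + α * A * η / 2 * |T| := by
          rw [abs_mul k, abs_mul _ T, abs_of_pos hk, abs_of_pos (by positivity : 0 < α * A * η / 2)]
        _ ≤ B + k * (η * (A * (1 + α))) + α * A * η / 2 * (2 * 2) := by gcongr
        _ ≤ _ := by linarith
    have f1 := comb _ _ _ _ k1 h5 j1
    have f2 := comb _ _ _ _ k2 h6 j2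
    have c2 : cos (2 * (ω * t)) = cos (ω * t)^2 - sin (ω * t)^2 := cos_two_mul' _
    have s2' : sin (2 * (ω * t)) = 2 * sin (ω * t) * cos (ω * t) := sin_two_mul _
    have x1 : x t - cos (ω * t) - γ₁ (δ * t) = p t - cos (ω * t) := by simp only [hp]; ring
    have y1 : y t - sin (ω * t) - γ₂ (δ * t) = q t - sin (ω * t) := by simp only [hq]; ring
    rw [x1, y1] at s3 s4
    have fin := lyap_ineq a k L m ε ζ ρ (p t) (q t) (P t) (Q t) (p' t - P t) (q' t - Q t) _ _
      ha hk hL hm hma hm1 hε hζ hρ hVt (by linarith) (by linarith) (by linarith) (by linarith)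
      e1 e2 f1 f2
    have z1 : -a * p t - k * P t + (A * (p t - cos (ω * t)) / ((p t - cos (ω * t))^2 +
        (q t - sin (ω * t))^2)^α + A * cos (ω * t)
        + α * A * ((cos (ω * t)^2 - sin (ω * t)^2) * p t + 2 * cos (ω * t) * sin (ω * t) * q t)
        + A * (α - 1) * p t + k * (P t - vx t) + α * A * η / 2 *
          (sin (2 * (ω * t)) * p' t + (- cos (2 * (ω * t))) * q' t)) = P' t := by
      simp only [hP']; rw [s3, ha_def, c2, s2']; ring
    have z2 : -a * q t - k * Q t + (A * (q t - sin (ω * t)) / ((q t - sin (ω * t))^2 +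
        (p t - cos (ω * t))^2)^α + A * sin (ω * t)
        + α * A * ((sin (ω * t)^2 - cos (ω * t)^2) * q t + 2 * sin (ω * t) * cos (ω * t) * p t)
        + A * (α - 1) * q t + k * (Q t - vy t) + α * A * η / 2 *
          ((- cos (2 * (ω * t))) * p' t + (- sin (2 * (ω * t))) * q' t)) = Q' t := by
      simp only [hQ']; rw [s4, ha_def, c2, s2', add_comm ((q t - sin (ω * t))^2)]; ring
    rw [z1, z2, add_sub_cancel, add_sub_cancel] at fin
    exact fin
  have hle : ∀ t ∈ Icc (0:ℝ) (1/δ), V t ≤ ρ := by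
    intro t ht
    refine image_le_of_deriv_right_lt_deriv_boundary (f := V) (f' := V') (B := fun _ => ρ)
      (B' := fun _ => 0) (fun t ht => (dV t ht).continuousWithinAt) ?_ hV0
      (fun t => hasDerivAt_const t ρ) (fun t ht h => hneg t ht h) ht
    intro t ht
    refine (dV t ⟨ht.1, ht.2.le⟩).mono_of_mem_nhdsWithin ?_
    exact Filter.mem_of_superset (Icc_mem_nhdsGE ht.2) (Icc_subset_Icc_left ht.1)
  intro t ht
  refine ⟨?_, reg2 t (hle t ht)⟩
  exact lt_of_le_of_lt (Real.sqrt_le_iff.2 ⟨hr.le, (reg t (hle t ht)).1⟩) hrν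

lemma cutoff_force (α : ℝ) : ∃ (H : ℝ × ℝ → ℝ) (K : NNReal) (C : ℝ), LipschitzWith K H ∧
    (∀ z, |H z| ≤ C) ∧ ∀ z : ℝ × ℝ, 1/2 ≤ ‖z‖ → ‖z‖ ≤ 2 → H z = z.1 / (z.1^2 + z.2^2)^α := by
  let b1 : ContDiffBump (0 : ℝ × ℝ) := ⟨2, 3, by norm_num, by norm_num⟩
  let b2 : ContDiffBump (0 : ℝ × ℝ) := ⟨1/4, 1/2, by norm_num, by norm_num⟩
  let H : ℝ × ℝ → ℝ := fun z => (b1 z - b2 z) * (z.1 / (z.1^2 + z.2^2)^α)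
  have hs : HasCompactSupport H := by
    have : HasCompactSupport (fun z => b1 z - b2 z) := b1.hasCompactSupport.sub b2.hasCompactSupport
    exact this.mul_right
  have hcd : ContDiff ℝ 1 H := by
    rw [contDiff_iff_contDiffAt]
    intro z
    by_cases hz : z = 0
    · subst hz
      have : H =ᶠ[nhds 0] fun _ => 0 := by
        filter_upwards [b1.eventuallyEq_one, b2.eventuallyEq_one] with w h1 h2
        simp [H, h1, h2]
      exact contDiffAt_const.congr_of_eventuallyEq this
    · have hpos : 0 < z.1^2 + z.2^2 := by
        rcases lt_or_eq_of_le (by positivity : 0 ≤ z.1^2 + z.2^2) with h | h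
        · exact h
        · exfalso; apply hz
          have h1 : z.1^2 = 0 := by nlinarith [sq_nonneg z.1, sq_nonneg z.2]
          have h2 : z.2^2 = 0 := by nlinarith [sq_nonneg z.1, sq_nonneg z.2]
          exact Prod.ext (by simpa using h1) (by simpa using h2)
      refine ContDiffAt.mul (b1.contDiff.contDiffAt.sub b2.contDiff.contDiffAt) ?_
      refine ContDiffAt.div contDiffAt_fst ?_ (Real.rpow_pos_of_pos hpos _).ne'
      exact ContDiffAt.rpow_const_of_ne (by fun_prop) hpos.ne'
  obtain ⟨K, hK⟩ := ContDiff.lipschitzWith_of_hasCompactSupport hs hcd one_ne_zero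
  obtain ⟨C, hC⟩ := hs.exists_bound_of_continuous hcd.continuous
  refine ⟨H, K, C, hK, hC, fun z h1 h2 => ?_⟩
  have e1 : b1 z = 1 := b1.one_of_mem_closedBall (by simpa using h2)
  have e2 : b2 z = 0 := b2.zero_of_le_dist (by rw [dist_zero_right]; exact h1)
  simp [H, e1, e2]

lemma exists_cutoff_sol (A k α ω δ : ℝ) (hδ : 0 < δ) (γ₁ γ₂ : ℝ → ℝ)
    (hγ₁ : ContinuousOn γ₁ (Icc 0 1)) (hγ₂ : ContinuousOn γ₂ (Icc 0 1)) :
    ∃ x vx y vy ux gx uy gy : ℝ → ℝ,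
              x 0 = 0 ∧ vx 0 = 0 ∧ y 0 = 0 ∧ vy 0 = 0 ∧
              (∀ t ∈ Icc (0 : ℝ) (1 / δ),
                HasDerivAt x (ux t) t ∧ HasDerivAt vx (gx t) t ∧
                HasDerivAt y (uy t) t ∧ HasDerivAt vy (gy t) t ∧
                (|x t - γ₁ (δ * t)| < 1 / 5 → |y t - γ₂ (δ * t)| < 1 / 5 →
                  |vx t| < 1 → |vy t| < 1 →
                  ux t = vx t ∧ uy t = vy t ∧
                  gx t = A * (x t - Real.cos (ω * t) - γ₁ (δ * t)) /
                    ((x t - Real.cos (ω * t) - γ₁ (δ * t)) ^ 2 +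
                      (y t - Real.sin (ω * t) - γ₂ (δ * t)) ^ 2) ^ α - k * vx t ∧
                  gy t = A * (y t - Real.sin (ω * t) - γ₂ (δ * t)) /
                    ((x t - Real.cos (ω * t) - γ₁ (δ * t)) ^ 2 +
                      (y t - Real.sin (ω * t) - γ₂ (δ * t)) ^ 2) ^ α - k * vy t)) := by
  obtain ⟨H, K, C, hHl, hHb, hHe⟩ := cutoff_force α
  let c1 : ℝ → ℝ := IccExtend zero_le_one ((Icc 0 1).domRestrict γ₁)
  let c2 : ℝ → ℝ := IccExtend zero_le_one ((Icc 0 1).domRestrict γ₂)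
  have hc1 : Continuous c1 := hγ₁.domRestrict.Icc_extend'
  have hc2 : Continuous c2 := hγ₂.domRestrict.Icc_extend'
  let T : ℝ → ℝ := fun v => max (-1) (min 1 v)
  have hTl : LipschitzWith 1 T := (LipschitzWith.id.const_min 1).const_max (-1)
  have hTb : ∀ v, |T v| ≤ 1 := fun v => abs_le.2 ⟨le_max_left _ _, max_le (by norm_num) (min_le_left _ _)⟩
  have hTe : ∀ v, |v| < 1 → T v = v := fun v hv => by
    have := abs_lt.1 hv
    simp only [T]; rw [min_eq_right this.2.le, max_eq_right this.1.le]
  let f : ℝ → ℝ × ℝ × ℝ × ℝ → ℝ × ℝ × ℝ × ℝ := fun t X =>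
    (T X.2.1, A * H (X.1 - cos (ω * t) - c1 (δ * t), X.2.2.1 - sin (ω * t) - c2 (δ * t)) - k * T X.2.1,
     T X.2.2.2,
      A * H (X.2.2.1 - sin (ω * t) - c2 (δ * t), X.1 - cos (ω * t) - c1 (δ * t)) - k * T X.2.2.2)
  have l1 : LipschitzWith 1 (fun X : ℝ × ℝ × ℝ × ℝ => X.1) := LipschitzWith.prod_fst
  have l2 : LipschitzWith 1 (fun X : ℝ × ℝ × ℝ × ℝ => X.2.1) := by
    have h := LipschitzWith.prod_fst.comp (LipschitzWith.prod_snd (α := ℝ) (β := ℝ × ℝ × ℝ))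
    rw [mul_one] at h; exact h
  have l22 : LipschitzWith 1 (fun X : ℝ × ℝ × ℝ × ℝ => X.2.2) := by
    have h := LipschitzWith.prod_snd.comp (LipschitzWith.prod_snd (α := ℝ) (β := ℝ × ℝ × ℝ))
    rw [mul_one] at h; exact h
  have l3 : LipschitzWith 1 (fun X : ℝ × ℝ × ℝ × ℝ => X.2.2.1) := by
    have h := LipschitzWith.prod_fst.comp l22
    rw [mul_one] at h; exact h
  have l4 : LipschitzWith 1 (fun X : ℝ × ℝ × ℝ × ℝ => X.2.2.2) := by
    have h := LipschitzWith.prod_snd.comp l22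
    rw [mul_one] at h; exact h
  have lip : ∃ K' : NNReal, ∀ t, LipschitzWith K' (f t) := by
    have sub_const : ∀ (g : ℝ × ℝ × ℝ × ℝ → ℝ) (a b : ℝ), LipschitzWith 1 g →
        LipschitzWith 1 (fun X => g X - a - b) := by
      intro g a b h
      refine LipschitzWith.of_dist_le_mul fun X Y => ?_
      simpa [Real.dist_eq] using h.dist_le_mul X Y
    have cm : ∀ (c : ℝ) (g : ℝ × ℝ × ℝ × ℝ → ℝ) (K : NNReal), LipschitzWith K g →
        LipschitzWith (‖c‖₊ * K) (fun X => c * g X) := by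
      intro c g K h
      exact (lipschitzWith_smul c).comp h
    refine ⟨max (1 * 1) (max (‖A‖₊ * (K * max 1 1) + ‖k‖₊ * (1 * 1))
      (max (1 * 1) (‖A‖₊ * (K * max 1 1) + ‖k‖₊ * (1 * 1)))), fun t => ?_⟩
    have m1 := hTl.comp l2
    have m2 := hTl.comp l4
    have a1 := sub_const _ (cos (ω * t)) (c1 (δ * t)) l1
    have a2 := sub_const _ (sin (ω * t)) (c2 (δ * t)) l3
    have h1 := (cm A _ _ (hHl.comp (a1.prodMk a2))).sub (cm k _ _ m1)
    have h2 := (cm A _ _ (hHl.comp (a2.prodMk a1))).sub (cm k _ _ m2)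
    exact m1.prodMk (h1.prodMk (m2.prodMk h2))
  obtain ⟨K', hK'⟩ := lip
  let B : NNReal := ⟨max 1 (|A| * C + |k|), by positivity⟩
  have hfb : ∀ t X, ‖f t X‖ ≤ B := by
    intro t X
    have n1 : ∀ v, ‖T v‖ ≤ (B : ℝ) := fun v => (hTb v).trans (le_max_left _ _)
    have n2 : ∀ z v, ‖A * H z - k * T v‖ ≤ (B : ℝ) := fun z v => by
      refine le_trans ?_ (le_max_right _ _)
      calc _ ≤ |A * H z| + |k * T v| := abs_sub _ _
        _ = |A| * |H z| + |k| * |T v| := by rw [abs_mul, abs_mul]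
        _ ≤ |A| * C + |k| * 1 := by gcongr; exacts [hHb z, hTb v]
        _ = _ := by ring
    simp only [f, norm_prod_le_iff]
    exact ⟨n1 _, n2 _ _, n1 _, n2 _ _⟩
  have hT : 0 < 1 / δ := by positivity
  let M : NNReal := ⟨1 / δ + 1, by positivity⟩
  have hpl : IsPicardLindelof f (tmin := -1) (tmax := 1/δ + 1) ⟨0, by constructor <;> linarith⟩
      (0 : ℝ × ℝ × ℝ × ℝ) (B * M) 0 B K' := by
    refine ⟨fun t _ => (hK' t).lipschitzOnWith, fun X _ => ?_, fun t _ X _ => hfb t X, ?_⟩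
    · apply Continuous.continuousOn
      have := hHl.continuous
      simp only [f]
      fun_prop
    · simp only [sub_zero, zero_sub, neg_neg, NNReal.coe_zero, NNReal.coe_mul]
      rw [max_eq_left (by linarith)]
      exact le_rfl
  obtain ⟨X, hX0, hX⟩ := hpl.exists_eq_forall_mem_Icc_hasDerivWithinAt₀
  have hX' : ∀ t ∈ Icc (0:ℝ) (1/δ), HasDerivAt X (f t (X t)) t := by
    intro t ht
    exact (hX t ⟨by linarith [ht.1], by linarith [ht.2]⟩).hasDerivAt
      (Icc_mem_nhds (by linarith [ht.1]) (by linarith [ht.2]))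
  simp only at hX0
  refine ⟨fun t => (X t).1, fun t => (X t).2.1, fun t => (X t).2.2.1, fun t => (X t).2.2.2,
    fun t => (f t (X t)).1, fun t => (f t (X t)).2.1, fun t => (f t (X t)).2.2.1,
    fun t => (f t (X t)).2.2.2, by simp [hX0], by simp [hX0], by simp [hX0], by simp [hX0], ?_⟩
  intro t ht
  have hd := hX' t ht
  have d1 := hd.hasFDerivAt.fst.hasDerivAt
  have d2' := hd.hasFDerivAt.snd
  have d2 := d2'.fst.hasDerivAt
  have d3' := d2'.snd
  have d3 := d3'.fst.hasDerivAt
  have d4 := d3'.snd.hasDerivAt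
  refine ⟨by simpa using d1, by simpa using d2, by simpa using d3, by simpa using d4, ?_⟩
  intro h1 h2 h3 h4
  have hm : δ * t ∈ Icc (0:ℝ) 1 := by
    refine ⟨mul_nonneg hδ.le ht.1, ?_⟩
    have := ht.2; rw [le_div_iff₀ hδ] at this; linarith
  have g1 : c1 (δ * t) = γ₁ (δ * t) := by simp only [c1]; rw [IccExtend_of_mem _ _ hm]; rfl
  have g2 : c2 (δ * t) = γ₂ (δ * t) := by simp only [c2]; rw [IccExtend_of_mem _ _ hm]; rfl
  have hcs := cos_sq_add_sin_sq (ω * t)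
  have hcl := abs_le.1 (abs_cos_le_one (ω * t))
  have hsl := abs_le.1 (abs_sin_le_one (ω * t))
  set c := cos (ω * t) with hc
  set s := sin (ω * t) with hs
  have up : ∀ u g e : ℝ, |u - g| < 1/5 → -1 ≤ e ∧ e ≤ 1 → |u - e - g| ≤ 2 := by
    intro u g e h he
    have := abs_lt.1 h
    exact abs_le.2 ⟨by linarith, by linarith⟩
  have u1 := up _ _ c h1 hcl
  have u2 := up _ _ s h2 hsl
  have low : 1/2 ≤ max |(X t).1 - c - γ₁ (δ * t)| |(X t).2.2.1 - s - γ₂ (δ * t)| := by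
    by_contra! hcon
    have k1 := abs_lt.1 ((le_max_left _ _).trans_lt hcon)
    have k2 := abs_lt.1 ((le_max_right _ _).trans_lt hcon)
    have k3 := abs_lt.1 h1
    have k4 := abs_lt.1 h2
    have : c^2 < 1/2 := by nlinarith
    have : s^2 < 1/2 := by nlinarith
    linarith
  have E1 := hHe ((X t).1 - c - γ₁ (δ * t), (X t).2.2.1 - s - γ₂ (δ * t))
    (by rw [Prod.norm_mk]; exact low) (by rw [Prod.norm_mk]; exact max_le u1 u2)
  have E2 := hHe ((X t).2.2.1 - s - γ₂ (δ * t), (X t).1 - c - γ₁ (δ * t))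
    (by rw [Prod.norm_mk, max_comm]; exact low) (by rw [Prod.norm_mk]; exact max_le u2 u1)
  refine ⟨hTe _ h3, hTe _ h4, ?_, ?_⟩
  · simp only [f]
    rw [hTe _ h3, g1, g2, ← hc, ← hs, E1]
    ring
  · simp only [f]
    rw [hTe _ h4, g1, g2, ← hc, ← hs, E2]
    simp only
    rw [add_comm (((X t).1 - c - γ₁ (δ * t))^2)]
    ring

/-- For `A > 0`, `k > 0`, `α > 1` and a `C¹` trajectory `γ` with `γ(0) = 0`,
for every `ν > 0` there exist `ω₂ > 0` and `δ₂ > 0` such that for all `ω > ω₂` and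
`δ ∈ (0, δ₂)`, the solution of `Ẋ = F(t, X, ω, γ^δ)` with `X(0) = 0` is defined on
`[0, 1/δ]` and its position stays within distance `ν` of `(γ₁(δt), γ₂(δt))` there. -/
theorem arbitrarily_close_tracking_from_origin
    (A k α : ℝ) (hA : 0 < A) (hk : 0 < k) (hα : 1 < α)
    (γ₁ γ₂ : ℝ → ℝ)
    (hγ₁ : ContDiffOn ℝ 1 γ₁ (Icc 0 1)) (hγ₂ : ContDiffOn ℝ 1 γ₂ (Icc 0 1))
    (hγ₁0 : γ₁ 0 = 0) (hγ₂0 : γ₂ 0 = 0) :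
    ∀ ν : ℝ, 0 < ν →
      ∃ ω₂ > (0 : ℝ), ∃ δ₂ > (0 : ℝ),
        ∀ ω : ℝ, ω₂ < ω → ∀ δ : ℝ, 0 < δ → δ < δ₂ →
          -- a solution starting from the origin is defined on all of [0, 1/δ]
          ((∃ x vx y vy : ℝ → ℝ,
              x 0 = 0 ∧ vx 0 = 0 ∧ y 0 = 0 ∧ vy 0 = 0 ∧
              ∀ t ∈ Icc (0 : ℝ) (1 / δ),
                HasDerivAt x (vx t) t ∧
                HasDerivAt vx
                  (A * (x t - Real.cos (ω * t) - γ₁ (δ * t)) /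
                    ((x t - Real.cos (ω * t) - γ₁ (δ * t)) ^ 2 +
                      (y t - Real.sin (ω * t) - γ₂ (δ * t)) ^ 2) ^ α - k * vx t) t ∧
                HasDerivAt y (vy t) t ∧
                HasDerivAt vy
                  (A * (y t - Real.sin (ω * t) - γ₂ (δ * t)) /
                    ((x t - Real.cos (ω * t) - γ₁ (δ * t)) ^ 2 +
                      (y t - Real.sin (ω * t) - γ₂ (δ * t)) ^ 2) ^ α - k * vy t) t) ∧
          -- every solution starting from the origin tracks the trajectory within ν
          (∀ x vx y vy : ℝ → ℝ,
              x 0 = 0 → vx 0 = 0 → y 0 = 0 → vy 0 = 0 →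
              (∀ t ∈ Icc (0 : ℝ) (1 / δ),
                HasDerivAt x (vx t) t ∧
                HasDerivAt vx
                  (A * (x t - Real.cos (ω * t) - γ₁ (δ * t)) /
                    ((x t - Real.cos (ω * t) - γ₁ (δ * t)) ^ 2 +
                      (y t - Real.sin (ω * t) - γ₂ (δ * t)) ^ 2) ^ α - k * vx t) t ∧
                HasDerivAt y (vy t) t ∧
                HasDerivAt vy
                  (A * (y t - Real.sin (ω * t) - γ₂ (δ * t)) /
                    ((x t - Real.cos (ω * t) - γ₁ (δ * t)) ^ 2 +
                      (y t - Real.sin (ω * t) - γ₂ (δ * t)) ^ 2) ^ α - k * vy t) t) →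
              ∀ t ∈ Icc (0 : ℝ) (1 / δ),
                Real.sqrt ((x t - γ₁ (δ * t)) ^ 2 + (y t - γ₂ (δ * t)) ^ 2) < ν)) := by
  intro ν hν
  obtain ⟨ω₂, hω₂, δ₂, hδ₂, H⟩ := apriori A k α hA hk hα γ₁ γ₂ hγ₁ hγ₂ hγ₁0 hγ₂0 ν hν
  refine ⟨ω₂, hω₂, δ₂, hδ₂, fun ω hω δ hδ hδδ => ⟨?_, ?_⟩⟩
  · obtain ⟨x, vx, y, vy, ux, gx, uy, gy, h1, h2, h3, h4, hs⟩ :=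
      exists_cutoff_sol A k α ω δ hδ γ₁ γ₂ hγ₁.continuousOn hγ₂.continuousOn
    refine ⟨x, vx, y, vy, h1, h2, h3, h4, fun t ht => ?_⟩
    obtain ⟨-, b1, b2, b3, b4⟩ := H ω hω δ hδ hδδ x vx y vy ux gx uy gy h1 h2 h3 h4 hs t ht
    obtain ⟨d1, d2, d3, d4, e⟩ := hs t ht
    obtain ⟨e1, e2, e3, e4⟩ := e b1 b2 b3 b4
    exact ⟨e1 ▸ d1, e3 ▸ d2, e2 ▸ d3, e4 ▸ d4⟩
  · intro x vx y vy h1 h2 h3 h4 hs t ht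
    exact (H ω hω δ hδ hδδ x vx y vy vx _ vy _ h1 h2 h3 h4
      (fun t ht => ⟨(hs t ht).1, (hs t ht).2.1, (hs t ht).2.2.1, (hs t ht).2.2.2,
        fun _ _ _ _ => ⟨rfl, rfl, rfl, rfl⟩⟩) t ht).1
end
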